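/- arXiv:1511.00478 — 2 statements merged into one kernel-verified Lean document; each statement's English description precedes it below -/
import Mathlib

section
/- Let n be a positive integer. Then t(1,1,2,16;n) = 4·Σ_{d | 2n+5} ((2n+5)/d)·(2/d) − 4·Σ r, where (2/d) is the Kronecker symbol and the second sum is over all pairs (r,s) ∈ ℤ² with r ≡ 1 (mod 4) and 2n+5 = r² + 2s². -/
/-!
Put `m = 2n + 5`. Completing squares and splitting by parity, `t(1,1,2,16;n)` is four times the
number of solutions of `A² + 2V² + 4B² + 4W² = m` with `W` odd (`card_tris`). For fixed
`l = B² + W²` the number of pairs with `W` odd is half of `r₂(l)` if `l` is odd, while for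
`l = 2k` it is `r₂(k)` or `0` according to the parity of `k`. Hence twice the number of solutions
is the number of all solutions of `A² + 2V² + 4B² + 4W² = m` minus the signed count
`∑ (-1)^k r₂(k)` over `A² + 2V² + 8k = m` (`card_sols`). The two parts are evaluated separately,
and elementarily, without modular forms.

* The Eisenstein part. Since `r₂` is `4 ∑ (-4/d)` and the count for `x² + 2y²` is `2 ∑ (-8/d)`
  (`card_rep_one`, `card_rep_two`), the unsigned count is a sum of `(-8/a) (-4/(c/2))` over
  `ab + cd = m` with `a, b` odd and `c, d` even. Twice this product is `f(a - c) - f(a + c)` for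
  the even function `f = (8/·)`, so that Liouville's method applies: the shears
  `(a, b, c, d) ↦ (a - c, b, c, b + d)` and the like cancel everything except diagonal terms
  (`liouville`), which leaves `∑_{d ∣ m} (m/d) (2/d)`.

* The cusp form part. The signed count, with `V` fixed, is a coefficient of
  `∑_A q^{A²} (∑_x (-1)^x q^{8x²})²` for odd exponents, which Jacobi's formula for the cube of the
  eta function gives as `2 ∑_{r ≡ 1 (4)} r q^{r²}` (`cubic_theta`). It is proved here by writing
  the coefficient at `N` as a sum of `(-1)^d (-4/c)` over forms `2c x² + A xy - d y²` of
  discriminant `N` that are positive at `(1,0)` and negative at `(0,1)`. The cusp `(1,2)` splits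
  these forms into two classes, according to the sign they take there. The reflections in the
  other two sides of the triangle with vertices `(1,0)`, `(0,1)`, `(1,2)` reverse the weight
  (`sum_trip13`, `sum_trip32`), and so does changing the sign of a form. Only forms that vanish at
  `(1,2)` or `(0,1)` escape the cancellation; they exist only if `N` is a square, and are counted
  directly.
-/

open scoped BigOperators

/-- `Nquad a b c d n` is the number of quadruples `(x,y,z,w) ∈ ℤ⁴` with
`n = a*x^2 + b*y^2 + c*z^2 + d*w^2`. -/
noncomputable def Nquad (a b c d : ℕ) (n : ℕ) : ℕ :=
  Nat.card {p : ℤ × ℤ × ℤ × ℤ //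
    (n : ℤ) = a * p.1 ^ 2 + b * p.2.1 ^ 2 + c * p.2.2.1 ^ 2 + d * p.2.2.2 ^ 2}

/-- `tquad a b c d n` is the number of quadruples `(x,y,z,w) ∈ ℤ⁴` with
`n = a*x(x-1)/2 + b*y(y-1)/2 + c*z(z-1)/2 + d*w(w-1)/2`. -/
noncomputable def tquad (a b c d : ℕ) (n : ℕ) : ℕ :=
  Nat.card {p : ℤ × ℤ × ℤ × ℤ //
    (n : ℤ) = a * (p.1 * (p.1 - 1) / 2) + b * (p.2.1 * (p.2.1 - 1) / 2)
      + c * (p.2.2.1 * (p.2.2.1 - 1) / 2) + d * (p.2.2.2 * (p.2.2.2 - 1) / 2)}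

/-! ### Three quadratic characters -/

/-- The character `(-4/·)`. -/
def c4 (x : ℤ) : ℤ := if x % 4 = 1 then 1 else if x % 4 = 3 then -1 else 0

/-- The character `(8/·)`, that is `(2/·)` on odd integers. -/
def c8 (x : ℤ) : ℤ :=
  if x % 8 = 1 ∨ x % 8 = 7 then 1 else if x % 8 = 3 ∨ x % 8 = 5 then -1 else 0

/-- The character `(-8/·)`. -/
def c2 (x : ℤ) : ℤ :=
  if x % 8 = 1 ∨ x % 8 = 3 then 1 else if x % 8 = 5 ∨ x % 8 = 7 then -1 else 0

lemma c4_mul (x y : ℤ) : c4 (x * y) = c4 x * c4 y := by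
  have h := Int.mul_emod x y 4
  have hx : x % 4 = 0 ∨ x % 4 = 1 ∨ x % 4 = 2 ∨ x % 4 = 3 := by omega
  have hy : y % 4 = 0 ∨ y % 4 = 1 ∨ y % 4 = 2 ∨ y % 4 = 3 := by omega
  unfold c4
  rcases hx with hx | hx | hx | hx <;> rcases hy with hy | hy | hy | hy <;>
    simp [h, hx, hy]

lemma c2_mul (x y : ℤ) : c2 (x * y) = c2 x * c2 y := by
  have h := Int.mul_emod x y 8
  have hx : x % 8 = 0 ∨ x % 8 = 1 ∨ x % 8 = 2 ∨ x % 8 = 3 ∨ x % 8 = 4 ∨ x % 8 = 5 ∨ x % 8 = 6 ∨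
    x % 8 = 7 := by omega
  have hy : y % 8 = 0 ∨ y % 8 = 1 ∨ y % 8 = 2 ∨ y % 8 = 3 ∨ y % 8 = 4 ∨ y % 8 = 5 ∨ y % 8 = 6 ∨
    y % 8 = 7 := by omega
  unfold c2
  rcases hx with hx | hx | hx | hx | hx | hx | hx | hx <;>
    rcases hy with hy | hy | hy | hy | hy | hy | hy | hy <;> simp [h, hx, hy]

/-! ### Representations by `x² + D y²` for `D = 1, 2` -/

/-- The pairs `(x, y)` of integers with `x² + D y² = n` (for `D > 0`, when the box loses nothing). -/
noncomputable def rep (D n : ℕ) : Finset (ℤ × ℤ) :=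
  (Finset.Icc (-(n : ℤ)) n ×ˢ Finset.Icc (-(n : ℤ)) n).filter
    fun p => p.1 ^ 2 + D * p.2 ^ 2 = n

lemma mem_rep {D n : ℕ} (hD : 0 < D) (x y : ℤ) :
    (x, y) ∈ rep D n ↔ x ^ 2 + D * y ^ 2 = n := by
  have hD' : (1 : ℤ) ≤ D := by exact_mod_cast hD
  simp only [rep, Finset.mem_filter, Finset.mem_product, Finset.mem_Icc, and_iff_right_iff_imp]
  intro h
  have h1 : x ^ 2 ≤ n := by nlinarith [sq_nonneg y]
  have h2 : y ^ 2 ≤ n := by nlinarith [sq_nonneg x, sq_nonneg y]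
  refine ⟨⟨?_, ?_⟩, ?_, ?_⟩ <;> nlinarith

/-- The divisor sum `∑_{d ∣ n} χ(d)`. -/
def dsum (χ : ℤ → ℤ) (n : ℕ) : ℤ := ∑ d ∈ n.divisors, χ d

/-- The recursion at a prime that the divisor sum of a completely multiplicative function obeys. -/
lemma dsum_rec (χ : ℤ → ℤ) (hm : ∀ x y, χ (x * y) = χ x * χ y) (p k : ℕ)
    (hp : p.Prime) (hk : 0 < k) :
    dsum χ (p * k) = (1 + χ p) * dsum χ k - χ p * (if p ∣ k then dsum χ (k / p) else 0) := by
  have hp0 := hp.pos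
  have hinj : Set.InjOn (fun d => p * d) (k.divisors : Set ℕ) := by
    intro a _ b _ h
    exact Nat.eq_of_mul_eq_mul_left hp0 h
  have hu : (p * k).divisors = k.divisors ∪ k.divisors.image (fun d => p * d) := by
    ext d
    simp only [Finset.mem_union, Nat.mem_divisors, Finset.mem_image]
    constructor
    · rintro ⟨hd, -⟩
      by_cases hpd : p ∣ d
      · obtain ⟨e, rfl⟩ := hpd
        exact Or.inr ⟨e, ⟨Nat.dvd_of_mul_dvd_mul_left hp0 hd, hk.ne'⟩, rfl⟩
      · exact Or.inl ⟨((Nat.Prime.coprime_iff_not_dvd hp).2 hpd).symm.dvd_of_dvd_mul_left hd,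
          hk.ne'⟩
    · rintro (⟨h, -⟩ | ⟨e, ⟨h, -⟩, rfl⟩)
      · exact ⟨h.mul_left p, by positivity⟩
      · exact ⟨Nat.mul_dvd_mul_left p h, by positivity⟩
  have hi : ∑ d ∈ k.divisors ∩ k.divisors.image (fun d => p * d), χ d =
      χ p * (if p ∣ k then dsum χ (k / p) else 0) := by
    split_ifs with hpk
    · obtain ⟨j, rfl⟩ := hpk
      have hj : 0 < j := Nat.pos_of_mul_pos_left hk |> fun h => by
        rcases Nat.eq_zero_or_pos j with h0 | h0
        · simp [h0] at hk
        · exact h0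
      rw [Nat.mul_div_cancel_left _ hp0]
      have : (p * j).divisors ∩ (p * j).divisors.image (fun d => p * d) =
          j.divisors.image (fun d => p * d) := by
        ext d
        simp only [Finset.mem_inter, Nat.mem_divisors, Finset.mem_image]
        constructor
        · rintro ⟨⟨h1, -⟩, e, ⟨-, -⟩, rfl⟩
          exact ⟨e, ⟨Nat.dvd_of_mul_dvd_mul_left hp0 h1, hj.ne'⟩, rfl⟩
        · rintro ⟨e, ⟨h, -⟩, rfl⟩
          exact ⟨⟨Nat.mul_dvd_mul_left p h, hk.ne'⟩, e, ⟨h.mul_left p, hk.ne'⟩, rfl⟩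
      rw [this, Finset.sum_image (fun a _ b _ h => Nat.eq_of_mul_eq_mul_left hp0 h), dsum,
        Finset.mul_sum]
      refine Finset.sum_congr rfl fun d _ => ?_
      push_cast
      rw [hm]
    · rw [mul_zero]
      apply Finset.sum_eq_zero
      intro d hd
      simp only [Finset.mem_inter, Nat.mem_divisors, Finset.mem_image] at hd
      obtain ⟨⟨h1, -⟩, e, -, rfl⟩ := hd
      exact absurd (dvd_of_mul_right_dvd h1) hpk
  have h := Finset.sum_union_inter (s₁ := k.divisors)
    (s₂ := k.divisors.image (fun d => p * d)) (f := fun d : ℕ => χ d)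
  rw [← hu, hi, Finset.sum_image hinj] at h
  have h2 : ∑ d ∈ k.divisors, χ ((p * d : ℕ) : ℤ) = χ p * dsum χ k := by
    rw [dsum, Finset.mul_sum]
    refine Finset.sum_congr rfl fun d _ => ?_
    push_cast
    rw [hm]
  rw [h2] at h
  change dsum χ (p * k) + _ = dsum χ k + _ at h
  linarith

/-- The recursion of `dsum_rec` determines a function up to its value at `1`. -/
lemma eq_dsum (χ : ℤ → ℤ) (h1 : χ 1 = 1) (hm : ∀ x y, χ (x * y) = χ x * χ y) (f : ℕ → ℤ)
    (hf : ∀ p k : ℕ, p.Prime → 0 < k →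
      f (p * k) = (1 + χ p) * f k - χ p * (if p ∣ k then f (k / p) else 0)) :
    ∀ n : ℕ, 0 < n → f n = f 1 * dsum χ n := by
  intro n
  induction n using Nat.strong_induction_on with
  | _ n ih =>
    intro hn
    by_cases h : n = 1
    · subst h
      simp [dsum, h1]
    · have hp := Nat.minFac_prime h
      obtain ⟨k, hk⟩ := Nat.minFac_dvd n
      set p := n.minFac with hpdef
      clear_value p
      subst hk
      have hk0 : 0 < k := by
        rcases Nat.eq_zero_or_pos k with h0 | h0
        · simp [h0] at hn
        · exact h0
      have hlt : k < p * k := by nlinarith [hp.two_le]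
      rw [hf p k hp hk0, dsum_rec χ hm p k hp hk0, ih k hlt hk0]
      split_ifs with hpk
      · have hle := Nat.div_le_self k p
        have hpos : 0 < k / p := Nat.div_pos (Nat.le_of_dvd hk0 hpk) hp.pos
        rw [ih (k / p) (by omega) hpos]
        ring
      · ring

/-- Pairs with both entries divisible by `p`. -/
lemma card_rep_dvd (D p k : ℕ) (hD : 0 < D) (hp : p.Prime) :
    (((rep D (p * k)).filter fun z => (p : ℤ) ∣ z.1 ∧ (p : ℤ) ∣ z.2).card : ℤ) =
      if p ∣ k then ((rep D (k / p)).card : ℤ) else 0 := by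
  have hp0 : (p : ℤ) ≠ 0 := by exact_mod_cast hp.ne_zero
  split_ifs with hpk
  · obtain ⟨j, rfl⟩ := hpk
    rw [Nat.mul_div_cancel_left _ hp.pos]
    norm_cast
    symm
    refine Finset.card_bij (fun z _ => ((p : ℤ) * z.1, (p : ℤ) * z.2)) ?_ ?_ ?_
    · rintro ⟨x, y⟩ h
      rw [mem_rep hD] at h
      simp only [Finset.mem_filter, mem_rep hD, dvd_mul_right, and_self, and_true]
      push_cast
      linear_combination (p : ℤ) ^ 2 * h
    · rintro ⟨x, y⟩ _ ⟨x', y'⟩ _ h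
      simpa [hp.ne_zero] using h
    · rintro ⟨x, y⟩ h
      simp only [Finset.mem_filter, mem_rep hD] at h
      obtain ⟨h, ⟨u, rfl⟩, ⟨v, rfl⟩⟩ := h
      refine ⟨(u, v), ?_, rfl⟩
      rw [mem_rep hD]
      have : (p : ℤ) ^ 2 ≠ 0 := by positivity
      apply mul_left_cancel₀ this
      push_cast at h
      linear_combination h
  · norm_cast
    rw [Finset.card_eq_zero, Finset.filter_eq_empty_iff]
    rintro ⟨x, y⟩ h
    rw [mem_rep hD] at h
    rintro ⟨⟨u, rfl⟩, ⟨v, rfl⟩⟩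
    apply hpk
    have : (p : ℤ) ∣ k := by
      refine ⟨u ^ 2 + D * v ^ 2, ?_⟩
      apply mul_left_cancel₀ hp0
      push_cast at h
      linear_combination -h
    exact_mod_cast this

/-- Multiplication by `c + e√-D`, of norm `p`, maps the representations of `k` bijectively to the
representations `x + y√-D` of `p k` for which `p ∣ c y - e x`. -/
lemma card_rep_half (D p k : ℕ) (c e : ℤ) (hD : 0 < D) (hp : p.Prime)
    (hce : (p : ℤ) = c ^ 2 + D * e ^ 2) :
    ((rep D (p * k)).filter fun z => (p : ℤ) ∣ c * z.2 - e * z.1).card = (rep D k).card := by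
  have hp0 : (p : ℤ) ≠ 0 := by exact_mod_cast hp.ne_zero
  symm
  refine Finset.card_bij (fun z _ => (c * z.1 - D * e * z.2, c * z.2 + e * z.1)) ?_ ?_ ?_
  · rintro ⟨x, y⟩ h
    rw [mem_rep hD] at h
    simp only [Finset.mem_filter, mem_rep hD]
    refine ⟨?_, y, ?_⟩
    · push_cast
      rw [← h, hce]
      ring
    · rw [hce]
      ring
  · rintro ⟨x, y⟩ _ ⟨x', y'⟩ _ h
    simp only [Prod.mk.injEq] at h
    obtain ⟨h1, h2⟩ := h
    simp only [Prod.mk.injEq]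
    constructor
    · apply mul_left_cancel₀ hp0
      rw [hce]
      linear_combination c * h1 + D * e * h2
    · apply mul_left_cancel₀ hp0
      rw [hce]
      linear_combination c * h2 - e * h1
  · rintro ⟨x, y⟩ h
    simp only [Finset.mem_filter, mem_rep hD] at h
    obtain ⟨h, v, hv⟩ := h
    have hpp : Prime (p : ℤ) := Nat.prime_iff_prime_int.1 hp
    -- the norm of `(x + y√-D)(c - e√-D)` is `p² k`, and its `√-D`-coordinate is `p v`
    have hsq : (p : ℤ) ∣ (c * x + D * e * y) ^ 2 := by
      refine ⟨p * k - D * p * v ^ 2, ?_⟩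
      push_cast at h
      have : (c * x + D * e * y) ^ 2 + D * (c * y - e * x) ^ 2 = p * (p * k) := by
        rw [← h]
        nth_rewrite 1 [hce]
        ring
      rw [hv] at this
      linear_combination this
    obtain ⟨u, hu⟩ := hpp.dvd_of_dvd_pow hsq
    have hx : x = c * u - D * e * v := by
      apply mul_left_cancel₀ hp0
      calc (p : ℤ) * x = c * (c * x + D * e * y) - D * e * (c * y - e * x) := by
            rw [hce]
            ring
        _ = _ := by
            rw [hu, hv]
            ring
    have hy : y = c * v + e * u := by
      apply mul_left_cancel₀ hp0
      calc (p : ℤ) * y = c * (c * y - e * x) + e * (c * x + D * e * y) := by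
            rw [hce]
            ring
        _ = _ := by
            rw [hu, hv]
            ring
    refine ⟨(u, v), ?_, ?_⟩
    · rw [mem_rep hD]
      apply mul_left_cancel₀ hp0
      push_cast at h
      rw [← h, hx, hy]
      nth_rewrite 1 [hce]
      ring
    · rw [hx, hy]

/-- Recursion at a prime which is a norm. -/
lemma card_rep_split (D p k : ℕ) (c e : ℤ) (hD : 0 < D) (hp : p.Prime) (hpD : ¬ p ∣ D)
    (h2 : p ≠ 2) (hce : (p : ℤ) = c ^ 2 + D * e ^ 2) :
    ((rep D (p * k)).card : ℤ) =
      2 * (rep D k).card - if p ∣ k then ((rep D (k / p)).card : ℤ) else 0 := by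
  have hpp : Prime (p : ℤ) := Nat.prime_iff_prime_int.1 hp
  have hp0 : (p : ℤ) ≠ 0 := hpp.ne_zero
  have hpD' : ¬ (p : ℤ) ∣ D := by exact_mod_cast hpD
  have h2' : ¬ (p : ℤ) ∣ 2 := by
    intro h
    have h' : p ∣ 2 := by exact_mod_cast h
    exact h2 ((Nat.prime_dvd_prime_iff_eq hp Nat.prime_two).1 h')
  have hnot : ¬ ((p : ℤ) ∣ c ∧ (p : ℤ) ∣ e) := by
    rintro ⟨⟨u, rfl⟩, v, rfl⟩
    have : (p : ℤ) * (p * (u ^ 2 + D * v ^ 2)) = p * 1 := by linear_combination -hce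
    have := mul_left_cancel₀ hp0 this
    exact hpp.not_dvd_one ⟨_, this.symm⟩
  have hc : ¬ (p : ℤ) ∣ c := by
    intro h
    apply hnot
    refine ⟨h, ?_⟩
    have : (p : ℤ) ∣ D * e ^ 2 := by
      have : (D : ℤ) * e ^ 2 = p - c * c := by linear_combination -hce
      rw [this]
      exact dvd_sub (dvd_refl _) (h.mul_right c)
    exact hpp.dvd_of_dvd_pow ((hpp.dvd_or_dvd this).resolve_left hpD')
  have he : ¬ (p : ℤ) ∣ e := by
    intro h
    apply hc
    have : (p : ℤ) ∣ c ^ 2 := by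
      have : c ^ 2 = p - e * (D * e) := by linear_combination -hce
      rw [this]
      exact dvd_sub (dvd_refl _) (h.mul_right _)
    exact hpp.dvd_of_dvd_pow this
  have hA := card_rep_half D p k c e hD hp hce
  have hB := card_rep_half D p k c (-e) hD hp (by rw [hce]; ring)
  have hC := card_rep_dvd D p k hD hp
  have hU : (rep D (p * k)).filter (fun z => (p : ℤ) ∣ c * z.2 - e * z.1) ∪
      (rep D (p * k)).filter (fun z => (p : ℤ) ∣ c * z.2 - -e * z.1) = rep D (p * k) := by
    rw [← Finset.filter_or, Finset.filter_eq_self]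
    rintro ⟨x, y⟩ h
    rw [mem_rep hD] at h
    apply hpp.dvd_or_dvd
    push_cast at h
    refine ⟨y ^ 2 - e ^ 2 * k, ?_⟩
    linear_combination (-e ^ 2) * h - y ^ 2 * hce
  have hI : (rep D (p * k)).filter (fun z => (p : ℤ) ∣ c * z.2 - e * z.1) ∩
      (rep D (p * k)).filter (fun z => (p : ℤ) ∣ c * z.2 - -e * z.1) =
      (rep D (p * k)).filter fun z => (p : ℤ) ∣ z.1 ∧ (p : ℤ) ∣ z.2 := by
    rw [← Finset.filter_and]
    apply Finset.filter_congr
    rintro ⟨x, y⟩ -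
    constructor
    · rintro ⟨ha, hb⟩
      have hx : (p : ℤ) ∣ 2 * (e * x) := by
        have := dvd_sub hb ha
        ring_nf at this ⊢
        exact this
      have hy : (p : ℤ) ∣ 2 * (c * y) := by
        have := dvd_add hb ha
        ring_nf at this ⊢
        exact this
      exact ⟨(hpp.dvd_or_dvd ((hpp.dvd_or_dvd hx).resolve_left h2')).resolve_left he,
        (hpp.dvd_or_dvd ((hpp.dvd_or_dvd hy).resolve_left h2')).resolve_left hc⟩
    · rintro ⟨ha, hb⟩
      exact ⟨dvd_sub (hb.mul_left _) (ha.mul_left _), dvd_sub (hb.mul_left _) (ha.mul_left _)⟩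
  have h := Finset.card_union_add_card_inter
    ((rep D (p * k)).filter (fun z => (p : ℤ) ∣ c * z.2 - e * z.1))
    ((rep D (p * k)).filter (fun z => (p : ℤ) ∣ c * z.2 - -e * z.1))
  rw [hU, hI, hA, hB] at h
  rw [← hC]
  have h' : ((rep D (p * k)).card : ℤ) + ((rep D (p * k)).filter
      fun z => (p : ℤ) ∣ z.1 ∧ (p : ℤ) ∣ z.2).card = (rep D k).card + (rep D k).card := by
    exact_mod_cast h
  linarith

/-- Recursion at an inert prime. -/
lemma card_rep_inert (D p k : ℕ) (hD : 0 < D) (hp : p.Prime)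
    (hin : ¬ IsSquare (-(D : ZMod p))) :
    ((rep D (p * k)).card : ℤ) = if p ∣ k then ((rep D (k / p)).card : ℤ) else 0 := by
  have := Fact.mk hp
  rw [← card_rep_dvd D p k hD hp]
  congr 2
  symm
  rw [Finset.filter_eq_self]
  rintro ⟨x, y⟩ h
  rw [mem_rep hD] at h
  have hz : (x : ZMod p) ^ 2 + D * (y : ZMod p) ^ 2 = 0 := by
    have := congrArg (Int.cast : ℤ → ZMod p) h
    push_cast at this
    simpa using this
  have hy : (y : ZMod p) = 0 := by
    by_contra hy
    apply hin
    refine ⟨x / y, ?_⟩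
    field_simp
    linear_combination -hz
  have hx : (x : ZMod p) = 0 := by
    rw [hy] at hz
    simpa using hz
  exact ⟨(ZMod.intCast_zmod_eq_zero_iff_dvd x p).1 hx, (ZMod.intCast_zmod_eq_zero_iff_dvd y p).1 hy⟩

/-- Multiplication by `1 + i`. -/
lemma card_rep_one_two (k : ℕ) : (rep 1 (2 * k)).card = (rep 1 k).card := by
  symm
  refine Finset.card_bij (fun z _ => (z.1 + z.2, z.1 - z.2)) ?_ ?_ ?_
  · rintro ⟨x, y⟩ h
    rw [mem_rep one_pos] at h ⊢
    push_cast at h ⊢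
    linear_combination 2 * h
  · rintro ⟨x, y⟩ _ ⟨x', y'⟩ _ h
    simp only [Prod.mk.injEq] at h ⊢
    omega
  · rintro ⟨x, y⟩ h
    rw [mem_rep one_pos] at h
    push_cast at h
    have hpar : (x + y) % 2 = 0 := by
      have h1 := Int.even_mul_succ_self x
      have h2 := Int.even_mul_succ_self y
      obtain ⟨a, ha⟩ := h1
      obtain ⟨b, hb⟩ := h2
      have : x + y = 2 * (a + b - k) := by linear_combination -h + ha + hb
      omega
    refine ⟨((x + y) / 2, (x - y) / 2), ?_, ?_⟩
    · rw [mem_rep one_pos]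
      obtain ⟨u, hu⟩ : ∃ u, x + y = 2 * u := ⟨(x + y) / 2, by omega⟩
      obtain rfl : x = 2 * u - y := by linarith
      rw [show (2 * u - y + y) / 2 = u by omega, show (2 * u - y - y) / 2 = u - y by omega]
      push_cast
      linarith
    · simp only [Prod.mk.injEq]
      omega

/-- Multiplication by `√-2`. -/
lemma card_rep_two_two (k : ℕ) : (rep 2 (2 * k)).card = (rep 2 k).card := by
  symm
  refine Finset.card_bij (fun z _ => (2 * z.2, z.1)) ?_ ?_ ?_
  · rintro ⟨x, y⟩ h
    rw [mem_rep two_pos] at h ⊢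
    push_cast at h ⊢
    linear_combination 2 * h
  · rintro ⟨x, y⟩ _ ⟨x', y'⟩ _ h
    simp only [Prod.mk.injEq] at h ⊢
    omega
  · rintro ⟨x, y⟩ h
    rw [mem_rep two_pos] at h
    push_cast at h
    have hx : Even x := by
      have : Even (x ^ 2) := ⟨k - y ^ 2, by linarith⟩
      exact (Int.even_pow.1 this).1
    obtain ⟨u, rfl⟩ := hx
    refine ⟨(y, u), ?_, ?_⟩
    · rw [mem_rep two_pos]
      push_cast
      linarith
    · change ((2 * u, y) : ℤ × ℤ) = (u + u, y)
      rw [two_mul]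

/-- A prime `p ≡ 1, 3 (mod 8)` is of the form `c² + 2e²`: Thue's argument with a square root of
`-2` gives a multiple of `p` below `3p` of this form. -/
lemma exists_sq_add_two_sq (p : ℕ) (hp : p.Prime) (h8 : p % 8 = 1 ∨ p % 8 = 3) :
    ∃ c e : ℤ, (p : ℤ) = c ^ 2 + (2 : ℕ) * e ^ 2 := by
  have := Fact.mk hp
  have hp2 : p ≠ 2 := by omega
  obtain ⟨w, hw⟩ := (ZMod.exists_sq_eq_neg_two_iff hp2).2 h8
  set s := Nat.sqrt p with hs
  have hcard : Fintype.card (ZMod p) < Fintype.card (Fin (s + 1) × Fin (s + 1)) := by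
    rw [ZMod.card, Fintype.card_prod, Fintype.card_fin]
    exact Nat.lt_succ_sqrt p
  obtain ⟨⟨a, b⟩, ⟨a', b'⟩, hne, heq⟩ := Fintype.exists_ne_map_eq_of_card_lt
    (fun z : Fin (s + 1) × Fin (s + 1) => ((z.1 : ℕ) : ZMod p) - w * ((z.2 : ℕ) : ZMod p)) hcard
  obtain ⟨x, hx⟩ : ∃ x : ℤ, x = ((a : ℕ) : ℤ) - (a' : ℕ) := ⟨_, rfl⟩
  obtain ⟨y, hy⟩ : ∃ y : ℤ, y = ((b : ℕ) : ℤ) - (b' : ℕ) := ⟨_, rfl⟩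
  have ha := a.2
  have ha' := a'.2
  have hb := b.2
  have hb' := b'.2
  have hss : (s : ℤ) ^ 2 ≤ p := by
    have := Nat.sqrt_le' p
    exact_mod_cast this
  have hxs : x ^ 2 ≤ p := by
    have h1 : x ≤ s := by omega
    have h2 : -(s : ℤ) ≤ x := by omega
    nlinarith
  have hys : y ^ 2 ≤ p := by
    have h1 : y ≤ s := by omega
    have h2 : -(s : ℤ) ≤ y := by omega
    nlinarith
  have hnsq : ∀ z : ℤ, z ^ 2 ≠ p := by
    intro z hz
    exact (Nat.prime_iff_prime_int.1 hp).not_isSquare ⟨z, by rw [← hz]; ring⟩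
  have hdvd : (p : ℤ) ∣ x ^ 2 + 2 * y ^ 2 := by
    rw [← ZMod.intCast_zmod_eq_zero_iff_dvd]
    have hxw : (x : ZMod p) = w * y := by
      rw [hx, hy]
      push_cast
      simp only at heq
      linear_combination heq
    push_cast
    rw [hxw]
    linear_combination (-(y : ZMod p) ^ 2) * hw
  have hpos : 0 < x ^ 2 + 2 * y ^ 2 := by
    by_contra hcon
    have hx0 : x = 0 := by nlinarith [sq_nonneg x, sq_nonneg y]
    have hy0 : y = 0 := by nlinarith [sq_nonneg x, sq_nonneg y]
    apply hne
    ext <;> simp <;> omega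
  have hlt : x ^ 2 + 2 * y ^ 2 < 3 * p := by
    have := lt_of_le_of_ne hxs (hnsq x)
    linarith
  obtain ⟨q, hq⟩ := hdvd
  have hp0 : (0 : ℤ) < p := by exact_mod_cast hp.pos
  have hq1 : 0 < q := by
    by_contra h
    nlinarith
  have hq3 : q < 3 := by
    by_contra h
    nlinarith
  have hq' : q = 1 ∨ q = 2 := by omega
  rcases hq' with rfl | rfl
  · exact ⟨x, y, by push_cast; linarith⟩
  · have hxe : Even x := by
      have : Even (x ^ 2) := ⟨p - y ^ 2, by linarith⟩
      exact (Int.even_pow.1 this).1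
    obtain ⟨u, rfl⟩ := hxe
    exact ⟨y, u, by push_cast; linarith⟩

/-- Jacobi's two-square theorem. -/
lemma card_rep_one (n : ℕ) (hn : 0 < n) : ((rep 1 n).card : ℤ) = 4 * dsum c4 n := by
  have h1 : ((rep 1 1).card : ℤ) = 4 := by decide
  rw [← h1]
  refine eq_dsum c4 (by decide) c4_mul (fun n => ((rep 1 n).card : ℤ)) ?_ n hn
  intro p k hp hk
  by_cases hp2 : p = 2
  · subst hp2
    simp only [card_rep_one_two]
    simp [c4]
  have hodd := hp.eq_two_or_odd.resolve_left hp2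
  have := Fact.mk hp
  have h4 : p % 4 = 1 ∨ p % 4 = 3 := by omega
  rcases h4 with h4 | h4
  · have hc : c4 p = 1 := by
      unfold c4
      split_ifs <;> omega
    obtain ⟨a, b, hab⟩ := Nat.Prime.sq_add_sq (p := p) (by omega)
    have := card_rep_split 1 p k a b one_pos hp (by simpa using hp.one_lt.ne') hp2
      (by rw [← hab]; push_cast; ring)
    simp only [this, hc]
    ring
  · have hc : c4 p = -1 := by
      unfold c4
      split_ifs <;> omega
    have := card_rep_inert 1 p k one_pos hp (by
      intro h
      rw [Nat.cast_one, ZMod.exists_sq_eq_neg_one_iff] at h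
      exact h h4)
    simp only [this, hc]
    ring

/-- The number of representations by `x² + 2y²`. -/
lemma card_rep_two (n : ℕ) (hn : 0 < n) : ((rep 2 n).card : ℤ) = 2 * dsum c2 n := by
  have h1 : ((rep 2 1).card : ℤ) = 2 := by decide
  rw [← h1]
  refine eq_dsum c2 (by decide) c2_mul (fun n => ((rep 2 n).card : ℤ)) ?_ n hn
  intro p k hp hk
  by_cases hp2 : p = 2
  · subst hp2
    simp only [card_rep_two_two]
    simp [c2]
  have hodd := hp.eq_two_or_odd.resolve_left hp2
  have := Fact.mk hp
  by_cases h8 : p % 8 = 1 ∨ p % 8 = 3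
  · have hc : c2 p = 1 := by
      unfold c2
      split_ifs <;> omega
    obtain ⟨a, b, hab⟩ := exists_sq_add_two_sq p hp h8
    have := card_rep_split 2 p k a b two_pos hp
      (fun h => hp2 ((Nat.prime_dvd_prime_iff_eq hp Nat.prime_two).1 h)) hp2 hab
    simp only [this, hc]
    ring
  · have hc : c2 p = -1 := by
      unfold c2
      split_ifs <;> omega
    have := card_rep_inert 2 p k two_pos hp (by
      intro h
      rw [Nat.cast_two, ZMod.exists_sq_eq_neg_two_iff hp2] at h
      exact h8 h)
    simp only [this, hc]
    ring

/-! ### A sign-reversing argument on the forms `2c x² + A xy - d y²` -/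

/-- The sign `(-1)^d`. -/
def sgn (d : ℤ) : ℤ := if d % 2 = 0 then 1 else -1

/-- The triples `(A, c, d)` with `A² + 8cd = N`, that is, the forms `2c x² + A xy - d y²` of
discriminant `N`. They are infinite in number in general; the box is large enough for each of the
finite families considered below. -/
noncomputable def trip (N : ℕ) : Finset (ℤ × ℤ × ℤ) :=
  (Finset.Icc (-(5 * N : ℤ)) (5 * N) ×ˢ Finset.Icc (-(5 * N : ℤ)) (5 * N) ×ˢ
    Finset.Icc (-(5 * N : ℤ)) (5 * N)).filter fun p => p.1 ^ 2 + 8 * p.2.1 * p.2.2 = N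

lemma mem_trip12 {N : ℕ} (A c d : ℤ) :
    (A, c, d) ∈ (trip N).filter (fun p => 0 < p.2.1 ∧ 0 < p.2.2) ↔
      A ^ 2 + 8 * c * d = N ∧ 0 < c ∧ 0 < d := by
  simp only [trip, Finset.mem_filter, Finset.mem_product, Finset.mem_Icc]
  refine ⟨fun h => ⟨h.1.2, h.2⟩, fun ⟨h, hc, hd⟩ => ⟨⟨?_, h⟩, hc, hd⟩⟩
  have h1 : 0 < c * d := by positivity
  have hA : A ^ 2 ≤ N := by nlinarith
  have hc' : c ≤ N := by nlinarith [sq_nonneg A]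
  have hd' : d ≤ N := by nlinarith [sq_nonneg A]
  refine ⟨⟨?_, ?_⟩, ⟨?_, ?_⟩, ?_, ?_⟩ <;> nlinarith

lemma mem_trip13 {N : ℕ} (A c d : ℤ) :
    (A, c, d) ∈ (trip N).filter (fun p => 0 < p.2.1 ∧ p.2.1 + p.1 < 2 * p.2.2) ↔
      A ^ 2 + 8 * c * d = N ∧ 0 < c ∧ c + A < 2 * d := by
  simp only [trip, Finset.mem_filter, Finset.mem_product, Finset.mem_Icc]
  refine ⟨fun h => ⟨h.1.2, h.2⟩, fun ⟨h, hc, hd⟩ => ⟨⟨?_, h⟩, hc, hd⟩⟩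
  -- `N - (A + 2c)² = 4c (2d - c - A)` bounds `c` and `A`
  have hN : (A + 2 * c) ^ 2 + 4 * (c * (2 * d - c - A)) = N := by rw [← h]; ring
  have h1 : c ≤ c * (2 * d - c - A) := by nlinarith
  have h2 : 2 * d - c - A ≤ c * (2 * d - c - A) := by nlinarith
  have hc' : 4 * c ≤ N := by nlinarith [sq_nonneg (A + 2 * c)]
  have he' : 2 * d - c - A ≤ N := by nlinarith [sq_nonneg (A + 2 * c)]
  have hA : (A + 2 * c) ^ 2 ≤ N := by nlinarith
  have hA1 : A + 2 * c ≤ N := by nlinarith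
  have hA2 : -(N : ℤ) ≤ A + 2 * c := by nlinarith
  refine ⟨⟨?_, ?_⟩, ⟨?_, ?_⟩, ?_, ?_⟩ <;> linarith

lemma mem_trip32 {N : ℕ} (A c d : ℤ) :
    (A, c, d) ∈ (trip N).filter (fun p => 0 < p.2.2 ∧ 2 * p.2.2 < p.2.1 + p.1) ↔
      A ^ 2 + 8 * c * d = N ∧ 0 < d ∧ 2 * d < c + A := by
  simp only [trip, Finset.mem_filter, Finset.mem_product, Finset.mem_Icc]
  refine ⟨fun h => ⟨h.1.2, h.2⟩, fun ⟨h, hc, hd⟩ => ⟨⟨?_, h⟩, hc, hd⟩⟩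
  -- `N - (A - 4d)² = 8d (c + A - 2d)` bounds `d` and `A`
  have hN : (A - 4 * d) ^ 2 + 8 * (d * (c + A - 2 * d)) = N := by rw [← h]; ring
  have h1 : d ≤ d * (c + A - 2 * d) := by nlinarith
  have h2 : c + A - 2 * d ≤ d * (c + A - 2 * d) := by nlinarith
  have hc' : 8 * d ≤ N := by nlinarith [sq_nonneg (A - 4 * d)]
  have he' : c + A - 2 * d ≤ N := by nlinarith [sq_nonneg (A - 4 * d)]
  have hA : (A - 4 * d) ^ 2 ≤ N := by nlinarith
  have hA1 : A - 4 * d ≤ N := by nlinarith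
  have hA2 : -(N : ℤ) ≤ A - 4 * d := by nlinarith
  refine ⟨⟨?_, ?_⟩, ⟨?_, ?_⟩, ?_, ?_⟩ <;> linarith

lemma c4_odd (c A d : ℤ) (hA : A % 2 = 1) : c4 (c + 2 * A - 8 * d) = -c4 c := by
  unfold c4
  split_ifs <;> omega

lemma sgn_odd (A c d : ℤ) (hA : A % 2 = 1) : sgn (d - A - 2 * c) = -sgn d := by
  unfold sgn
  split_ifs <;> omega

lemma c4_neg (c : ℤ) : c4 (-c) = -c4 c := by
  unfold c4
  split_ifs <;> omega

lemma sgn_neg (c : ℤ) : sgn (-c) = sgn c := by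
  unfold sgn
  split_ifs <;> omega

lemma odd_of_trip {N : ℕ} (hN : N % 2 = 1) {A c d : ℤ} (h : A ^ 2 + 8 * c * d = N) :
    A % 2 = 1 := by
  have h0 : Odd (A ^ 2) := by
    have : Odd (N : ℤ) := by
      rw [Int.odd_iff]
      omega
    have h1 : A ^ 2 = N - 2 * (4 * c * d) := by linarith
    rw [h1]
    exact this.sub_even (even_two_mul _)
  exact Int.odd_iff.1 (Int.odd_pow.1 h0 |>.resolve_right (by norm_num))

/-- The forms whose roots are separated by `(1,0)` and `(1,2)`: the reflection in the geodesic
joining these two cusps changes the sign of the weight. -/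
lemma sum_trip13 (N : ℕ) (hN : N % 2 = 1) :
    ∑ p ∈ (trip N).filter (fun p => 0 < p.2.1 ∧ p.2.1 + p.1 < 2 * p.2.2),
      sgn p.2.2 * c4 p.2.1 = 0 := by
  refine Finset.sum_involution
    (fun p _ => (-p.1 - 4 * p.2.1, p.2.1, p.2.2 - p.1 - 2 * p.2.1)) ?_ ?_ ?_ ?_
  · rintro ⟨A, c, d⟩ h
    rw [mem_trip13] at h
    simp only [sgn_odd A c d (odd_of_trip hN h.1)]
    ring
  · rintro ⟨A, c, d⟩ h _ heq
    rw [mem_trip13] at h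
    have := odd_of_trip hN h.1
    simp only [Prod.mk.injEq] at heq
    omega
  · rintro ⟨A, c, d⟩ h
    rw [mem_trip13] at h ⊢
    refine ⟨?_, h.2.1, by linarith [h.2.2]⟩
    rw [← h.1]
    ring
  · rintro ⟨A, c, d⟩ h
    simp only [Prod.mk.injEq]
    refine ⟨?_, trivial, ?_⟩ <;> ring

/-- The analogous cancellation for the cusps `(1,2)` and `(0,1)`. -/
lemma sum_trip32 (N : ℕ) (hN : N % 2 = 1) :
    ∑ p ∈ (trip N).filter (fun p => 0 < p.2.2 ∧ 2 * p.2.2 < p.2.1 + p.1),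
      sgn p.2.2 * c4 p.2.1 = 0 := by
  refine Finset.sum_involution
    (fun p _ => (8 * p.2.2 - p.1, p.2.1 + 2 * p.1 - 8 * p.2.2, p.2.2)) ?_ ?_ ?_ ?_
  · rintro ⟨A, c, d⟩ h
    rw [mem_trip32] at h
    simp only [c4_odd c A d (odd_of_trip hN h.1)]
    ring
  · rintro ⟨A, c, d⟩ h _ heq
    rw [mem_trip32] at h
    have := odd_of_trip hN h.1
    simp only [Prod.mk.injEq] at heq
    omega
  · rintro ⟨A, c, d⟩ h
    rw [mem_trip32] at h ⊢
    refine ⟨?_, h.2.1, by linarith [h.2.2]⟩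
    rw [← h.1]
    ring
  · rintro ⟨A, c, d⟩ h
    simp only [Prod.mk.injEq, and_true]
    refine ⟨?_, ?_⟩ <;> ring

/-- Forms whose roots are separated by `(1,0)` and `(0,1)`: only those vanishing at a cusp survive
the two cancellations. -/
lemma sum_trip12 (N : ℕ) (hN : N % 2 = 1) :
    ∑ p ∈ (trip N).filter (fun p => 0 < p.2.1 ∧ 0 < p.2.2), sgn p.2.2 * c4 p.2.1 =
      ∑ p ∈ (trip N).filter (fun p => 0 < p.2.1 ∧ 0 < p.2.2 ∧ p.2.1 + p.1 = 2 * p.2.2),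
        sgn p.2.2 * c4 p.2.1 -
      ∑ p ∈ (trip N).filter (fun p => 0 < p.2.1 ∧ p.2.2 = 0 ∧ p.2.1 + p.1 < 0),
        sgn p.2.2 * c4 p.2.1 := by
  have h13 := sum_trip13 N hN
  have h32 := sum_trip32 N hN
  -- changing the sign of the form exchanges the two remaining sign patterns
  have hneg : ∑ p ∈ (trip N).filter (fun p => 0 < p.2.1 ∧ p.2.2 < 0 ∧ p.2.1 + p.1 < 2 * p.2.2),
        sgn p.2.2 * c4 p.2.1 =
      -∑ p ∈ (trip N).filter (fun p => p.2.1 < 0 ∧ 0 < p.2.2 ∧ 2 * p.2.2 < p.2.1 + p.1),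
        sgn p.2.2 * c4 p.2.1 := by
    rw [← Finset.sum_neg_distrib]
    refine Finset.sum_nbij' (fun p => (-p.1, -p.2.1, -p.2.2)) (fun p => (-p.1, -p.2.1, -p.2.2))
      ?_ ?_ ?_ ?_ ?_
    · rintro ⟨A, c, d⟩ h
      simp only [trip, Finset.mem_filter, Finset.mem_product, Finset.mem_Icc] at h ⊢
      obtain ⟨⟨h1, h2⟩, h3⟩ := h
      refine ⟨⟨by omega, by rw [← h2]; ring⟩, by omega⟩
    · rintro ⟨A, c, d⟩ h
      simp only [trip, Finset.mem_filter, Finset.mem_product, Finset.mem_Icc] at h ⊢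
      obtain ⟨⟨h1, h2⟩, h3⟩ := h
      refine ⟨⟨by omega, by rw [← h2]; ring⟩, by omega⟩
    · rintro ⟨A, c, d⟩ h
      simp
    · rintro ⟨A, c, d⟩ h
      simp
    · rintro ⟨A, c, d⟩ h
      simp only [c4_neg, sgn_neg]
      ring
  have key : ∀ (A c d : ℤ) (w : ℤ), (c = 0 → w = 0) →
      (if 0 < c ∧ 0 < d then w else 0) - (if 0 < c ∧ c + A < 2 * d then w else 0)
        - (if 0 < d ∧ 2 * d < c + A then w else 0) =
      (if 0 < c ∧ 0 < d ∧ c + A = 2 * d then w else 0)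
        - (if 0 < c ∧ d = 0 ∧ c + A < 0 then w else 0)
        - (if 0 < c ∧ d < 0 ∧ c + A < 2 * d then w else 0)
        - (if c < 0 ∧ 0 < d ∧ 2 * d < c + A then w else 0) := by
    intro A c d w hw
    rcases eq_or_ne c 0 with hc | hc
    · rw [hw hc]
      simp
    · rcases lt_or_gt_of_ne hc with hc | hc <;> rcases lt_trichotomy d 0 with hd | hd | hd <;>
        rcases lt_trichotomy (c + A) (2 * d) with h | h | h <;>
        grind
  have hsum := Finset.sum_congr (rfl : trip N = trip N) fun p _ =>
    key p.1 p.2.1 p.2.2 (sgn p.2.2 * c4 p.2.1) (by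
      intro h
      rw [h]
      simp [c4])
  simp only [Finset.sum_sub_distrib, ← Finset.sum_filter] at hsum
  rw [h13, h32, hneg] at hsum
  linarith

lemma sum_c4 (r : ℕ) (hr : r % 2 = 1) :
    2 * ∑ c ∈ Finset.Ioo (0 : ℤ) r, c4 c = 1 - c4 r := by
  obtain ⟨k, rfl⟩ : ∃ k, r = 2 * k + 1 := ⟨r / 2, by omega⟩
  clear hr
  induction k with
  | zero =>
    have h : Finset.Ioo (0 : ℤ) ((2 * 0 + 1 : ℕ) : ℤ) = ∅ := by
      ext x
      simp only [Finset.mem_Ioo, Finset.notMem_empty, iff_false]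
      norm_num
      omega
    rw [h]
    simp [c4]
  | succ k ih =>
    have h : Finset.Ioo (0 : ℤ) ((2 * (k + 1) + 1 : ℕ) : ℤ) =
        insert (2 * k + 1 : ℤ) (insert (2 * k + 2 : ℤ) (Finset.Ioo (0 : ℤ) ((2 * k + 1 : ℕ) : ℤ))) := by
      ext x
      simp only [Finset.mem_insert, Finset.mem_Ioo]
      omega
    rw [h, Finset.sum_insert (by simp), Finset.sum_insert (by simp), mul_add, mul_add, ih]
    unfold c4
    split_ifs <;> omega

/-- For a square `N = r²` the forms vanishing at the cusps `(1,2)` and `(0,1)` are counted. -/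
lemma sum_trip_square (r : ℕ) (hr : r % 2 = 1) :
    2 * ∑ p ∈ (trip (r ^ 2)).filter (fun p => 0 < p.2.1 ∧ 0 < p.2.2),
      sgn p.2.2 * c4 p.2.1 = c4 r * r - 1 := by
  have hN : r ^ 2 % 2 = 1 := by
    rw [Nat.pow_mod, hr]
  have hr0 : (0 : ℤ) < r := by omega
  rw [sum_trip12 _ hN]
  have e1 : ∑ p ∈ (trip (r ^ 2)).filter
      (fun p => 0 < p.2.1 ∧ 0 < p.2.2 ∧ p.2.1 + p.1 = 2 * p.2.2), sgn p.2.2 * c4 p.2.1 =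
      ∑ d ∈ Finset.Icc (1 : ℤ) ((r - 1) / 2), c4 r := by
    refine Finset.sum_nbij' (fun p => p.2.2) (fun d => (-r + 4 * d, r - 2 * d, d)) ?_ ?_ ?_ ?_ ?_
    all_goals try
      rintro ⟨A, c, d⟩ h
      have h12 : (A, c, d) ∈ (trip (r ^ 2)).filter (fun p => 0 < p.2.1 ∧ 0 < p.2.2) := by
        simp only [Finset.mem_filter] at h ⊢
        exact ⟨h.1, h.2.1, h.2.2.1⟩
      simp only [Finset.mem_filter] at h
      rw [mem_trip12] at h12
      obtain ⟨h1, hc, hd⟩ := h12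
      have h2 := h.2.2.2
      -- the discriminant is the square of `A + 2c > 0`
      have hA : A + 2 * c = r := by
        have : (A + 2 * c) ^ 2 = (r : ℤ) ^ 2 := by
          push_cast at h1
          rw [← h1]
          linear_combination 4 * c * h2
        exact (sq_eq_sq₀ (by linarith) hr0.le).1 this
    · simp only [Finset.mem_Icc]
      omega
    · intro d hd
      rw [Finset.mem_Icc] at hd
      have := (mem_trip12 (N := r ^ 2) (-r + 4 * d) (r - 2 * d) d).2
        ⟨by push_cast; ring, by omega, by omega⟩
      simp only [Finset.mem_filter] at this ⊢
      exact ⟨this.1, by omega, by omega, by ring⟩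
    · refine Prod.ext ?_ (Prod.ext ?_ rfl) <;> simp only <;> linarith
    · intro d _
      rfl
    · have hcd : c = r - 2 * d := by linarith
      simp only
      rw [hcd]
      unfold sgn c4
      split_ifs <;> omega
  have e2 : ∑ p ∈ (trip (r ^ 2)).filter
      (fun p => 0 < p.2.1 ∧ p.2.2 = 0 ∧ p.2.1 + p.1 < 0), sgn p.2.2 * c4 p.2.1 =
      ∑ c ∈ Finset.Ioo (0 : ℤ) r, c4 c := by
    refine Finset.sum_nbij' (fun p => p.2.1) (fun c => (-r, c, 0)) ?_ ?_ ?_ ?_ ?_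
    all_goals try
      rintro ⟨A, c, d⟩ h
      simp only [trip, Finset.mem_filter] at h
      obtain ⟨⟨-, h1⟩, hc, hd, hA⟩ := h
      subst hd
      have hA' : -A = r := by
        have : (-A) ^ 2 = (r : ℤ) ^ 2 := by
          push_cast at h1
          linarith
        exact (sq_eq_sq₀ (by linarith) hr0.le).1 this
    · simp only [Finset.mem_Ioo]
      omega
    · intro c hc
      rw [Finset.mem_Ioo] at hc
      simp only [trip, Finset.mem_filter, Finset.mem_product, Finset.mem_Icc]
      have : (r : ℤ) ≤ (r ^ 2 : ℕ) := by
        push_cast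
        nlinarith
      refine ⟨⟨⟨⟨?_, ?_⟩, ⟨?_, ?_⟩, ?_, ?_⟩, ?_⟩, ?_, ?_, ?_⟩
      any_goals linarith
      · push_cast
        ring
      · trivial
    · refine Prod.ext ?_ rfl
      simp only
      linarith
    · intro d _
      rfl
    · simp [sgn]
  have e3 : ((((r : ℤ) - 1) / 2).toNat : ℤ) * 2 = r - 1 := by omega
  rw [e1, e2, mul_sub, sum_c4 r hr]
  simp only [Finset.sum_const, Int.card_Icc, nsmul_eq_mul]
  rw [show ((r : ℤ) - 1) / 2 + 1 - 1 = ((r : ℤ) - 1) / 2 by ring]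
  linear_combination c4 r * e3

lemma sum_trip_nonsquare (N : ℕ) (hN : N % 2 = 1) (hs : ∀ r : ℤ, r ^ 2 ≠ N) :
    ∑ p ∈ (trip N).filter (fun p => 0 < p.2.1 ∧ 0 < p.2.2), sgn p.2.2 * c4 p.2.1 = 0 := by
  rw [sum_trip12 _ hN, Finset.filter_eq_empty_iff.2, Finset.filter_eq_empty_iff.2]
  · simp
  · rintro ⟨A, c, d⟩ h ⟨-, h1, -⟩
    simp only [trip, Finset.mem_filter] at h h1
    apply hs A
    rw [← h.2, h1]
    ring
  · rintro ⟨A, c, d⟩ h ⟨-, -, h1⟩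
    simp only [trip, Finset.mem_filter] at h h1
    apply hs (A + 2 * c)
    rw [← h.2]
    linear_combination 4 * c * h1

/-! ### The cubic theta series -/

/-- `(-1)^k r₂(k)` as a sum over factorizations; the term `k = 0` is treated apart. -/
lemma sgn_mul_card_rep (k : ℕ) :
    sgn k * ((rep 1 k).card : ℤ) =
      (if k = 0 then 1 else 0) + 4 * ∑ p ∈ k.divisorsAntidiagonal, sgn p.2 * c4 p.1 := by
  rcases Nat.eq_zero_or_pos k with rfl | hk
  · have : (rep 1 0).card = 1 := by decide
    simp [this, sgn]
  · rw [card_rep_one k hk, if_neg hk.ne', dsum,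
      ← Nat.sum_divisorsAntidiagonal (fun d _ => c4 d), zero_add, mul_left_comm,
      Finset.mul_sum]
    congr 1
    refine Finset.sum_congr rfl ?_
    rintro ⟨c, d⟩ h
    rw [Nat.mem_divisorsAntidiagonal] at h
    rw [← h.1]
    simp only
    push_cast
    have h1 := Int.mul_emod (c : ℤ) d 2
    unfold c4 sgn
    rcases Int.emod_two_eq_zero_or_one (c : ℤ) with hc | hc <;>
      rcases Int.emod_two_eq_zero_or_one (d : ℤ) with hd | hd <;>
      simp only [hc, hd] at h1 <;> split_ifs <;> omega

lemma sum_trip12_eq (N M : ℕ) (hNM : N ≤ M) :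
    ∑ A ∈ Finset.Icc (-(M : ℤ)) M, ∑ k ∈ Finset.range (M + 1),
      (if A ^ 2 + 8 * (k : ℤ) = N then ∑ p ∈ k.divisorsAntidiagonal, sgn p.2 * c4 p.1 else 0) =
    ∑ p ∈ (trip N).filter (fun p => 0 < p.2.1 ∧ 0 < p.2.2), sgn p.2.2 * c4 p.2.1 := by
  rw [← Finset.sum_product', ← Finset.sum_filter, Finset.sum_sigma']
  have hNM' : (N : ℤ) ≤ M := by exact_mod_cast hNM
  refine Finset.sum_bij' (fun x _ => (x.1.1, (x.2.1 : ℤ), (x.2.2 : ℤ)))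
    (fun p _ => ⟨(p.1, p.2.1.toNat * p.2.2.toNat), (p.2.1.toNat, p.2.2.toNat)⟩) ?_ ?_ ?_ ?_ ?_
  · rintro ⟨⟨A, k⟩, ⟨c, d⟩⟩ h
    simp only [Finset.mem_sigma, Finset.mem_filter, Nat.mem_divisorsAntidiagonal] at h
    obtain ⟨⟨-, h1⟩, rfl, h2⟩ := h
    rw [mem_trip12]
    push_cast at h1
    refine ⟨by linarith, ?_, ?_⟩
    · have := Nat.pos_of_ne_zero (left_ne_zero_of_mul h2)
      exact_mod_cast this
    · have := Nat.pos_of_ne_zero (right_ne_zero_of_mul h2)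
      exact_mod_cast this
  · rintro ⟨A, c, d⟩ h
    rw [mem_trip12] at h
    obtain ⟨h1, hc, hd⟩ := h
    lift c to ℕ using hc.le
    lift d to ℕ using hd.le
    have hc' : 0 < c := by exact_mod_cast hc
    have hd' : 0 < d := by exact_mod_cast hd
    simp only [Finset.mem_sigma, Finset.mem_filter, Nat.mem_divisorsAntidiagonal,
      Finset.mem_product, Finset.mem_Icc, Finset.mem_range, Int.toNat_natCast]
    have h0 : (0 : ℤ) < c * d := by positivity
    have hA : A ^ 2 ≤ M := by nlinarith
    refine ⟨⟨⟨⟨by nlinarith, by nlinarith⟩, ?_⟩, by push_cast; linarith⟩, trivial, by positivity⟩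
    zify
    nlinarith [sq_nonneg A]
  · rintro ⟨⟨A, k⟩, ⟨c, d⟩⟩ h
    simp only [Finset.mem_sigma, Finset.mem_filter, Nat.mem_divisorsAntidiagonal] at h
    obtain ⟨-, rfl, -⟩ := h
    simp
  · rintro ⟨A, c, d⟩ h
    rw [mem_trip12] at h
    simp only [Prod.mk.injEq, true_and]
    omega
  · rintro ⟨⟨A, k⟩, ⟨c, d⟩⟩ h
    rfl

/-- The coefficientwise form of `∑_A q^{A²} (∑_x (-1)^x q^{8x²})² = 2 ∑_{r ≡ 1 (4)} r q^{r²}`, with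
`A` odd: Jacobi's formula for the cube of the eta function. -/
lemma cubic_theta (M : ℕ) (N : ℤ) (hN : N % 2 = 1) (hNM : N ≤ M) :
    ∑ A ∈ Finset.Icc (-(M : ℤ)) M, ∑ k ∈ Finset.range (M + 1),
      (if A ^ 2 + 8 * (k : ℤ) = N then sgn k * ((rep 1 k).card : ℤ) else 0) =
    2 * ∑ r ∈ Finset.Icc (-(M : ℤ)) M, if r % 4 = 1 ∧ r ^ 2 = N then r else 0 := by
  rcases lt_or_ge N 0 with hneg | hpos
  · rw [Finset.sum_eq_zero, Finset.sum_eq_zero]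
    · simp
    · intro r _
      rw [if_neg]
      rintro ⟨-, h⟩
      nlinarith [sq_nonneg r]
    · intro A _
      apply Finset.sum_eq_zero
      intro k _
      rw [if_neg]
      intro h
      nlinarith [sq_nonneg A]
  lift N to ℕ using hpos
  have hN' : N % 2 = 1 := by omega
  have hNM' : N ≤ M := by exact_mod_cast hNM
  have hsplit : ∑ A ∈ Finset.Icc (-(M : ℤ)) M, ∑ k ∈ Finset.range (M + 1),
      (if A ^ 2 + 8 * (k : ℤ) = N then sgn k * ((rep 1 k).card : ℤ) else 0) =
      ∑ A ∈ Finset.Icc (-(M : ℤ)) M, (if A ^ 2 = (N : ℤ) then 1 else 0) +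
      4 * ∑ A ∈ Finset.Icc (-(M : ℤ)) M, ∑ k ∈ Finset.range (M + 1),
      (if A ^ 2 + 8 * (k : ℤ) = N then
        ∑ p ∈ k.divisorsAntidiagonal, sgn p.2 * c4 p.1 else 0) := by
    rw [Finset.mul_sum, ← Finset.sum_add_distrib]
    refine Finset.sum_congr rfl fun A _ => ?_
    have h0 : (if A ^ 2 = (N : ℤ) then (1 : ℤ) else 0) =
        ∑ k ∈ Finset.range (M + 1), if k = 0 then
          (if A ^ 2 + 8 * (k : ℤ) = N then 1 else 0) else 0 := by
      rw [Finset.sum_ite_eq']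
      simp
    rw [h0, Finset.mul_sum, ← Finset.sum_add_distrib]
    refine Finset.sum_congr rfl fun k _ => ?_
    rw [sgn_mul_card_rep]
    split_ifs <;> ring
  rw [hsplit, sum_trip12_eq N M hNM']
  by_cases hs : ∃ r : ℤ, r ^ 2 = N
  · obtain ⟨r, hr⟩ := hs
    wlog h0 : 0 ≤ r generalizing r
    · exact this (-r) (by rw [← hr]; ring) (by linarith)
    lift r to ℕ using h0
    obtain rfl : N = r ^ 2 := by exact_mod_cast hr.symm
    have hr2 : r % 2 = 1 := by
      rcases Nat.mod_two_eq_zero_or_one r with h | h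
      · rw [Nat.pow_mod, h] at hN'
        norm_num at hN'
      · exact h
    have hrM : (r : ℤ) ≤ M := by
      have : r ≤ r ^ 2 := Nat.le_self_pow (by norm_num) r
      exact_mod_cast this.trans hNM'
    have h1 : ∀ A : ℤ, A ^ 2 = ((r ^ 2 : ℕ) : ℤ) ↔ A = r ∨ A = -r := by
      intro A
      push_cast
      exact sq_eq_sq_iff_eq_or_eq_neg
    have hS := sum_trip_square r hr2
    have hA : ∑ A ∈ Finset.Icc (-(M : ℤ)) M, (if A ^ 2 = ((r ^ 2 : ℕ) : ℤ) then (1 : ℤ) else 0)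
        = 2 := by
      simp only [h1]
      rw [← Finset.sum_filter, Finset.sum_const, nsmul_eq_mul, mul_one]
      have : (Finset.Icc (-(M : ℤ)) M).filter (fun A : ℤ => A = r ∨ A = -r) =
          ({(r : ℤ), -(r : ℤ)} : Finset ℤ) := by
        ext x
        simp only [Finset.mem_filter, Finset.mem_Icc, Finset.mem_insert, Finset.mem_singleton]
        omega
      rw [this, Finset.card_pair (by omega)]
      rfl
    have hR : ∑ x ∈ Finset.Icc (-(M : ℤ)) M,
        (if x % 4 = 1 ∧ x ^ 2 = ((r ^ 2 : ℕ) : ℤ) then x else 0) = c4 r * r := by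
      simp only [h1]
      have : ∀ x : ℤ, (if x % 4 = 1 ∧ (x = r ∨ x = -r) then x else 0) =
          if x = c4 r * r then x else 0 := by
        intro x
        unfold c4
        split_ifs <;> omega
      simp only [this]
      rw [Finset.sum_ite_eq', if_pos]
      rw [Finset.mem_Icc]
      unfold c4
      split_ifs <;> omega
    rw [hA, hR]
    linarith
  · push Not at hs
    rw [sum_trip_nonsquare N hN' hs, Finset.sum_eq_zero, Finset.sum_eq_zero]
    · simp
    · intro r _
      rw [if_neg]
      exact fun h => hs r h.2
    · intro A _
      rw [if_neg (hs A)]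

/-- The pairs `(A, V)` with `A² + 2V² = m - 4l`. -/
noncomputable def av (m l : ℕ) : Finset (ℤ × ℤ) :=
  (Finset.Icc (-(m : ℤ)) m ×ˢ Finset.Icc (-(m : ℤ)) m).filter
    fun p => p.1 ^ 2 + 2 * p.2 ^ 2 + 4 * l = m

lemma mem_av {m l : ℕ} (A V : ℤ) : (A, V) ∈ av m l ↔ A ^ 2 + 2 * V ^ 2 + 4 * l = m := by
  simp only [av, Finset.mem_filter, Finset.mem_product, Finset.mem_Icc, and_iff_right_iff_imp]
  intro h
  have h1 : A ^ 2 ≤ m := by nlinarith [sq_nonneg V]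
  have h2 : V ^ 2 ≤ m := by nlinarith [sq_nonneg A, sq_nonneg V]
  refine ⟨⟨?_, ?_⟩, ?_, ?_⟩ <;> nlinarith

lemma card_av {m l : ℕ} (h : 4 * l ≤ m) : (av m l).card = (rep 2 (m - 4 * l)).card := by
  congr 1
  ext ⟨A, V⟩
  rw [mem_av, mem_rep two_pos]
  push_cast [h]
  constructor <;> intro h <;> linarith

lemma card_av_zero {m l : ℕ} (h : m < 4 * l) : (av m l).card = 0 := by
  rw [Finset.card_eq_zero, Finset.eq_empty_iff_forall_notMem]
  rintro ⟨A, V⟩ hA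
  rw [mem_av] at hA
  have h' : (m : ℤ) < 4 * l := by exact_mod_cast h
  nlinarith [sq_nonneg A, sq_nonneg V]

/-- The cusp form part, in terms of the CM sum. -/
lemma cusp_part (m : ℕ) (hm : m % 2 = 1) :
    ∑ k ∈ Finset.range (m + 1), ((av m (2 * k)).card : ℤ) * (sgn k * ((rep 1 k).card : ℤ)) =
      2 * ∑ r ∈ Finset.Icc (-(m : ℤ)) m, ∑ s ∈ Finset.Icc (-(m : ℤ)) m,
        if r % 4 = 1 ∧ (m : ℤ) = r ^ 2 + 2 * s ^ 2 then r else 0 := by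
  have h1 : ∀ k ∈ Finset.range (m + 1),
      ((av m (2 * k)).card : ℤ) * (sgn k * ((rep 1 k).card : ℤ)) =
      ∑ V ∈ Finset.Icc (-(m : ℤ)) m, ∑ A ∈ Finset.Icc (-(m : ℤ)) m,
        if A ^ 2 + 8 * (k : ℤ) = m - 2 * V ^ 2 then sgn k * ((rep 1 k).card : ℤ) else 0 := by
    intro k _
    rw [av, ← nsmul_eq_mul, ← Finset.sum_const, Finset.sum_filter, Finset.sum_product_right]
    refine Finset.sum_congr rfl fun V _ => Finset.sum_congr rfl fun A _ => ?_
    congr 1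
    push_cast
    apply propext
    constructor <;> intro h <;> linarith
  rw [Finset.sum_congr rfl h1, Finset.sum_comm,
    Finset.sum_comm (s := Finset.Icc (-(m : ℤ)) m) (t := Finset.Icc (-(m : ℤ)) m),
    Finset.mul_sum]
  refine Finset.sum_congr rfl fun V _ => ?_
  rw [Finset.sum_comm, cubic_theta m (m - 2 * V ^ 2) (by omega) (by nlinarith [sq_nonneg V])]
  congr 1
  refine Finset.sum_congr rfl fun r _ => ?_
  congr 1
  apply propext
  constructor <;> rintro ⟨h1, h2⟩ <;> exact ⟨h1, by linarith⟩

/-! ### A Liouville identity -/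

/-- The quadruples of positive integers with `ab + cd = m`. -/
noncomputable def quads (m : ℕ) : Finset (ℤ × ℤ × ℤ × ℤ) :=
  (Finset.Icc (1 : ℤ) m ×ˢ Finset.Icc (1 : ℤ) m ×ˢ Finset.Icc (1 : ℤ) m ×ˢ
    Finset.Icc (1 : ℤ) m).filter fun p => p.1 * p.2.1 + p.2.2.1 * p.2.2.2 = m

lemma mem_quads {m : ℕ} (a b c d : ℤ) :
    (a, b, c, d) ∈ quads m ↔ 0 < a ∧ 0 < b ∧ 0 < c ∧ 0 < d ∧ a * b + c * d = m := by
  simp only [quads, Finset.mem_filter, Finset.mem_product, Finset.mem_Icc]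
  constructor
  · rintro ⟨h, h'⟩
    exact ⟨by omega, by omega, by omega, by omega, h'⟩
  · rintro ⟨ha, hb, hc, hd, h⟩
    have h1 : 0 < a * b := by positivity
    have h2 : 0 < c * d := by positivity
    refine ⟨⟨⟨?_, ?_⟩, ⟨?_, ?_⟩, ⟨?_, ?_⟩, ?_, ?_⟩, h⟩
    any_goals omega
    all_goals nlinarith

/-- Solutions of `ab + cd = m` with `a`, `b` odd and `c`, `d` even. -/
noncomputable def X0 (m : ℕ) : Finset (ℤ × ℤ × ℤ × ℤ) := (quads m).filter fun p =>
  p.1 % 2 = 1 ∧ p.2.1 % 2 = 1 ∧ p.2.2.1 % 2 = 0 ∧ p.2.2.2 % 2 = 0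

/-- Solutions of `ab + cd = m` with only `c` even. -/
noncomputable def X1 (m : ℕ) : Finset (ℤ × ℤ × ℤ × ℤ) := (quads m).filter fun p =>
  p.1 % 2 = 1 ∧ p.2.1 % 2 = 1 ∧ p.2.2.1 % 2 = 0 ∧ p.2.2.2 % 2 = 1

/-- Solutions of `ab + cd = m` with only `b` even. -/
noncomputable def X2 (m : ℕ) : Finset (ℤ × ℤ × ℤ × ℤ) := (quads m).filter fun p =>
  p.1 % 2 = 1 ∧ p.2.1 % 2 = 0 ∧ p.2.2.1 % 2 = 1 ∧ p.2.2.2 % 2 = 1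

lemma shear_1 (m : ℕ) (f : ℤ → ℤ) :
    ∑ p ∈ (X0 m).filter (fun p => p.2.2.1 < p.1), f (p.1 - p.2.2.1) =
      ∑ p ∈ (X1 m).filter (fun p => p.2.1 < p.2.2.2), f p.1 := by
  refine Finset.sum_nbij' (fun p => (p.1 - p.2.2.1, p.2.1, p.2.2.1, p.2.1 + p.2.2.2))
    (fun p => (p.1 + p.2.2.1, p.2.1, p.2.2.1, p.2.2.2 - p.2.1)) ?_ ?_ ?_ ?_ ?_
  · rintro ⟨a, b, c, d⟩ h
    simp only [X0, X1, Finset.mem_filter, mem_quads] at h ⊢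
    obtain ⟨⟨⟨h1, h2, h3, h4, h5⟩, h6⟩, h7⟩ := h
    refine ⟨⟨⟨?_, ?_, ?_, ?_, by rw [← h5]; ring⟩, ?_⟩, ?_⟩ <;> omega
  · rintro ⟨a, b, c, d⟩ h
    simp only [X0, X1, Finset.mem_filter, mem_quads] at h ⊢
    obtain ⟨⟨⟨h1, h2, h3, h4, h5⟩, h6⟩, h7⟩ := h
    refine ⟨⟨⟨?_, ?_, ?_, ?_, by rw [← h5]; ring⟩, ?_⟩, ?_⟩ <;> omega
  · rintro ⟨a, b, c, d⟩ _
    simp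
  · rintro ⟨a, b, c, d⟩ _
    simp
  · rintro ⟨a, b, c, d⟩ _
    rfl

lemma shear_2 (m : ℕ) (f : ℤ → ℤ) (hf : ∀ x, f (-x) = f x) :
    ∑ p ∈ (X0 m).filter (fun p => p.1 < p.2.2.1), f (p.1 - p.2.2.1) =
      ∑ p ∈ (X2 m).filter (fun p => p.2.1 < p.2.2.2), f p.1 := by
  refine Finset.sum_nbij' (fun p => (p.2.2.1 - p.1, p.2.2.2, p.1, p.2.1 + p.2.2.2))
    (fun p => (p.2.2.1, p.2.2.2 - p.2.1, p.1 + p.2.2.1, p.2.1)) ?_ ?_ ?_ ?_ ?_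
  · rintro ⟨a, b, c, d⟩ h
    simp only [X0, X2, Finset.mem_filter, mem_quads] at h ⊢
    obtain ⟨⟨⟨h1, h2, h3, h4, h5⟩, h6⟩, h7⟩ := h
    refine ⟨⟨⟨?_, ?_, ?_, ?_, by rw [← h5]; ring⟩, ?_⟩, ?_⟩ <;> omega
  · rintro ⟨a, b, c, d⟩ h
    simp only [X0, X2, Finset.mem_filter, mem_quads] at h ⊢
    obtain ⟨⟨⟨h1, h2, h3, h4, h5⟩, h6⟩, h7⟩ := h
    refine ⟨⟨⟨?_, ?_, ?_, ?_, by rw [← h5]; ring⟩, ?_⟩, ?_⟩ <;> omega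
  · rintro ⟨a, b, c, d⟩ _
    simp
  · rintro ⟨a, b, c, d⟩ _
    simp
  · rintro ⟨a, b, c, d⟩ _
    simp only
    rw [← hf, neg_sub]

lemma shear_3 (m : ℕ) (f : ℤ → ℤ) :
    ∑ p ∈ (X0 m).filter (fun p => p.2.2.2 < p.2.1), f (p.1 + p.2.2.1) =
      ∑ p ∈ (X2 m).filter (fun p => p.2.2.1 < p.1), f p.1 := by
  refine Finset.sum_nbij' (fun p => (p.1 + p.2.2.1, p.2.2.2, p.1, p.2.1 - p.2.2.2))
    (fun p => (p.2.2.1, p.2.1 + p.2.2.2, p.1 - p.2.2.1, p.2.1)) ?_ ?_ ?_ ?_ ?_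
  · rintro ⟨a, b, c, d⟩ h
    simp only [X0, X2, Finset.mem_filter, mem_quads] at h ⊢
    obtain ⟨⟨⟨h1, h2, h3, h4, h5⟩, h6⟩, h7⟩ := h
    refine ⟨⟨⟨?_, ?_, ?_, ?_, by rw [← h5]; ring⟩, ?_⟩, ?_⟩ <;> omega
  · rintro ⟨a, b, c, d⟩ h
    simp only [X0, X2, Finset.mem_filter, mem_quads] at h ⊢
    obtain ⟨⟨⟨h1, h2, h3, h4, h5⟩, h6⟩, h7⟩ := h
    refine ⟨⟨⟨?_, ?_, ?_, ?_, by rw [← h5]; ring⟩, ?_⟩, ?_⟩ <;> omega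
  · rintro ⟨a, b, c, d⟩ _
    simp
  · rintro ⟨a, b, c, d⟩ _
    simp
  · rintro ⟨a, b, c, d⟩ _
    rfl

lemma shear_4 (m : ℕ) (f : ℤ → ℤ) :
    ∑ p ∈ (X0 m).filter (fun p => p.2.1 < p.2.2.2), f (p.1 + p.2.2.1) =
      ∑ p ∈ (X1 m).filter (fun p => p.2.2.1 < p.1), f p.1 := by
  refine Finset.sum_nbij' (fun p => (p.1 + p.2.2.1, p.2.1, p.2.2.1, p.2.2.2 - p.2.1))
    (fun p => (p.1 - p.2.2.1, p.2.1, p.2.2.1, p.2.1 + p.2.2.2)) ?_ ?_ ?_ ?_ ?_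
  · rintro ⟨a, b, c, d⟩ h
    simp only [X0, X1, Finset.mem_filter, mem_quads] at h ⊢
    obtain ⟨⟨⟨h1, h2, h3, h4, h5⟩, h6⟩, h7⟩ := h
    refine ⟨⟨⟨?_, ?_, ?_, ?_, by rw [← h5]; ring⟩, ?_⟩, ?_⟩ <;> omega
  · rintro ⟨a, b, c, d⟩ h
    simp only [X0, X1, Finset.mem_filter, mem_quads] at h ⊢
    obtain ⟨⟨⟨h1, h2, h3, h4, h5⟩, h6⟩, h7⟩ := h
    refine ⟨⟨⟨?_, ?_, ?_, ?_, by rw [← h5]; ring⟩, ?_⟩, ?_⟩ <;> omega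
  · rintro ⟨a, b, c, d⟩ _
    simp
  · rintro ⟨a, b, c, d⟩ _
    simp
  · rintro ⟨a, b, c, d⟩ _
    rfl

lemma shear_5 (m : ℕ) (f : ℤ → ℤ) :
    ∑ p ∈ (X1 m).filter (fun p => p.1 < p.2.2.1), f p.1 =
      ∑ p ∈ (X2 m).filter (fun p => p.2.2.2 < p.2.1), f p.1 := by
  refine Finset.sum_nbij' (fun p => (p.1, p.2.1 + p.2.2.2, p.2.2.1 - p.1, p.2.2.2))
    (fun p => (p.1, p.2.1 - p.2.2.2, p.2.2.1 + p.1, p.2.2.2)) ?_ ?_ ?_ ?_ ?_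
  · rintro ⟨a, b, c, d⟩ h
    simp only [X1, X2, Finset.mem_filter, mem_quads] at h ⊢
    obtain ⟨⟨⟨h1, h2, h3, h4, h5⟩, h6⟩, h7⟩ := h
    refine ⟨⟨⟨?_, ?_, ?_, ?_, by rw [← h5]; ring⟩, ?_⟩, ?_⟩ <;> omega
  · rintro ⟨a, b, c, d⟩ h
    simp only [X1, X2, Finset.mem_filter, mem_quads] at h ⊢
    obtain ⟨⟨⟨h1, h2, h3, h4, h5⟩, h6⟩, h7⟩ := h
    refine ⟨⟨⟨?_, ?_, ?_, ?_, by rw [← h5]; ring⟩, ?_⟩, ?_⟩ <;> omega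
  · rintro ⟨a, b, c, d⟩ _
    simp
  · rintro ⟨a, b, c, d⟩ _
    simp
  · rintro ⟨a, b, c, d⟩ _
    rfl

lemma shear_6 (m : ℕ) (f : ℤ → ℤ) :
    ∑ p ∈ (X2 m).filter (fun p => p.1 < p.2.2.1), f p.1 =
      ∑ p ∈ (X1 m).filter (fun p => p.2.2.2 < p.2.1), f p.1 := by
  refine Finset.sum_nbij' (fun p => (p.1, p.2.1 + p.2.2.2, p.2.2.1 - p.1, p.2.2.2))
    (fun p => (p.1, p.2.1 - p.2.2.2, p.2.2.1 + p.1, p.2.2.2)) ?_ ?_ ?_ ?_ ?_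
  · rintro ⟨a, b, c, d⟩ h
    simp only [X1, X2, Finset.mem_filter, mem_quads] at h ⊢
    obtain ⟨⟨⟨h1, h2, h3, h4, h5⟩, h6⟩, h7⟩ := h
    refine ⟨⟨⟨?_, ?_, ?_, ?_, by rw [← h5]; ring⟩, ?_⟩, ?_⟩ <;> omega
  · rintro ⟨a, b, c, d⟩ h
    simp only [X1, X2, Finset.mem_filter, mem_quads] at h ⊢
    obtain ⟨⟨⟨h1, h2, h3, h4, h5⟩, h6⟩, h7⟩ := h
    refine ⟨⟨⟨?_, ?_, ?_, ?_, by rw [← h5]; ring⟩, ?_⟩, ?_⟩ <;> omega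
  · rintro ⟨a, b, c, d⟩ _
    simp
  · rintro ⟨a, b, c, d⟩ _
    simp
  · rintro ⟨a, b, c, d⟩ _
    rfl

lemma sum_filter_lt_eq_gt {α : Type*} (s : Finset α) (g : α → ℤ) (u v : α → ℤ) :
    ∑ p ∈ s, g p = ∑ p ∈ s.filter (fun p => u p < v p), g p +
      ∑ p ∈ s.filter (fun p => u p = v p), g p + ∑ p ∈ s.filter (fun p => v p < u p), g p := by
  simp only [Finset.sum_filter]
  rw [← Finset.sum_add_distrib, ← Finset.sum_add_distrib]
  refine Finset.sum_congr rfl fun p _ => ?_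
  rcases lt_trichotomy (u p) (v p) with h | h | h
  · simp [h, h.ne, h.not_gt]
  · simp [h]
  · simp [h, h.ne', h.not_gt]

/-- Liouville's argument: shearing the solutions of `ab + cd = m` cancels everything in
`∑ f(a - c) - f(a + c)` except for two diagonal sums. -/
lemma liouville (m : ℕ) (f : ℤ → ℤ) (hf : ∀ x, f (-x) = f x) :
    ∑ p ∈ X0 m, (f (p.1 - p.2.2.1) - f (p.1 + p.2.2.1)) =
      ∑ p ∈ (X2 m).filter (fun p => p.1 = p.2.2.1), f p.1 -
      ∑ p ∈ (X1 m).filter (fun p => p.2.1 = p.2.2.2), f p.1 := by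
  have z1 : (X0 m).filter (fun p => p.1 = p.2.2.1) = ∅ := by
    rw [Finset.filter_eq_empty_iff]
    rintro ⟨a, b, c, d⟩ h
    simp only [X0, Finset.mem_filter] at h ⊢
    omega
  have z2 : (X0 m).filter (fun p => p.2.1 = p.2.2.2) = ∅ := by
    rw [Finset.filter_eq_empty_iff]
    rintro ⟨a, b, c, d⟩ h
    simp only [X0, Finset.mem_filter] at h ⊢
    omega
  have z3 : (X1 m).filter (fun p => p.1 = p.2.2.1) = ∅ := by
    rw [Finset.filter_eq_empty_iff]
    rintro ⟨a, b, c, d⟩ h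
    simp only [X1, Finset.mem_filter] at h ⊢
    omega
  have z4 : (X2 m).filter (fun p => p.2.1 = p.2.2.2) = ∅ := by
    rw [Finset.filter_eq_empty_iff]
    rintro ⟨a, b, c, d⟩ h
    simp only [X2, Finset.mem_filter] at h ⊢
    omega
  have e1 := sum_filter_lt_eq_gt (X0 m) (fun p => f (p.1 - p.2.2.1)) (fun p => p.1)
    (fun p => p.2.2.1)
  have e2 := sum_filter_lt_eq_gt (X0 m) (fun p => f (p.1 + p.2.2.1)) (fun p => p.2.1)
    (fun p => p.2.2.2)
  have e3 := sum_filter_lt_eq_gt (X1 m) (fun p => f p.1) (fun p => p.1) (fun p => p.2.2.1)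
  have e4 := sum_filter_lt_eq_gt (X1 m) (fun p => f p.1) (fun p => p.2.1) (fun p => p.2.2.2)
  have e5 := sum_filter_lt_eq_gt (X2 m) (fun p => f p.1) (fun p => p.1) (fun p => p.2.2.1)
  have e6 := sum_filter_lt_eq_gt (X2 m) (fun p => f p.1) (fun p => p.2.1) (fun p => p.2.2.2)
  simp only [z1, z2, z3, z4, Finset.sum_empty] at e1 e2 e3 e4 e5 e6
  have s1 := shear_1 m f
  have s2 := shear_2 m f hf
  have s3 := shear_3 m f
  have s4 := shear_4 m f
  have s5 := shear_5 m f
  have s6 := shear_6 m f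
  rw [Finset.sum_sub_distrib]
  linarith

lemma diag_two (m : ℕ) (hm : m % 2 = 1) (f : ℤ → ℤ) :
    2 * ∑ p ∈ (X2 m).filter (fun p => p.1 = p.2.2.1), f p.1 =
      ∑ x ∈ m.divisorsAntidiagonal, f x.1 * (x.2 - 1) := by
  have h1 : ∑ p ∈ (X2 m).filter (fun p => p.1 = p.2.2.1), f p.1 =
      ∑ x ∈ m.divisorsAntidiagonal, ∑ _j ∈ Finset.Icc (1 : ℤ) ((x.2 - 1) / 2), f x.1 := by
    rw [Finset.sum_sigma']
    refine Finset.sum_bij'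
      (fun p _ => ⟨(p.1.toNat, (p.2.1 + p.2.2.2).toNat), p.2.1 / 2⟩)
      (fun x _ => ((x.1.1 : ℤ), 2 * x.2, (x.1.1 : ℤ), x.1.2 - 2 * x.2)) ?_ ?_ ?_ ?_ ?_
    · rintro ⟨a, b, c, d⟩ h
      simp only [X2, Finset.mem_filter, mem_quads] at h
      obtain ⟨⟨⟨h1, h2, h3, h4, h5⟩, h6⟩, rfl⟩ := h
      simp only [Finset.mem_sigma, Nat.mem_divisorsAntidiagonal, Finset.mem_Icc]
      refine ⟨⟨?_, by omega⟩, by omega, by omega⟩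
      zify
      rw [Int.toNat_of_nonneg h1.le, Int.toNat_of_nonneg (by linarith), ← h5]
      ring
    · rintro ⟨⟨s, k⟩, j⟩ h
      simp only [Finset.mem_sigma, Nat.mem_divisorsAntidiagonal, Finset.mem_Icc] at h
      obtain ⟨⟨h1, h2⟩, h3, h4⟩ := h
      have hodd : s % 2 = 1 ∧ k % 2 = 1 := by
        rw [← Nat.odd_iff, ← Nat.odd_iff, ← Nat.odd_mul, Nat.odd_iff, h1]
        exact hm
      simp only [X2, Finset.mem_filter, mem_quads]
      refine ⟨⟨⟨?_, ?_, ?_, ?_, ?_⟩, ?_⟩, trivial⟩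
      any_goals omega
      rw [← h1]
      push_cast
      ring
    · rintro ⟨a, b, c, d⟩ h
      simp only [X2, Finset.mem_filter, mem_quads] at h
      simp only [Prod.mk.injEq]
      omega
    · rintro ⟨⟨s, k⟩, j⟩ h
      simp
    · rintro ⟨a, b, c, d⟩ h
      simp only [X2, Finset.mem_filter, mem_quads] at h
      simp only
      rw [Int.toNat_of_nonneg h.1.1.1.le]
  rw [h1, Finset.mul_sum]
  refine Finset.sum_congr rfl ?_
  rintro ⟨s, k⟩ h
  rw [Nat.mem_divisorsAntidiagonal] at h
  obtain ⟨h1, h2⟩ := h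
  have hodd : s % 2 = 1 ∧ k % 2 = 1 := by
    rw [← Nat.odd_iff, ← Nat.odd_iff, ← Nat.odd_mul, Nat.odd_iff, h1]
    exact hm
  have e3 : ((((k : ℤ) - 1) / 2).toNat : ℤ) * 2 = k - 1 := by omega
  simp only [Finset.sum_const, Int.card_Icc, nsmul_eq_mul]
  rw [show ((k : ℤ) - 1) / 2 + 1 - 1 = ((k : ℤ) - 1) / 2 by ring]
  linear_combination f s * e3

lemma diag_one (m : ℕ) (hm : m % 2 = 1) (f : ℤ → ℤ) (hf : ∀ x, x % 2 = 0 → f x = 0) :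
    ∑ p ∈ (X1 m).filter (fun p => p.2.1 = p.2.2.2), f p.1 =
      ∑ x ∈ m.divisorsAntidiagonal, ∑ s ∈ Finset.Ioo (0 : ℤ) x.2, f s := by
  have h1 : ∀ k : ℕ, ∑ s ∈ Finset.Ioo (0 : ℤ) k, f s =
      ∑ s ∈ (Finset.Ioo (0 : ℤ) k).filter (fun s => s % 2 = 1), f s := by
    intro k
    rw [Finset.sum_filter]
    refine Finset.sum_congr rfl fun s _ => ?_
    split_ifs with h
    · rfl
    · exact hf s (by omega)
  simp only [h1]
  rw [Finset.sum_sigma']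
  refine Finset.sum_bij'
    (fun p _ => ⟨(p.2.1.toNat, (p.1 + p.2.2.1).toNat), p.1⟩)
    (fun x _ => (x.2, (x.1.1 : ℤ), x.1.2 - x.2, (x.1.1 : ℤ))) ?_ ?_ ?_ ?_ ?_
  · rintro ⟨a, b, c, d⟩ h
    simp only [X1, Finset.mem_filter, mem_quads] at h
    obtain ⟨⟨⟨h1, h2, h3, h4, h5⟩, h6⟩, rfl⟩ := h
    simp only [Finset.mem_sigma, Nat.mem_divisorsAntidiagonal, Finset.mem_Ioo, Finset.mem_filter]
    refine ⟨⟨?_, by omega⟩, ⟨by omega, by omega⟩, by omega⟩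
    zify
    rw [Int.toNat_of_nonneg h2.le, Int.toNat_of_nonneg (by linarith), ← h5]
    ring
  · rintro ⟨⟨b, k⟩, s⟩ h
    simp only [Finset.mem_sigma, Nat.mem_divisorsAntidiagonal, Finset.mem_Ioo,
      Finset.mem_filter] at h
    obtain ⟨⟨h1, h2⟩, ⟨h3, h4⟩, h5⟩ := h
    have hodd : b % 2 = 1 ∧ k % 2 = 1 := by
      rw [← Nat.odd_iff, ← Nat.odd_iff, ← Nat.odd_mul, Nat.odd_iff, h1]
      exact hm
    simp only [X1, Finset.mem_filter, mem_quads]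
    refine ⟨⟨⟨?_, ?_, ?_, ?_, ?_⟩, ?_⟩, trivial⟩
    any_goals omega
    rw [← h1]
    push_cast
    ring
  · rintro ⟨a, b, c, d⟩ h
    simp only [X1, Finset.mem_filter, mem_quads] at h
    obtain ⟨⟨⟨h1, h2, h3, h4, h5⟩, h6⟩, h7⟩ := h
    refine Prod.ext rfl (Prod.ext ?_ (Prod.ext ?_ ?_))
    · change ((b.toNat : ℕ) : ℤ) = b
      omega
    · change (((a + c).toNat : ℕ) : ℤ) - a = c
      omega
    · change ((b.toNat : ℕ) : ℤ) = d
      omega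
  · rintro ⟨⟨s, k⟩, j⟩ h
    simp
  · rintro ⟨a, b, c, d⟩ h
    rfl

lemma sum_c8 (r : ℕ) (hr : r % 2 = 1) :
    2 * ∑ c ∈ Finset.Ioo (0 : ℤ) r, c8 c = c2 r - c8 r := by
  obtain ⟨k, rfl⟩ : ∃ k, r = 2 * k + 1 := ⟨r / 2, by omega⟩
  clear hr
  induction k with
  | zero =>
    have h : Finset.Ioo (0 : ℤ) ((2 * 0 + 1 : ℕ) : ℤ) = ∅ := by
      ext x
      simp only [Finset.mem_Ioo, Finset.notMem_empty, iff_false]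
      norm_num
      omega
    rw [h]
    simp [c8, c2]
  | succ k ih =>
    have h : Finset.Ioo (0 : ℤ) ((2 * (k + 1) + 1 : ℕ) : ℤ) =
        insert (2 * k + 1 : ℤ) (insert (2 * k + 2 : ℤ) (Finset.Ioo (0 : ℤ) ((2 * k + 1 : ℕ) : ℤ))) := by
      ext x
      simp only [Finset.mem_insert, Finset.mem_Ioo]
      omega
    have n1 : (2 * k + 2 : ℤ) ∉ Finset.Ioo (0 : ℤ) ((2 * k + 1 : ℕ) : ℤ) := by
      rw [Finset.mem_Ioo]
      omega
    have n2 : (2 * k + 1 : ℤ) ∉ insert (2 * k + 2 : ℤ)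
        (Finset.Ioo (0 : ℤ) ((2 * k + 1 : ℕ) : ℤ)) := by
      rw [Finset.mem_insert, Finset.mem_Ioo]
      omega
    rw [h, Finset.sum_insert n2, Finset.sum_insert n1, mul_add, mul_add, ih]
    have h0 : c8 (2 * k + 2) = 0 := by
      unfold c8
      split_ifs <;> omega
    have h1 : 2 * c8 (2 * k + 1) + (c2 (2 * k + 1) - c8 (2 * k + 1)) =
        c2 (2 * (k + 1) + 1) - c8 (2 * (k + 1) + 1) := by
      obtain ⟨h1, h2⟩ | ⟨h1, h2⟩ | ⟨h1, h2⟩ | ⟨h1, h2⟩ :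
          ((2 * k + 1 : ℤ) % 8 = 1 ∧ (2 * (k + 1) + 1 : ℤ) % 8 = 3) ∨
          ((2 * k + 1 : ℤ) % 8 = 3 ∧ (2 * (k + 1) + 1 : ℤ) % 8 = 5) ∨
          ((2 * k + 1 : ℤ) % 8 = 5 ∧ (2 * (k + 1) + 1 : ℤ) % 8 = 7) ∨
          ((2 * k + 1 : ℤ) % 8 = 7 ∧ (2 * (k + 1) + 1 : ℤ) % 8 = 1) := by omega
      all_goals simp [c8, c2, h1, h2]
    push_cast
    linarith

/-- The product of characters as a difference to which Liouville's argument applies. -/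
lemma c8_sub_c8 (a c : ℤ) (ha : a % 2 = 1) (hc : c % 2 = 0) :
    c8 (a - c) - c8 (a + c) = 2 * (c2 a * c4 (c / 2)) := by
  obtain ⟨j, rfl⟩ : ∃ j, c = 2 * j := ⟨c / 2, by omega⟩
  rw [Int.mul_ediv_cancel_left _ two_ne_zero]
  have h8 : a % 8 = 1 ∨ a % 8 = 3 ∨ a % 8 = 5 ∨ a % 8 = 7 := by omega
  have h4 : j % 4 = 0 ∨ j % 4 = 1 ∨ j % 4 = 2 ∨ j % 4 = 3 := by omega
  have h1 := Int.sub_emod a (2 * j) 8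
  have h2 := Int.add_emod a (2 * j) 8
  have h3 : 2 * j % 8 = 2 * (j % 4) := by omega
  rw [h3] at h1 h2
  unfold c8 c2 c4
  rcases h8 with h8 | h8 | h8 | h8 <;> rcases h4 with h4 | h4 | h4 | h4 <;>
    simp [h1, h2, h8, h4]

/-- Liouville's argument for the even function `(8/·)`, with the diagonal terms evaluated. -/
lemma sum_X0 (m : ℕ) (hm : m % 2 = 1) :
    4 * ∑ p ∈ X0 m, c2 p.1 * c4 (p.2.2.1 / 2) =
      ∑ d ∈ m.divisors, ((m / d : ℕ) : ℤ) * c8 d - dsum c2 m := by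
  have h := liouville m c8 (by
    intro x
    unfold c8
    split_ifs <;> omega)
  have h1 : ∑ p ∈ X0 m, (c8 (p.1 - p.2.2.1) - c8 (p.1 + p.2.2.1)) =
      2 * ∑ p ∈ X0 m, c2 p.1 * c4 (p.2.2.1 / 2) := by
    rw [Finset.mul_sum]
    refine Finset.sum_congr rfl ?_
    rintro ⟨a, b, c, d⟩ h
    simp only [X0, Finset.mem_filter] at h
    exact c8_sub_c8 a c h.2.1 h.2.2.2.1
  have h2 := diag_two m hm c8
  have h3 := diag_one m hm c8 (by
    intro x hx
    unfold c8
    split_ifs <;> omega)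
  have h4 : 2 * ∑ x ∈ m.divisorsAntidiagonal, ∑ s ∈ Finset.Ioo (0 : ℤ) x.2, c8 s =
      ∑ x ∈ m.divisorsAntidiagonal, (c2 x.2 - c8 x.2) := by
    rw [Finset.mul_sum]
    refine Finset.sum_congr rfl ?_
    rintro ⟨s, k⟩ h
    rw [Nat.mem_divisorsAntidiagonal] at h
    refine sum_c8 k ?_
    rw [← Nat.odd_iff]
    exact Nat.Odd.of_mul_right (m := s) (by rw [h.1, Nat.odd_iff]; exact hm)
  have e1 : ∑ x ∈ m.divisorsAntidiagonal, (c2 x.2 - c8 x.2) = dsum c2 m - dsum c8 m := by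
    rw [Finset.sum_sub_distrib,
      Nat.sum_divisorsAntidiagonal' (fun _ d => c2 d),
      Nat.sum_divisorsAntidiagonal' (fun _ d => c8 d)]
    rfl
  have e2 : ∑ x ∈ m.divisorsAntidiagonal, c8 x.1 * ((x.2 : ℤ) - 1) =
      ∑ d ∈ m.divisors, ((m / d : ℕ) : ℤ) * c8 d - dsum c8 m := by
    rw [Nat.sum_divisorsAntidiagonal (fun c d => c8 c * ((d : ℤ) - 1)), dsum,
      ← Finset.sum_sub_distrib]
    refine Finset.sum_congr rfl fun d _ => ?_
    ring
  rw [h1] at h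
  rw [e1] at h4
  rw [e2] at h2
  linarith

/-- Gluing the parameters of `∑_l c2(p) c4(q)`, with `l = q q'` and `m - 4l = p p'`, into a
quadruple `(p, p', 2q, 2q')`. -/
lemma conv_eq (m : ℕ) (hm : m % 2 = 1) :
    ∑ l ∈ Finset.range (m + 1), ∑ p ∈ (m - 4 * l).divisorsAntidiagonal,
      ∑ q ∈ l.divisorsAntidiagonal, c2 p.1 * c4 q.1 =
    ∑ p ∈ X0 m, c2 p.1 * c4 (p.2.2.1 / 2) := by
  simp only [Finset.sum_sigma']
  refine Finset.sum_bij'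
    (fun x _ => ((x.2.1.1 : ℤ), (x.2.1.2 : ℤ), 2 * (x.2.2.1 : ℤ), 2 * (x.2.2.2 : ℤ)))
    (fun p _ => ⟨(p.2.2.1 / 2).toNat * (p.2.2.2 / 2).toNat, ⟨(p.1.toNat, p.2.1.toNat),
      ((p.2.2.1 / 2).toNat, (p.2.2.2 / 2).toNat)⟩⟩) ?_ ?_ ?_ ?_ ?_
  · rintro ⟨l, ⟨a, b⟩, ⟨c, d⟩⟩ h
    simp only [Finset.mem_sigma, Nat.mem_divisorsAntidiagonal, Finset.mem_range] at h
    obtain ⟨h1, ⟨h2, h3⟩, rfl, h4⟩ := h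
    have hodd : a % 2 = 1 ∧ b % 2 = 1 := by
      rw [← Nat.odd_iff, ← Nat.odd_iff, ← Nat.odd_mul, Nat.odd_iff, h2]
      omega
    have hc : 0 < c := Nat.pos_of_ne_zero (left_ne_zero_of_mul h4)
    have hd : 0 < d := Nat.pos_of_ne_zero (right_ne_zero_of_mul h4)
    have h5 : a * b + 4 * (c * d) = m := by omega
    simp only [X0, Finset.mem_filter, mem_quads]
    refine ⟨⟨?_, ?_, ?_, ?_, ?_⟩, ?_⟩
    any_goals omega
    rw [← h5]
    push_cast
    ring
  · rintro ⟨a, b, c, d⟩ h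
    simp only [X0, Finset.mem_filter, mem_quads] at h
    obtain ⟨⟨h1, h2, h3, h4, h5⟩, h6, h7, h8, h9⟩ := h
    lift a to ℕ using h1.le
    lift b to ℕ using h2.le
    obtain ⟨c, rfl⟩ : ∃ e : ℕ, c = 2 * (e : ℤ) := ⟨(c / 2).toNat, by omega⟩
    obtain ⟨d, rfl⟩ : ∃ e : ℕ, d = 2 * (e : ℤ) := ⟨(d / 2).toNat, by omega⟩
    have h5' : a * b + 4 * (c * d) = m := by
      zify
      linarith
    have ha : 0 < a := by omega
    have hb : 0 < b := by omega
    have hc : 0 < c := by omega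
    have hd : 0 < d := by omega
    have hab : 0 < a * b := Nat.mul_pos ha hb
    have hcd : 0 < c * d := Nat.mul_pos hc hd
    simp only [Finset.mem_sigma, Nat.mem_divisorsAntidiagonal, Finset.mem_range,
      Int.mul_ediv_cancel_left _ (two_ne_zero : (2 : ℤ) ≠ 0), Int.toNat_natCast]
    refine ⟨?_, ⟨?_, ?_⟩, trivial, ?_⟩ <;> omega
  · rintro ⟨l, ⟨a, b⟩, ⟨c, d⟩⟩ h
    simp only [Finset.mem_sigma, Nat.mem_divisorsAntidiagonal, Finset.mem_range] at h
    obtain ⟨h1, ⟨h2, h3⟩, rfl, h4⟩ := h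
    simp
  · rintro ⟨a, b, c, d⟩ h
    simp only [X0, Finset.mem_filter, mem_quads] at h
    obtain ⟨⟨h1, h2, h3, h4, h5⟩, h6, h7, h8, h9⟩ := h
    refine Prod.ext ?_ (Prod.ext ?_ (Prod.ext ?_ ?_))
    · exact Int.toNat_of_nonneg h1.le
    · exact Int.toNat_of_nonneg h2.le
    · change 2 * (((c / 2).toNat : ℕ) : ℤ) = c
      omega
    · change 2 * (((d / 2).toNat : ℕ) : ℤ) = d
      omega
  · rintro ⟨l, ⟨a, b⟩, ⟨c, d⟩⟩ h
    simp

/-! ### The number of representations by `A² + 2V² + 4B² + 4W²` with `W` odd -/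

/-- The total count of `A² + 2V² + 4B² + 4W² = m`, as a twisted divisor sum. -/
lemma eisenstein_part (m : ℕ) (hm : m % 2 = 1) :
    ∑ l ∈ Finset.range (m + 1), ((av m l).card : ℤ) * ((rep 1 l).card : ℤ) =
      2 * ∑ d ∈ m.divisors, ((m / d : ℕ) : ℤ) * c8 d := by
  have h1 : ∀ l ∈ Finset.range (m + 1), ((av m l).card : ℤ) * ((rep 1 l).card : ℤ) =
      (if l = 0 then 2 * dsum c2 m else 0) +
      8 * ∑ p ∈ (m - 4 * l).divisorsAntidiagonal, ∑ q ∈ l.divisorsAntidiagonal,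
        c2 p.1 * c4 q.1 := by
    intro l _
    have e : ∀ (χ : ℤ → ℤ) (n : ℕ), ∑ p ∈ n.divisorsAntidiagonal, χ p.1 = dsum χ n :=
      fun χ n => Nat.sum_divisorsAntidiagonal (fun c _ => χ c)
    rw [← Finset.sum_mul_sum, e c2, e c4]
    rcases Nat.eq_zero_or_pos l with rfl | hl
    · have h0 : (rep 1 0).card = 1 := by decide
      rw [card_av (by omega), h0, Nat.mul_zero, Nat.sub_zero, card_rep_two _ (by omega)]
      simp [dsum]
    · rw [if_neg hl.ne', card_rep_one l hl]
      rcases Nat.lt_or_ge m (4 * l) with h | h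
      · rw [card_av_zero h, Nat.sub_eq_zero_of_le h.le]
        simp [dsum]
      · rw [card_av h, card_rep_two _ (by omega)]
        ring
  rw [Finset.sum_congr rfl h1, Finset.sum_add_distrib, ← Finset.mul_sum, conv_eq m hm,
    Finset.sum_ite_eq', if_pos (Finset.mem_range.2 (by omega))]
  linarith [sum_X0 m hm]

/-- The solutions of `A² + 2V² + 4B² + 4W² = m` with `W` odd. -/
noncomputable def sols (m : ℕ) : Finset (ℤ × ℤ × ℤ × ℤ) :=
  (Finset.Icc (-(m : ℤ)) m ×ˢ Finset.Icc (-(m : ℤ)) m ×ˢ Finset.Icc (-(m : ℤ)) m ×ˢ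
    Finset.Icc (-(m : ℤ)) m).filter fun p =>
      p.1 ^ 2 + 2 * p.2.1 ^ 2 + 4 * p.2.2.1 ^ 2 + 4 * p.2.2.2 ^ 2 = m ∧ p.2.2.2 % 2 = 1

lemma mem_sols {m : ℕ} (A V B W : ℤ) : (A, V, B, W) ∈ sols m ↔
    A ^ 2 + 2 * V ^ 2 + 4 * B ^ 2 + 4 * W ^ 2 = m ∧ W % 2 = 1 := by
  simp only [sols, Finset.mem_filter, Finset.mem_product, Finset.mem_Icc, and_iff_right_iff_imp]
  rintro ⟨h, -⟩
  have h1 := sq_nonneg A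
  have h2 := sq_nonneg V
  have h3 := sq_nonneg B
  have h4 := sq_nonneg W
  have key : ∀ x : ℤ, x ^ 2 ≤ m → -(m : ℤ) ≤ x ∧ x ≤ m := by
    intro x hx
    constructor <;> nlinarith
  exact ⟨key A (by linarith), key V (by linarith), key B (by linarith), key W (by linarith)⟩

lemma card_sols_fiber (m : ℕ) : (sols m).card =
    ∑ l ∈ Finset.range (m + 1),
      (av m l).card * ((rep 1 l).filter (fun p => p.2 % 2 = 1)).card := by
  simp only [← Finset.card_product]
  rw [← Finset.card_sigma]
  refine Finset.card_bij'
    (fun p _ => ⟨(p.2.2.1 ^ 2 + p.2.2.2 ^ 2).toNat, ((p.1, p.2.1), (p.2.2.1, p.2.2.2))⟩)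
    (fun x _ => (x.2.1.1, x.2.1.2, x.2.2.1, x.2.2.2)) ?_ ?_ ?_ ?_
  · rintro ⟨A, V, B, W⟩ h
    rw [mem_sols] at h
    obtain ⟨h, hW⟩ := h
    have h1 := sq_nonneg A
    have h2 := sq_nonneg V
    have h3 : 0 ≤ B ^ 2 + W ^ 2 := by positivity
    have h4 := Int.toNat_of_nonneg h3
    simp only [Finset.mem_sigma, Finset.mem_range, Finset.mem_product, mem_av,
      Finset.mem_filter, mem_rep one_pos, h4]
    refine ⟨?_, ?_, ?_, hW⟩
    · omega
    · linarith
    · push_cast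
      ring
  · rintro ⟨l, ⟨A, V⟩, ⟨B, W⟩⟩ h
    simp only [Finset.mem_sigma, Finset.mem_range, Finset.mem_product, mem_av,
      Finset.mem_filter, mem_rep one_pos] at h
    obtain ⟨-, h1, h2, h3⟩ := h
    push_cast at h2
    rw [mem_sols]
    exact ⟨by linarith, h3⟩
  · rintro ⟨A, V, B, W⟩ h
    rfl
  · rintro ⟨l, ⟨A, V⟩, ⟨B, W⟩⟩ h
    simp only [Finset.mem_sigma, Finset.mem_range, Finset.mem_product, mem_av,
      Finset.mem_filter, mem_rep one_pos] at h
    obtain ⟨-, -, h2, -⟩ := h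
    push_cast at h2
    have : (B ^ 2 + W ^ 2).toNat = l := by omega
    simp only [this]

/-- For odd `l` exactly one of the two coordinates is odd, so half of the pairs qualify. -/
lemma odd_count_odd (l : ℕ) (hl : l % 2 = 1) :
    2 * ((rep 1 l).filter (fun p => p.2 % 2 = 1)).card = (rep 1 l).card := by
  have h1 : ((rep 1 l).filter (fun p => p.2 % 2 = 1)).card =
      ((rep 1 l).filter (fun p => ¬ p.2 % 2 = 1)).card := by
    refine Finset.card_bij' (fun p _ => (p.2, p.1)) (fun p _ => (p.2, p.1)) ?_ ?_ ?_ ?_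
    · rintro ⟨B, W⟩ h
      simp only [Finset.mem_filter, mem_rep one_pos] at h ⊢
      push_cast at h ⊢
      refine ⟨by linarith, fun hB => ?_⟩
      have e1 : B ^ 2 % 2 = 1 := by simp [pow_two, Int.mul_emod, hB]
      have e2 : W ^ 2 % 2 = 1 := by simp [pow_two, Int.mul_emod, h.2]
      omega
    · rintro ⟨B, W⟩ h
      simp only [Finset.mem_filter, mem_rep one_pos] at h ⊢
      push_cast at h ⊢
      refine ⟨by linarith, ?_⟩
      by_contra hB
      have e1 : B ^ 2 % 2 = 0 := by
        simp [pow_two, Int.mul_emod, show B % 2 = 0 by omega]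
      have e2 : W ^ 2 % 2 = 0 := by
        simp [pow_two, Int.mul_emod, show W % 2 = 0 by omega]
      omega
    · intro p _
      rfl
    · intro p _
      rfl
  have h2 := Finset.card_filter_add_card_filter_not (s := rep 1 l) (fun p : ℤ × ℤ => p.2 % 2 = 1)
  omega

/-- For `l = 2k` the two coordinates have the same parity, and it is the parity of `k`. -/
lemma odd_count_even (k : ℕ) :
    2 * (((rep 1 (2 * k)).filter (fun p => p.2 % 2 = 1)).card : ℤ) =
      (rep 1 k).card - sgn k * (rep 1 k).card := by
  have key : ∀ B W : ℤ, B ^ 2 + W ^ 2 = 2 * k → (W % 2 = 1 ↔ k % 2 = 1) := by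
    intro B W h
    have e1 : W ^ 2 % 4 = if W % 2 = 1 then 1 else 0 := by
      rcases Int.emod_two_eq_zero_or_one W with hW | hW
      · obtain ⟨j, rfl⟩ := Int.dvd_of_emod_eq_zero hW
        rw [if_neg (by omega), show (2 * j) ^ 2 = 4 * (j ^ 2) by ring]
        omega
      · obtain ⟨j, rfl⟩ : ∃ j, W = 2 * j + 1 := ⟨W / 2, by omega⟩
        rw [if_pos (by omega), show (2 * j + 1) ^ 2 = 4 * (j ^ 2 + j) + 1 by ring]
        omega
    have e2 : B ^ 2 % 4 = if B % 2 = 1 then 1 else 0 := by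
      rcases Int.emod_two_eq_zero_or_one B with hW | hW
      · obtain ⟨j, rfl⟩ := Int.dvd_of_emod_eq_zero hW
        rw [if_neg (by omega), show (2 * j) ^ 2 = 4 * (j ^ 2) by ring]
        omega
      · obtain ⟨j, rfl⟩ : ∃ j, B = 2 * j + 1 := ⟨B / 2, by omega⟩
        rw [if_pos (by omega), show (2 * j + 1) ^ 2 = 4 * (j ^ 2 + j) + 1 by ring]
        omega
    split_ifs at e1 e2 <;> omega
  rw [← card_rep_one_two k]
  rcases Nat.mod_two_eq_zero_or_one k with hk | hk
  · have : (rep 1 (2 * k)).filter (fun p => p.2 % 2 = 1) = ∅ := by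
      rw [Finset.filter_eq_empty_iff]
      rintro ⟨B, W⟩ h hW
      rw [mem_rep one_pos] at h
      push_cast at h
      have := (key B W (by linarith)).1 hW
      omega
    rw [this, show sgn k = 1 by unfold sgn; simp; omega]
    simp
  · have : (rep 1 (2 * k)).filter (fun p => p.2 % 2 = 1) = rep 1 (2 * k) := by
      rw [Finset.filter_eq_self]
      rintro ⟨B, W⟩ h
      rw [mem_rep one_pos] at h
      push_cast at h
      exact (key B W (by linarith)).2 hk
    rw [this, show sgn k = -1 by unfold sgn; simp; omega]
    ring

lemma card_sols (m : ℕ) (hm : m % 2 = 1) :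
    ((sols m).card : ℤ) = ∑ d ∈ m.divisors, ((m / d : ℕ) : ℤ) * c8 d -
      ∑ r ∈ Finset.Icc (-(m : ℤ)) m, ∑ s ∈ Finset.Icc (-(m : ℤ)) m,
        if r % 4 = 1 ∧ (m : ℤ) = r ^ 2 + 2 * s ^ 2 then r else 0 := by
  have h1 : ∀ l ∈ Finset.range (m + 1), 2 * (((av m l).card : ℤ) *
      (((rep 1 l).filter (fun p => p.2 % 2 = 1)).card : ℤ)) =
      ((av m l).card : ℤ) * ((rep 1 l).card : ℤ) -
      ∑ k ∈ Finset.range (m + 1), if 2 * k = l then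
        ((av m (2 * k)).card : ℤ) * (sgn k * ((rep 1 k).card : ℤ)) else 0 := by
    intro l hl
    rw [Finset.mem_range] at hl
    rcases Nat.mod_two_eq_zero_or_one l with h | h
    · obtain ⟨k, rfl⟩ := Nat.dvd_of_mod_eq_zero h
      have e : ∀ j, 2 * j = 2 * k ↔ j = k := by omega
      simp only [e]
      rw [Finset.sum_ite_eq', if_pos (Finset.mem_range.2 (by omega)), card_rep_one_two]
      linear_combination ((av m (2 * k)).card : ℤ) * odd_count_even k
    · rw [Finset.sum_eq_zero, ← odd_count_odd l h]
      · push_cast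
        ring
      · intro k _
        rw [if_neg (by omega)]
  have h2 : ∑ l ∈ Finset.range (m + 1), ∑ k ∈ Finset.range (m + 1), (if 2 * k = l then
        ((av m (2 * k)).card : ℤ) * (sgn k * ((rep 1 k).card : ℤ)) else 0) =
      ∑ k ∈ Finset.range (m + 1), ((av m (2 * k)).card : ℤ) * (sgn k * ((rep 1 k).card : ℤ)) := by
    rw [Finset.sum_comm]
    refine Finset.sum_congr rfl fun k _ => ?_
    rw [Finset.sum_ite_eq]
    split_ifs with h
    · rfl
    · rw [Finset.mem_range] at h
      rw [card_av_zero (by omega)]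
      simp
  have h3 : 2 * ((sols m).card : ℤ) = ∑ l ∈ Finset.range (m + 1), 2 * (((av m l).card : ℤ) *
      (((rep 1 l).filter (fun p => p.2 % 2 = 1)).card : ℤ)) := by
    rw [card_sols_fiber, ← Finset.mul_sum]
    push_cast
    rfl
  rw [Finset.sum_congr rfl h1, Finset.sum_sub_distrib, h2, eisenstein_part m hm,
    cusp_part m hm] at h3
  linarith

/-! ### From triangular numbers to `A² + 2V² + 4B² + 4W²` -/

/-- The quadruples counted by `t(1,1,2,16;n)`. -/
noncomputable def tris (n : ℕ) : Finset (ℤ × ℤ × ℤ × ℤ) :=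
  (Finset.Icc (-(2 * n + 2 : ℤ)) (2 * n + 2) ×ˢ Finset.Icc (-(2 * n + 2 : ℤ)) (2 * n + 2) ×ˢ
    Finset.Icc (-(2 * n + 2 : ℤ)) (2 * n + 2) ×ˢ
    Finset.Icc (-(2 * n + 2 : ℤ)) (2 * n + 2)).filter fun p =>
      p.1 * (p.1 - 1) + p.2.1 * (p.2.1 - 1) + 2 * (p.2.2.1 * (p.2.2.1 - 1)) +
        16 * (p.2.2.2 * (p.2.2.2 - 1)) = 2 * n

lemma mem_tris {n : ℕ} (x y z w : ℤ) : (x, y, z, w) ∈ tris n ↔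
    x * (x - 1) + y * (y - 1) + 2 * (z * (z - 1)) + 16 * (w * (w - 1)) = 2 * n := by
  simp only [tris, Finset.mem_filter, Finset.mem_product, Finset.mem_Icc, and_iff_right_iff_imp]
  intro h
  have pos : ∀ t : ℤ, 0 ≤ t * (t - 1) := by
    intro t
    rcases le_or_gt t 0 with h | h <;> nlinarith
  have key : ∀ t : ℤ, t * (t - 1) ≤ 2 * n → -(2 * n + 2 : ℤ) ≤ t ∧ t ≤ 2 * n + 2 := by
    intro t ht
    constructor <;> nlinarith
  have h1 := pos x
  have h2 := pos y
  have h3 := pos z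
  have h4 := pos w
  exact ⟨key x (by linarith), key y (by linarith), key z (by linarith), key w (by linarith)⟩

lemma tquad_eq_card (n : ℕ) : tquad 1 1 2 16 n = (tris n).card := by
  unfold tquad
  refine Nat.subtype_card (tris n) ?_
  rintro ⟨x, y, z, w⟩
  rw [mem_tris]
  have half : ∀ t : ℤ, 2 * (t * (t - 1) / 2) = t * (t - 1) := by
    intro t
    have h : t * (t - 1) % 2 = 0 := by
      rcases Int.emod_two_eq_zero_or_one t with h | h
      · simp [Int.mul_emod, h]
      · simp [Int.mul_emod, show (t - 1) % 2 = 0 by omega]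
    omega
  have h1 := half x
  have h2 := half y
  have h3 := half z
  have h4 := half w
  push_cast
  constructor <;> intro h <;> linarith

/-- The reflection `y ↦ 1 - y` exchanges the parities of `x + y`, and `z ↦ 1 - z` those of
`(x + y) / 2 - z`; one class out of four remains, and there the form diagonalizes. -/
lemma card_tris (n : ℕ) : (tris n).card = 4 * (sols (2 * n + 5)).card := by
  have h1 : ((tris n).filter (fun p => (p.1 + p.2.1) % 2 = 0)).card =
      ((tris n).filter (fun p => ¬ (p.1 + p.2.1) % 2 = 0)).card := by
    refine Finset.card_bij' (fun p _ => (p.1, 1 - p.2.1, p.2.2.1, p.2.2.2))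
      (fun p _ => (p.1, 1 - p.2.1, p.2.2.1, p.2.2.2)) ?_ ?_ ?_ ?_
    · rintro ⟨x, y, z, w⟩ h
      simp only [Finset.mem_filter, mem_tris] at h ⊢
      exact ⟨by linarith, by omega⟩
    · rintro ⟨x, y, z, w⟩ h
      simp only [Finset.mem_filter, mem_tris] at h ⊢
      exact ⟨by linarith, by omega⟩
    · rintro ⟨x, y, z, w⟩ _
      simp
    · rintro ⟨x, y, z, w⟩ _
      simp
  have h2 : (((tris n).filter (fun p => (p.1 + p.2.1) % 2 = 0)).filter
      (fun p => ((p.1 + p.2.1) / 2 - p.2.2.1) % 2 = 0)).card =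
      (((tris n).filter (fun p => (p.1 + p.2.1) % 2 = 0)).filter
      (fun p => ¬ ((p.1 + p.2.1) / 2 - p.2.2.1) % 2 = 0)).card := by
    refine Finset.card_bij' (fun p _ => (p.1, p.2.1, 1 - p.2.2.1, p.2.2.2))
      (fun p _ => (p.1, p.2.1, 1 - p.2.2.1, p.2.2.2)) ?_ ?_ ?_ ?_
    · rintro ⟨x, y, z, w⟩ h
      simp only [Finset.mem_filter, mem_tris] at h ⊢
      exact ⟨⟨by linarith, by omega⟩, by omega⟩
    · rintro ⟨x, y, z, w⟩ h
      simp only [Finset.mem_filter, mem_tris] at h ⊢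
      exact ⟨⟨by linarith, by omega⟩, by omega⟩
    · rintro ⟨x, y, z, w⟩ _
      simp
    · rintro ⟨x, y, z, w⟩ _
      simp
  have h3 : (((tris n).filter (fun p => (p.1 + p.2.1) % 2 = 0)).filter
      (fun p => ((p.1 + p.2.1) / 2 - p.2.2.1) % 2 = 0)).card = (sols (2 * n + 5)).card := by
    refine Finset.card_bij'
      (fun p _ => ((p.1 + p.2.1) / 2 + p.2.2.1 - 1, (p.1 - p.2.1) / 2,
        ((p.1 + p.2.1) / 2 - p.2.2.1) / 2, 2 * p.2.2.2 - 1))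
      (fun p _ => ((p.1 + 1) / 2 + p.2.2.1 + p.2.1, (p.1 + 1) / 2 + p.2.2.1 - p.2.1,
        (p.1 + 1) / 2 - p.2.2.1, (p.2.2.2 + 1) / 2)) ?_ ?_ ?_ ?_
    · rintro ⟨x, y, z, w⟩ h
      simp only [Finset.mem_filter, mem_tris] at h
      obtain ⟨⟨h1, h2⟩, h3⟩ := h
      obtain ⟨s, hs⟩ := Int.dvd_of_emod_eq_zero h2
      obtain rfl : y = 2 * s - x := by omega
      have e1 : (x + (2 * s - x)) / 2 = s := by omega
      have e2 : (x - (2 * s - x)) / 2 = x - s := by omega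
      rw [e1] at h3
      obtain ⟨B, hB⟩ := Int.dvd_of_emod_eq_zero h3
      obtain rfl : s = z + 2 * B := by omega
      have e3 : (z + 2 * B - z) / 2 = B := by omega
      simp only [e1, e2, e3, mem_sols]
      push_cast
      exact ⟨by linarith, by omega⟩
    · rintro ⟨A, V, B, W⟩ h
      rw [mem_sols] at h
      obtain ⟨h, hW⟩ := h
      have hA : A % 2 = 1 := by
        by_contra hA
        obtain ⟨j, rfl⟩ : ∃ j, A = 2 * j := ⟨A / 2, by omega⟩
        push_cast at h
        have : (2 * j) ^ 2 = 2 * (2 * j ^ 2) := by ring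
        omega
      obtain ⟨j, rfl⟩ : ∃ j, A = 2 * j - 1 := ⟨(A + 1) / 2, by omega⟩
      obtain ⟨w, rfl⟩ : ∃ w, W = 2 * w - 1 := ⟨(W + 1) / 2, by omega⟩
      have e1 : (2 * j - 1 + 1) / 2 = j := by omega
      have e2 : (2 * w - 1 + 1) / 2 = w := by omega
      simp only [e1, e2, Finset.mem_filter, mem_tris]
      push_cast at h
      exact ⟨⟨by linarith, by omega⟩, by omega⟩
    · rintro ⟨x, y, z, w⟩ h
      simp only [Finset.mem_filter, mem_tris] at h
      simp only [Prod.mk.injEq]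
      omega
    · rintro ⟨A, V, B, W⟩ h
      rw [mem_sols] at h
      obtain ⟨h, hW⟩ := h
      have hA : A % 2 = 1 := by
        by_contra hA
        obtain ⟨j, rfl⟩ : ∃ j, A = 2 * j := ⟨A / 2, by omega⟩
        push_cast at h
        have : (2 * j) ^ 2 = 2 * (2 * j ^ 2) := by ring
        omega
      simp only [Prod.mk.injEq]
      omega
  have h4 := Finset.card_filter_add_card_filter_not (s := tris n)
    (fun p : ℤ × ℤ × ℤ × ℤ => (p.1 + p.2.1) % 2 = 0)
  have h5 := Finset.card_filter_add_card_filter_not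
    (s := (tris n).filter (fun p => (p.1 + p.2.1) % 2 = 0))
    (fun p : ℤ × ℤ × ℤ × ℤ => ((p.1 + p.2.1) / 2 - p.2.2.1) % 2 = 0)
  omega

/-! ### The formula -/

lemma jacobiSym_two_eq_c8 (d : ℕ) (hd : d % 2 = 1) : jacobiSym 2 d = c8 d := by
  rw [jacobiSym.at_two (Nat.odd_iff.2 hd), ZMod.χ₈_nat_eq_if_mod_eight, if_neg (by omega), c8]
  split_ifs <;> omega

lemma finsum_eq_sum_box (m : ℕ) :
    ∑ᶠ (r : ℤ) (s : ℤ) (_ : r % 4 = 1 ∧ (m : ℤ) = r ^ 2 + 2 * s ^ 2), r =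
      ∑ r ∈ Finset.Icc (-(m : ℤ)) m, ∑ s ∈ Finset.Icc (-(m : ℤ)) m,
        if r % 4 = 1 ∧ (m : ℤ) = r ^ 2 + 2 * s ^ 2 then r else 0 := by
  have hb : ∀ r s : ℤ, (m : ℤ) = r ^ 2 + 2 * s ^ 2 →
      r ∈ Finset.Icc (-(m : ℤ)) m ∧ s ∈ Finset.Icc (-(m : ℤ)) m := by
    intro r s h
    have h1 := sq_nonneg r
    have h2 := sq_nonneg s
    simp only [Finset.mem_Icc]
    refine ⟨⟨?_, ?_⟩, ?_, ?_⟩ <;> nlinarith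
  have h0 : ∀ r s : ℤ, (∑ᶠ (_ : r % 4 = 1 ∧ (m : ℤ) = r ^ 2 + 2 * s ^ 2), r) =
      if r % 4 = 1 ∧ (m : ℤ) = r ^ 2 + 2 * s ^ 2 then r else 0 := by
    intro r s
    rw [finsum_eq_if]
  simp only [h0]
  have h1 : ∀ r : ℤ, (∑ᶠ s : ℤ, if r % 4 = 1 ∧ (m : ℤ) = r ^ 2 + 2 * s ^ 2 then r else 0) =
      ∑ s ∈ Finset.Icc (-(m : ℤ)) m,
        if r % 4 = 1 ∧ (m : ℤ) = r ^ 2 + 2 * s ^ 2 then r else 0 := by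
    intro r
    refine finsum_eq_sum_of_support_subset _ ?_
    intro s hs
    rw [Function.mem_support, ne_eq, ite_eq_right_iff, Classical.not_imp] at hs
    exact (hb r s hs.1.2).2
  simp only [h1]
  refine finsum_eq_sum_of_support_subset _ ?_
  intro r hr
  obtain ⟨s, -, hs⟩ := Finset.exists_ne_zero_of_sum_ne_zero hr
  rw [ne_eq, ite_eq_right_iff, Classical.not_imp] at hs
  exact (hb r s hs.1.2).1

theorem stmt_5 (n : ℕ) (hn : 0 < n) :
    (tquad 1 1 2 16 n : ℤ) =
      4 * ∑ d ∈ (2 * n + 5).divisors, ((((2 * n + 5) / d : ℕ) : ℤ) * jacobiSym 2 d) -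
        4 * ∑ᶠ (r : ℤ) (s : ℤ) (_ : r % 4 = 1 ∧ (2 * (n : ℤ) + 5) = r ^ 2 + 2 * s ^ 2), r := by
  have h1 := finsum_eq_sum_box (2 * n + 5)
  have h2 := card_sols (2 * n + 5) (by omega)
  rw [← h1] at h2
  have h3 : ∑ d ∈ (2 * n + 5).divisors, ((((2 * n + 5) / d : ℕ) : ℤ) * jacobiSym 2 d) =
      ∑ d ∈ (2 * n + 5).divisors, (((2 * n + 5) / d : ℕ) : ℤ) * c8 d := by
    refine Finset.sum_congr rfl fun d hd => ?_
    rw [jacobiSym_two_eq_c8 d]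
    rw [← Nat.odd_iff]
    exact Odd.of_dvd_nat (Nat.odd_iff.2 (by omega)) (Nat.dvd_of_mem_divisors hd)
  push_cast at h2
  rw [tquad_eq_card, card_tris, h3]
  push_cast
  linarith
end

section
/- Let n be a positive integer and write 2n+3 = 3^β·n₁ with n₁ a positive integer not divisible by 3. Then t(1,2,3,6;n) = 2·(3^(β+1) − 2)·σ(n₁) − 2·a(2n+3). -/
/-!
Put `m = 2n + 3`. Completing squares, `t(1,2,3,6;n)` counts the odd solutions of
`X² + 2Y² + 3Z² + 6W² = 4m`. It is compared with two other counts through the solutions of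
`w² + 3s² + 8(y² + 3z²) = 4m` with `w`, `s` odd; let `E` and `O` be the numbers of those with `y + z`
even and odd.

* If `Y ≡ W` modulo `4`, then `Y² + 3W² = 4(y² + 3z²)` with `Y = y + 3z`, `W = y - z`; the
  other odd pairs satisfy `Y ≡ -W`. Hence `t = 2O` (`card_oddMix`).
* Among the representations of `4m` by four odd squares, let `M` be the number of those with
  `3 ∣ x + y + z`. An orthogonal change of coordinates gives `M = (E + O) + t`, that is `E + 3O`
  (`card_triQuads_eq`, `card_parQuads`). On the other hand every non-zero isotropic vector of `𝔽₃⁴`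
  is a signed permutation of `(1, 1, 1, 0)`, so a double count expresses `M` through the number
  `16 σ(m)` of representations of `4m` by four odd squares, and `M = 4 (3^(β+1) - 2) σ(n₁)`
  (`card_triQuads`).
* By the pentagonal number theorem (`coeff_eq_sum`), `a(m)` is a signed count of the quadruples
  of integers `≡ -1` modulo `6` with `X² + 2Y² + 3(Z² + 2W²) = 12m`. The binary identity
  `∑ (-1)^y q^(w² + 8y²) = 2q ∏ (1 - q^(8k))(1 - q^(16k))`, the sum being over odd `w` and all `y`
  (`sum_oddPairs`), applied at `q` and at `q³`, yields `E - O = 4 a(m)` (`sum_mixQuads`).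

Thus `2t = 4O = M - 4a(m)`, which is the claim.

Jacobi's count `16 σ(m)` (`card_oddQuads`) is proved by a recursion. Symmetry among the five squares
in a representation `D = x² + y² + z² + w² + v²` gives `∑ (D - 5x²) N(D - x²) = 0` over odd `x`,
where `N` counts the representations by four odd squares. The divisor sums satisfy the same
recursion, because `∑ d (d e - x²)` vanishes over the quadratic forms `d T² + x T - e`,
`d, e > 0`, of non-square discriminant `D`.
-/

open scoped BigOperators

/-! ### The coefficients as signed counts -/

/-- The sign `(-1)^k` of an integer `k`, as an integer. -/
def sg (k : ℤ) : ℤ := if Even k then 1 else -1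

lemma sg_natCast (k : ℕ) : ((sg k : ℤ) : ℂ) = (-1) ^ k := by
  unfold sg
  split_ifs with h
  · rw [Int.even_coe_nat] at h; simp [h.neg_one_pow]
  · rw [Int.even_coe_nat, Nat.not_even_iff_odd] at h; simp [h.neg_one_pow]

lemma norm_sg (k : ℤ) : ‖((sg k : ℤ) : ℂ)‖ = 1 := by
  unfold sg; split_ifs <;> simp

lemma summable_norm_pent {q : ℂ} (hq : ‖q‖ < 1) :
    Summable fun k : ℤ ↦ ‖((sg k : ℤ) : ℂ) * q ^ pentagonal k‖ := by
  have := (summable_geometric_of_lt_one (norm_nonneg q) hq).comp_injective pentagonal_injective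
  refine this.congr fun k ↦ ?_
  rw [norm_mul, norm_sg, one_mul, norm_pow]; rfl

open Filter Topology in
/-- Euler's pentagonal number theorem for the value of the product at a complex number in the unit
disc. -/
lemma tprod_pent {q : ℂ} (hq : ‖q‖ < 1) :
    ∏' n : ℕ, (1 - q ^ (n + 1)) = ∑' k : ℤ, ((sg k : ℤ) : ℂ) * q ^ pentagonal k := by
  have hr0 := norm_nonneg q
  have hgeo := summable_geometric_of_lt_one hr0 hq
  -- the Euler products are bounded uniformly in `k` and `n`
  obtain ⟨C, hC⟩ : ∃ C : ℝ, ∀ k n : ℕ,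
      ‖∏ i ∈ Finset.range (n + 1), (1 - q ^ (k + i + 1))‖ ≤ C := by
    refine ⟨Real.exp (∑' i, ‖q‖ ^ i), fun k n ↦ ?_⟩
    calc ‖∏ i ∈ Finset.range (n + 1), (1 - q ^ (k + i + 1))‖
        ≤ ∏ i ∈ Finset.range (n + 1), (1 + ‖q‖ ^ i) := by
          rw [norm_prod]
          refine Finset.prod_le_prod (fun _ _ ↦ norm_nonneg _) fun i _ ↦ ?_
          refine (norm_sub_le _ _).trans ?_
          rw [norm_one, norm_pow]
          have := pow_le_pow_of_le_one hr0 hq.le (show i ≤ k + i + 1 by omega)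
          linarith
      _ ≤ Real.exp (∑ i ∈ Finset.range (n + 1), ‖q‖ ^ i) :=
          Real.prod_one_add_le_exp_sum _ fun i ↦ by positivity
      _ ≤ _ := Real.exp_le_exp.2 (hgeo.sum_le_tsum _ fun i _ ↦ by positivity)
  have hC0 : 0 ≤ C := (norm_nonneg _).trans (hC 0 0)
  have hb : ∀ k n : ℕ,
      ‖q ^ ((k + 1) * n) * ∏ i ∈ Finset.range (n + 1), (1 - q ^ (k + i + 1))‖ ≤ ‖q‖ ^ n * C := by
    intro k n
    rw [norm_mul, norm_pow]
    exact mul_le_mul (pow_le_pow_of_le_one hr0 hq.le (by nlinarith)) (hC k n)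
      (norm_nonneg _) (by positivity)
  have hZ := (summable_norm_pent hq).of_norm
  have hZ' : HasSum (fun k : ℤ ↦ ((sg (-k) : ℤ) : ℂ) * q ^ pentagonal (-k))
      (∑' k : ℤ, ((sg k : ℤ) : ℂ) * q ^ pentagonal k) :=
    (Equiv.neg ℤ).hasSum_iff.2 hZ.hasSum
  have hterm : ∀ k : ℕ, ((sg (-(k : ℤ)) : ℤ) : ℂ) * q ^ pentagonal (-(k : ℤ)) +
      ((sg (-(-((k : ℤ) + 1))) : ℤ) : ℂ) * q ^ pentagonal (-(-((k : ℤ) + 1))) =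
      (-1) ^ k * (q ^ pentagonal (-k) - q ^ pentagonal (k + 1)) := by
    intro k
    have h1 : sg (-(k : ℤ)) = sg (k : ℤ) := by simp [sg]
    have h2 : sg (-(-((k : ℤ) + 1))) = - sg (k : ℤ) := by
      simp only [sg, neg_neg, Int.even_add_one]; split_ifs <;> simp_all
    rw [h1, h2, neg_neg]
    push_cast
    rw [sg_natCast]; ring
  have hN := hZ'.nat_add_neg_add_one
  simp_rw [hterm] at hN
  rw [← hN.tsum_eq]
  refine Pentagonal.tprod_one_sub_pow ?_ (fun k ↦ ?_) (fun k ↦ ?_) hN.summable ?_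
  · exact tendsto_pow_atTop_nhds_zero_of_norm_lt_one hq
  · exact Summable.of_norm_bounded (hgeo.mul_right C) (hb k)
  · simp_rw [sub_eq_add_neg]
    refine multipliable_one_add_of_summable ?_
    simp_rw [norm_neg, norm_pow]
    exact ((summable_nat_add_iff (k + 1)).2 hgeo)
  · have hz : Tendsto (fun k : ℕ ↦ ‖q‖ ^ k * ∑' n, ‖q‖ ^ n * C) atTop (𝓝 0) := by
      simpa using (tendsto_pow_atTop_nhds_zero_of_lt_one hr0 hq).mul_const (∑' n, ‖q‖ ^ n * C)
    refine squeeze_zero_norm (fun k ↦ ?_) hz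
    rw [norm_mul, norm_mul, norm_pow, norm_neg, norm_one, one_pow, one_mul, norm_pow]
    refine mul_le_mul (pow_le_pow_of_le_one hr0 hq.le ?_)
      (tsum_of_norm_bounded (hgeo.mul_right C).hasSum (hb k)) (norm_nonneg _) (by positivity)
    rw [Nat.le_div_iff_mul_le (by norm_num)]
    nlinarith

/-- The exponent in the expansion of `q ∏ (1-q^{2k})(1-q^{4k})(1-q^{6k})(1-q^{12k})` attached to
four summation indices of the pentagonal number theorem. -/
def pexp (p : (ℤ × ℤ) × (ℤ × ℤ)) : ℕ :=
  1 + (2 * pentagonal p.1.1 + 4 * pentagonal p.1.2 +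
    (6 * pentagonal p.2.1 + 12 * pentagonal p.2.2))

/-- The sign attached to four summation indices of the pentagonal number theorem. -/
def psg (p : (ℤ × ℤ) × (ℤ × ℤ)) : ℤ := sg p.1.1 * sg p.1.2 * (sg p.2.1 * sg p.2.2)

lemma tprod_ne_zero' {q : ℂ} (hq : ‖q‖ < 1) : ∏' n : ℕ, (1 - q ^ (n + 1)) ≠ 0 := by
  simp_rw [sub_eq_add_neg]
  refine tprod_one_add_ne_zero_of_summable (f := fun n ↦ -q ^ (n + 1)) (fun n h ↦ ?_) ?_
  · have h1 : q ^ (n + 1) = 1 := by linear_combination -h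
    have h2 : ‖q‖ ^ (n + 1) = 1 := by rw [← norm_pow, h1, norm_one]
    exact (pow_lt_one₀ (norm_nonneg _) hq (by omega)).ne h2
  · simp_rw [norm_neg, norm_pow]
    exact (summable_nat_add_iff 1).2 (summable_geometric_of_lt_one (norm_nonneg q) hq)

lemma tprod_four {q : ℂ} (hq : ‖q‖ < 1) :
    ∏' k : ℕ, ((1 - q ^ (2 * (k + 1))) * (1 - q ^ (4 * (k + 1))) *
          (1 - q ^ (6 * (k + 1))) * (1 - q ^ (12 * (k + 1)))) =
    ((∏' k : ℕ, (1 - (q ^ 2) ^ (k + 1))) * (∏' k : ℕ, (1 - (q ^ 4) ^ (k + 1)))) *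
    ((∏' k : ℕ, (1 - (q ^ 6) ^ (k + 1))) * (∏' k : ℕ, (1 - (q ^ 12) ^ (k + 1)))) := by
  have hp : ∀ j : ℕ, j ≠ 0 → ‖q ^ j‖ < 1 := fun j hj ↦ by
    rw [norm_pow]; exact pow_lt_one₀ (norm_nonneg _) hq hj
  have hm : ∀ j : ℕ, j ≠ 0 → Multipliable fun k : ℕ ↦ 1 - (q ^ j) ^ (k + 1) := fun j hj ↦
    ModularForm.multipliable_one_sub_pow (hp j hj)
  simp_rw [pow_mul]
  rw [((((hm 2 (by simp)).mul (hm 4 (by simp))).mul (hm 6 (by simp))).tprod_mul (hm 12 (by simp))),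
    (((hm 2 (by simp)).mul (hm 4 (by simp))).tprod_mul (hm 6 (by simp))),
    ((hm 2 (by simp)).tprod_mul (hm 4 (by simp)))]
  ring

lemma hasSum_four {q : ℂ} (hq : ‖q‖ < 1) :
    HasSum (fun p : (ℤ × ℤ) × (ℤ × ℤ) ↦ ((psg p : ℤ) : ℂ) * q ^ pexp p)
      (q * ∏' k : ℕ, ((1 - q ^ (2 * (k + 1))) * (1 - q ^ (4 * (k + 1))) *
          (1 - q ^ (6 * (k + 1))) * (1 - q ^ (12 * (k + 1))))) := by
  have hp : ∀ j : ℕ, j ≠ 0 → ‖q ^ j‖ < 1 := fun j hj ↦ by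
    rw [norm_pow]; exact pow_lt_one₀ (norm_nonneg _) hq hj
  have hs := fun j hj ↦ summable_norm_pent (hp j hj)
  have h1 := (hs 2 (by simp)).mul_norm (hs 4 (by simp))
  have h2 := (hs 6 (by simp)).mul_norm (hs 12 (by simp))
  have h := (h1.mul_norm h2).of_norm.hasSum.mul_left q
  rw [← tsum_mul_tsum_of_summable_norm h1 h2,
    ← tsum_mul_tsum_of_summable_norm (hs 2 (by simp)) (hs 4 (by simp)),
    ← tsum_mul_tsum_of_summable_norm (hs 6 (by simp)) (hs 12 (by simp)),
    ← tprod_pent (hp 2 (by simp)), ← tprod_pent (hp 4 (by simp)),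
    ← tprod_pent (hp 6 (by simp)), ← tprod_pent (hp 12 (by simp)), ← tprod_four hq] at h
  refine h.congr_fun fun p ↦ ?_
  simp only [psg, pexp, Int.cast_mul, pow_add, pow_mul, pow_one]
  ring

open Filter Topology in
/-- The hypothesis on `a` identifies two power series on the unit disc, so that `a m` is the finite
sum of the signs of the indices with exponent `m`. -/
lemma coeff_eq_sum (a : ℕ → ℤ)
    (ha : ∀ q : ℂ, ‖q‖ < 1 →
      ∑' k : ℕ, (a k : ℂ) * q ^ k =
        q * ∏' k : ℕ, ((1 - q ^ (2 * (k + 1))) * (1 - q ^ (4 * (k + 1))) *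
          (1 - q ^ (6 * (k + 1))) * (1 - q ^ (12 * (k + 1)))))
    (m : ℕ) (F : Finset ((ℤ × ℤ) × (ℤ × ℤ))) (hF : ∀ p, p ∈ F ↔ pexp p = m) :
    a m = ∑ p ∈ F, psg p := by
  set P : ℂ → ℂ := fun q ↦ q * ∏' k : ℕ, ((1 - q ^ (2 * (k + 1))) * (1 - q ^ (4 * (k + 1))) *
          (1 - q ^ (6 * (k + 1))) * (1 - q ^ (12 * (k + 1)))) with hP
  have hev : ∀ᶠ q : ℂ in 𝓝 0, ‖q‖ < 1 := by
    filter_upwards [Metric.ball_mem_nhds (0 : ℂ) one_pos] with q hq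
    simpa using hq
  -- a divergent series would have the junk sum `0`, but the product does not vanish for `q ≠ 0`
  have hs1 : ∀ q : ℂ, ‖q‖ < 1 → HasSum (fun k : ℕ ↦ q ^ k • (a k : ℂ)) (P q) := by
    intro q hq
    have hsum : Summable fun k : ℕ ↦ (a k : ℂ) * q ^ k := by
      by_cases hq0 : q = 0
      · subst hq0
        refine summable_of_ne_finset_zero (s := {0}) fun k hk ↦ ?_
        have : k ≠ 0 := by simpa using hk
        simp [this]
      · by_contra hns
        have h0 := ha q hq
        rw [tsum_eq_zero_of_not_summable hns, tprod_four hq] at h0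
        have hp : ∀ j : ℕ, j ≠ 0 → ∏' n : ℕ, (1 - (q ^ j) ^ (n + 1)) ≠ 0 := fun j hj ↦ by
          apply tprod_ne_zero'; rw [norm_pow]; exact pow_lt_one₀ (norm_nonneg _) hq hj
        exact mul_ne_zero hq0 (mul_ne_zero (mul_ne_zero (hp 2 (by simp)) (hp 4 (by simp)))
          (mul_ne_zero (hp 6 (by simp)) (hp 12 (by simp)))) h0.symm
    have := hsum.hasSum
    rw [ha q hq] at this
    exact this.congr_fun fun k ↦ by rw [smul_eq_mul, mul_comm]
  have hs2 : ∀ q : ℂ, ‖q‖ < 1 → HasSum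
      (fun k : ℕ ↦ q ^ k • ∑' p : pexp ⁻¹' {k}, ((psg p : ℤ) : ℂ)) (P q) := by
    intro q hq
    have := (hasSum_four hq).tsum_fiberwise pexp
    refine this.congr_fun fun k ↦ ?_
    rw [smul_eq_mul, ← tsum_mul_left]
    refine tsum_congr fun p ↦ ?_
    have : pexp p = k := p.2
    rw [this, mul_comm]
  have hu := HasFPowerSeriesAt.eq_formalMultilinearSeries
    (p₁ := FormalMultilinearSeries.ofScalars ℂ fun k ↦ (a k : ℂ))
    (p₂ := FormalMultilinearSeries.ofScalars ℂ fun k ↦ ∑' p : pexp ⁻¹' {k}, ((psg p : ℤ) : ℂ))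
    (f := P) (x := 0)
    (hasFPowerSeriesAt_iff.2 (by
      filter_upwards [hev] with q hq
      simpa [FormalMultilinearSeries.coeff_ofScalars] using hs1 q hq))
    (hasFPowerSeriesAt_iff.2 (by
      filter_upwards [hev] with q hq
      simpa [FormalMultilinearSeries.coeff_ofScalars] using hs2 q hq))
  have hm := congrArg (fun s ↦ FormalMultilinearSeries.coeff s m) hu
  simp only [FormalMultilinearSeries.coeff_ofScalars] at hm
  have hset : pexp ⁻¹' {m} = (F : Set _) := by ext p; simp [hF]
  rw [hset, Finset.tsum_subtype' F (fun p ↦ ((psg p : ℤ) : ℂ))] at hm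
  exact_mod_cast hm

/-! ### Sums over binary forms of a given discriminant -/

/-- The triples `(x, d, e)` with `d, e > 0` and `x² + 4de = M`, that is, the binary quadratic forms
`d T² + x T - e` of discriminant `M` with `d, e > 0`. -/
noncomputable def forms (M : ℤ) : Finset (ℤ × ℤ × ℤ) :=
  (Finset.Icc (-M) M ×ˢ Finset.Icc (-M) M ×ˢ Finset.Icc (-M) M).filter
    fun p ↦ 0 < p.2.1 ∧ 0 < p.2.2 ∧ p.1 ^ 2 + 4 * p.2.1 * p.2.2 = M

lemma mem_forms {M x d e : ℤ} :
    (x, d, e) ∈ forms M ↔ 0 < d ∧ 0 < e ∧ x ^ 2 + 4 * d * e = M := by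
  simp only [forms, Finset.mem_filter, Finset.mem_product, Finset.mem_Icc, and_iff_right_iff_imp]
  rintro ⟨hd, he, h⟩
  have h1 : d ≤ d * e := by nlinarith
  have h2 : e ≤ d * e := by nlinarith
  have h3 := sq_nonneg x
  have h4 : x ≤ x ^ 2 := Int.le_self_sq x
  have h5 : -x ≤ x ^ 2 := by simpa using Int.le_self_sq (-x)
  refine ⟨⟨?_, ?_⟩, ⟨?_, ?_⟩, ?_, ?_⟩ <;> nlinarith

/-- A sum over the forms of non-square discriminant `M` folds onto those with negative value
at `1`, because `[d, x, -e] ↦ [e, -x, -d]` changes the sign of that value. -/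
lemma sum_forms_fold {M : ℤ} (hM : ¬ IsSquare M) (f : ℤ → ℤ → ℤ → ℤ) :
    ∑ p ∈ forms M, f p.1 p.2.1 p.2.2 =
      ∑ p ∈ (forms M).filter (fun p ↦ p.2.1 + p.1 < p.2.2),
        (f p.1 p.2.1 p.2.2 + f (-p.1) p.2.2 p.2.1) := by
  rw [← Finset.sum_filter_add_sum_filter_not _ (fun p : ℤ × ℤ × ℤ ↦ p.2.1 + p.1 < p.2.2),
    Finset.sum_add_distrib]
  congr 1
  refine Finset.sum_nbij' (fun p ↦ (-p.1, p.2.2, p.2.1)) (fun p ↦ (-p.1, p.2.2, p.2.1)) ?_ ?_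
    (by simp) (by simp) (by simp)
  · rintro ⟨x, d, e⟩ h
    simp only [Finset.mem_filter, mem_forms, not_lt] at h ⊢
    obtain ⟨⟨hd, he, h⟩, hle⟩ := h
    refine ⟨⟨he, hd, by linear_combination h⟩, ?_⟩
    have : e ≠ d + x := by
      rintro rfl
      exact hM ⟨x + 2 * d, by linear_combination -h⟩
    omega
  · rintro ⟨x, d, e⟩ h
    simp only [Finset.mem_filter, mem_forms, not_lt] at h ⊢
    obtain ⟨⟨hd, he, h⟩, hle⟩ := h
    exact ⟨⟨he, hd, by linear_combination h⟩, by omega⟩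

/-- The substitution `T ↦ 1 - T` permutes the forms with negative values at `0` and `1`. -/
lemma sum_forms_shift (M : ℤ) (f : ℤ → ℤ → ℤ → ℤ) :
    ∑ p ∈ (forms M).filter (fun p ↦ p.2.1 + p.1 < p.2.2), f p.1 p.2.1 p.2.2 =
      ∑ p ∈ (forms M).filter (fun p ↦ p.2.1 + p.1 < p.2.2),
        f (-p.1 - 2 * p.2.1) p.2.1 (p.2.2 - p.2.1 - p.1) := by
  have key : ∀ p ∈ (forms M).filter (fun p ↦ p.2.1 + p.1 < p.2.2),
      (-p.1 - 2 * p.2.1, p.2.1, p.2.2 - p.2.1 - p.1) ∈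
        (forms M).filter (fun p ↦ p.2.1 + p.1 < p.2.2) := by
    rintro ⟨x, d, e⟩ h
    simp only [Finset.mem_filter, mem_forms] at h ⊢
    obtain ⟨⟨hd, he, h⟩, hlt⟩ := h
    exact ⟨⟨hd, by omega, by linear_combination h⟩, by omega⟩
  refine Finset.sum_nbij' (fun p ↦ (-p.1 - 2 * p.2.1, p.2.1, p.2.2 - p.2.1 - p.1))
    (fun p ↦ (-p.1 - 2 * p.2.1, p.2.1, p.2.2 - p.2.1 - p.1)) key key ?_ ?_ ?_
  · rintro ⟨x, d, e⟩ _
    ext <;> simp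
    ring
  · rintro ⟨x, d, e⟩ _
    ext <;> simp
    ring
  · rintro ⟨x, d, e⟩ _
    dsimp only
    congr 1 <;> ring

lemma sum_forms_odd (M : ℤ) : ∑ p ∈ forms M, p.2.1 ^ 2 * p.1 = 0 := by
  have : ∑ p ∈ forms M, p.2.1 ^ 2 * p.1 = ∑ p ∈ forms M, -(p.2.1 ^ 2 * p.1) := by
    refine Finset.sum_nbij' (fun p ↦ (-p.1, p.2)) (fun p ↦ (-p.1, p.2)) ?_ ?_
      (by simp) (by simp) (by simp)
    all_goals
      rintro ⟨x, d, e⟩ h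
      simpa [mem_forms] using h
  rw [Finset.sum_neg_distrib] at this
  omega

/-- The weight `d (d e - x²)` sums to zero over the forms of a non-square discriminant. After
folding, the weight becomes `(d + e)(d e - x²)`, whose symmetrisation under `T ↦ 1 - T` agrees with
that of `(d² - e²) x`; the latter is the folded form of a weight that is odd in `x`. -/
lemma sum_forms_eq_zero {M : ℤ} (hM : ¬ IsSquare M) :
    ∑ p ∈ forms M, p.2.1 * (p.2.1 * p.2.2 - p.1 ^ 2) = 0 := by
  have h1 := sum_forms_fold hM (fun x d e ↦ d * (d * e - x ^ 2))
  have h2 := sum_forms_fold hM (fun x d e ↦ d ^ 2 * x)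
  have h3 := sum_forms_shift M
    (fun x d e ↦ d * (d * e - x ^ 2) + e * (e * d - (-x) ^ 2) - (d ^ 2 * x + e ^ 2 * (-x)))
  have h4 : ∑ p ∈ (forms M).filter (fun p ↦ p.2.1 + p.1 < p.2.2),
      (p.2.1 * (p.2.1 * p.2.2 - p.1 ^ 2) + p.2.2 * (p.2.2 * p.2.1 - (-p.1) ^ 2)
        - (p.2.1 ^ 2 * p.1 + p.2.2 ^ 2 * (-p.1))) = 0 := by
    refine self_eq_neg.1 (h3.trans ?_)
    rw [← Finset.sum_neg_distrib]
    exact Finset.sum_congr rfl fun p _ ↦ by ring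
  rw [sum_forms_odd] at h2
  rw [Finset.sum_sub_distrib, ← h1, ← h2] at h4
  simpa using h4

/-! ### Four odd squares -/

/-- The quadruples of odd integers whose squares sum to `k`. -/
noncomputable def oddQuads (k : ℤ) : Finset (ℤ × ℤ × ℤ × ℤ) :=
  (Finset.Icc (-k) k ×ˢ Finset.Icc (-k) k ×ˢ Finset.Icc (-k) k ×ˢ Finset.Icc (-k) k).filter
    fun p ↦ (Odd p.1 ∧ Odd p.2.1 ∧ Odd p.2.2.1 ∧ Odd p.2.2.2) ∧
      p.1 ^ 2 + p.2.1 ^ 2 + p.2.2.1 ^ 2 + p.2.2.2 ^ 2 = k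

lemma abs_bound {x k : ℤ} (h : x ^ 2 ≤ k) : -k ≤ x ∧ x ≤ k := by
  have h4 : x ≤ x ^ 2 := Int.le_self_sq x
  have h5 : -x ≤ x ^ 2 := by simpa using Int.le_self_sq (-x)
  omega

lemma mem_oddQuads {k x y z w : ℤ} :
    (x, y, z, w) ∈ oddQuads k ↔
      (Odd x ∧ Odd y ∧ Odd z ∧ Odd w) ∧ x ^ 2 + y ^ 2 + z ^ 2 + w ^ 2 = k := by
  simp only [oddQuads, Finset.mem_filter, Finset.mem_product, Finset.mem_Icc,
    and_iff_right_iff_imp]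
  rintro ⟨-, h⟩
  have := sq_nonneg x
  have := sq_nonneg y
  have := sq_nonneg z
  have := sq_nonneg w
  exact ⟨abs_bound (by linarith), abs_bound (by linarith), abs_bound (by linarith),
    abs_bound (by linarith)⟩

/-- The pairs of positive integers with `4de = k`. -/
noncomputable def divPairs (k : ℤ) : Finset (ℤ × ℤ) :=
  (Finset.Icc (-k) k ×ˢ Finset.Icc (-k) k).filter fun p ↦ 0 < p.1 ∧ 0 < p.2 ∧ 4 * p.1 * p.2 = k

lemma mem_divPairs {k d e : ℤ} : (d, e) ∈ divPairs k ↔ 0 < d ∧ 0 < e ∧ 4 * d * e = k := by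
  simp only [divPairs, Finset.mem_filter, Finset.mem_product, Finset.mem_Icc,
    and_iff_right_iff_imp]
  rintro ⟨hd, he, h⟩
  have h1 : d ≤ d * e := by nlinarith
  have h2 : e ≤ d * e := by nlinarith
  refine ⟨⟨?_, ?_⟩, ?_, ?_⟩ <;> nlinarith

/-- The odd integers in `[-M, M]`. -/
noncomputable def oddRange (M : ℤ) : Finset ℤ := (Finset.Icc (-M) M).filter Odd

lemma mem_oddRange {M x : ℤ} : x ∈ oddRange M ↔ (-M ≤ x ∧ x ≤ M) ∧ Odd x := by
  simp [oddRange]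

/-- Recursion for representations by four odd squares: in a sum of five odd squares equal to
`M`, each square has the same average. -/
lemma oddQuads_recursion (M : ℤ) :
    ∑ x ∈ oddRange M, (M - 5 * x ^ 2) * ((oddQuads (M - x ^ 2)).card : ℤ) = 0 := by
  set V := (oddRange M).sigma fun x ↦ oddQuads (M - x ^ 2) with hV
  have hmem : ∀ x y z w v : ℤ, (⟨x, y, z, w, v⟩ : Σ _ : ℤ, ℤ × ℤ × ℤ × ℤ) ∈ V ↔
      (Odd x ∧ Odd y ∧ Odd z ∧ Odd w ∧ Odd v) ∧
        x ^ 2 + y ^ 2 + z ^ 2 + w ^ 2 + v ^ 2 = M := by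
    intro x y z w v
    simp only [hV, Finset.mem_sigma, mem_oddRange, mem_oddQuads]
    constructor
    · rintro ⟨⟨-, hx⟩, h, h'⟩
      exact ⟨⟨hx, h⟩, by linarith⟩
    · rintro ⟨⟨hx, h⟩, h'⟩
      have := sq_nonneg y
      have := sq_nonneg z
      have := sq_nonneg w
      have := sq_nonneg v
      exact ⟨⟨abs_bound (by linarith), hx⟩, h, by linarith⟩
  have e1 : ∑ p ∈ V, p.1 ^ 2 = ∑ p ∈ V, p.2.1 ^ 2 := by
    refine Finset.sum_nbij' (fun p ↦ ⟨p.2.1, p.1, p.2.2⟩) (fun p ↦ ⟨p.2.1, p.1, p.2.2⟩) ?_ ?_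
      (by simp) (by simp) (by simp)
    all_goals
      rintro ⟨x, y, z, w, v⟩ h
      rw [hmem] at h ⊢
      exact ⟨by tauto, by linarith [h.2]⟩
  have e2 : ∑ p ∈ V, p.1 ^ 2 = ∑ p ∈ V, p.2.2.1 ^ 2 := by
    refine Finset.sum_nbij' (fun p ↦ ⟨p.2.2.1, p.2.1, p.1, p.2.2.2⟩)
      (fun p ↦ ⟨p.2.2.1, p.2.1, p.1, p.2.2.2⟩) ?_ ?_ (by simp) (by simp) (by simp)
    all_goals
      rintro ⟨x, y, z, w, v⟩ h
      rw [hmem] at h ⊢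
      exact ⟨by tauto, by linarith [h.2]⟩
  have e3 : ∑ p ∈ V, p.1 ^ 2 = ∑ p ∈ V, p.2.2.2.1 ^ 2 := by
    refine Finset.sum_nbij' (fun p ↦ ⟨p.2.2.2.1, p.2.1, p.2.2.1, p.1, p.2.2.2.2⟩)
      (fun p ↦ ⟨p.2.2.2.1, p.2.1, p.2.2.1, p.1, p.2.2.2.2⟩) ?_ ?_ (by simp) (by simp) (by simp)
    all_goals
      rintro ⟨x, y, z, w, v⟩ h
      rw [hmem] at h ⊢
      exact ⟨by tauto, by linarith [h.2]⟩
  have e4 : ∑ p ∈ V, p.1 ^ 2 = ∑ p ∈ V, p.2.2.2.2 ^ 2 := by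
    refine Finset.sum_nbij' (fun p ↦ ⟨p.2.2.2.2, p.2.1, p.2.2.1, p.2.2.2.1, p.1⟩)
      (fun p ↦ ⟨p.2.2.2.2, p.2.1, p.2.2.1, p.2.2.2.1, p.1⟩) ?_ ?_ (by simp) (by simp) (by simp)
    all_goals
      rintro ⟨x, y, z, w, v⟩ h
      rw [hmem] at h ⊢
      exact ⟨by tauto, by linarith [h.2]⟩
  calc ∑ x ∈ oddRange M, (M - 5 * x ^ 2) * ((oddQuads (M - x ^ 2)).card : ℤ)
      = ∑ p ∈ V, (M - 5 * p.1 ^ 2) := by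
        rw [hV, Finset.sum_sigma]
        refine Finset.sum_congr rfl fun x _ ↦ ?_
        dsimp only
        rw [Finset.sum_const, nsmul_eq_mul, mul_comm]
    _ = ∑ p ∈ V, ((p.2.1 ^ 2 - p.1 ^ 2) + (p.2.2.1 ^ 2 - p.1 ^ 2) + (p.2.2.2.1 ^ 2 - p.1 ^ 2)
          + (p.2.2.2.2 ^ 2 - p.1 ^ 2)) := by
        refine Finset.sum_congr rfl ?_
        rintro ⟨x, y, z, w, v⟩ h
        rw [hmem] at h
        linear_combination -h.2
    _ = 0 := by
        simp only [Finset.sum_add_distrib, Finset.sum_sub_distrib]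
        linarith

/-- The divisor sums satisfy the recursion of `oddQuads_recursion`. -/
lemma divPairs_recursion {M : ℤ} (hM : M % 8 = 5) :
    ∑ x ∈ oddRange M, (M - 5 * x ^ 2) * ∑ p ∈ divPairs (M - x ^ 2), p.1 = 0 := by
  have hsq : ¬ IsSquare M := by
    rintro ⟨r, rfl⟩
    have : r % 8 = 0 ∨ r % 8 = 1 ∨ r % 8 = 2 ∨ r % 8 = 3 ∨ r % 8 = 4 ∨ r % 8 = 5 ∨ r % 8 = 6 ∨
      r % 8 = 7 := by omega
    rcases this with h | h | h | h | h | h | h | h <;> simp [Int.mul_emod, h] at hM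
  have h0 := congrArg (4 * ·) (sum_forms_eq_zero hsq)
  simp only [mul_zero] at h0
  rw [← h0]
  simp_rw [Finset.mul_sum]
  rw [Finset.sum_sigma']
  refine Finset.sum_nbij' (fun p ↦ (p.1, p.2)) (fun p ↦ ⟨p.1, p.2⟩) ?_ ?_ (by simp) (by simp) ?_
  · rintro ⟨x, d, e⟩ h
    simp only [Finset.mem_sigma, mem_divPairs, mem_forms] at h ⊢
    exact ⟨h.2.1, h.2.2.1, by linarith [h.2.2.2]⟩
  · rintro ⟨x, d, e⟩ h
    simp only [Finset.mem_sigma, mem_divPairs, mem_forms, mem_oddRange] at h ⊢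
    obtain ⟨hd, he, h⟩ := h
    have hde : 0 < d * e := by positivity
    refine ⟨⟨abs_bound (by nlinarith), ?_⟩, hd, he, by linarith⟩
    by_contra hx
    rw [Int.not_odd_iff_even] at hx
    obtain ⟨r, rfl⟩ := hx
    have : M = 4 * (r ^ 2 + d * e) := by linear_combination -h
    omega
  · rintro ⟨x, d, e⟩ h
    simp only [Finset.mem_sigma, mem_divPairs] at h ⊢
    linear_combination (-d) * h.2.2.2

lemma odd_sq_mod {x : ℤ} (h : Odd x) : x ^ 2 % 8 = 1 := by
  obtain ⟨r, rfl⟩ := h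
  obtain ⟨s, hs⟩ := Int.even_mul_succ_self r
  have : (2 * r + 1) ^ 2 = 8 * s + 1 := by linear_combination 4 * hs
  omega

lemma one_le_sq_of_odd {x : ℤ} (h : Odd x) : 1 ≤ x ^ 2 := by
  have := odd_sq_mod h
  have := sq_nonneg x
  omega

lemma eq_one_or_of_sq_lt {x : ℤ} (h : Odd x) (h' : x ^ 2 < 9) : x = 1 ∨ x = -1 := by
  obtain ⟨r, rfl⟩ := h
  have h1 : r < 1 := by nlinarith
  have h2 : -2 < r := by nlinarith
  omega

lemma card_oddQuads_four : (oddQuads 4).card = 16 := by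
  have : oddQuads 4 = ({1, -1} : Finset ℤ) ×ˢ ({1, -1} : Finset ℤ) ×ˢ ({1, -1} : Finset ℤ) ×ˢ
      ({1, -1} : Finset ℤ) := by
    ext ⟨x, y, z, w⟩
    simp only [mem_oddQuads, Finset.mem_product, Finset.mem_insert, Finset.mem_singleton]
    constructor
    · rintro ⟨⟨hx, hy, hz, hw⟩, h⟩
      have := one_le_sq_of_odd hx
      have := one_le_sq_of_odd hy
      have := one_le_sq_of_odd hz
      have := one_le_sq_of_odd hw
      exact ⟨eq_one_or_of_sq_lt hx (by linarith), eq_one_or_of_sq_lt hy (by linarith),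
        eq_one_or_of_sq_lt hz (by linarith), eq_one_or_of_sq_lt hw (by linarith)⟩
    · rintro ⟨rfl | rfl, rfl | rfl, rfl | rfl, rfl | rfl⟩ <;> decide
  rw [this]; rfl

/-- **Jacobi's theorem** on sums of four odd squares. -/
lemma card_oddQuads (k : ℕ) (hk : k % 8 = 4) :
    ((oddQuads k).card : ℤ) = 16 * ∑ p ∈ divPairs k, p.1 := by
  induction k using Nat.strong_induction_on with
  | _ k ih =>
  by_cases hk4 : k = 4
  · subst hk4
    rw [show ((4 : ℕ) : ℤ) = 4 from rfl, card_oddQuads_four]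
    rfl
  set M : ℤ := k + 1 with hM
  have h1 := oddQuads_recursion M
  have h2 := divPairs_recursion (M := M) (by omega)
  have h3 : ∑ x ∈ oddRange M, (M - 5 * x ^ 2) *
      (((oddQuads (M - x ^ 2)).card : ℤ) - 16 * ∑ p ∈ divPairs (M - x ^ 2), p.1) = 0 := by
    simp_rw [mul_sub, Finset.sum_sub_distrib, h1, mul_left_comm _ (16 : ℤ), ← Finset.mul_sum, h2]
    simp
  -- only the terms `x = 1` and `x = -1` are not covered by the induction hypothesis
  rw [← Finset.sum_subset (s₁ := {1, -1})] at h3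
  · rw [Finset.sum_pair (by norm_num)] at h3
    have e1 : M - 1 ^ 2 = k := by rw [hM]; ring
    have e2 : M - (-1) ^ 2 = k := by rw [hM]; ring
    rw [e1, e2] at h3
    have h5 : (2 * (M - 5)) * (((oddQuads k).card : ℤ) - 16 * ∑ p ∈ divPairs k, p.1) = 0 := by
      linear_combination h3
    rcases mul_eq_zero.1 h5 with h | h
    · omega
    · linarith
  · intro x hx
    simp only [Finset.mem_insert, Finset.mem_singleton] at hx
    rw [mem_oddRange]
    rcases hx with rfl | rfl
    · exact ⟨by omega, by decide⟩
    · exact ⟨by omega, by decide⟩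
  · intro x hx hx'
    rw [mem_oddRange] at hx
    have hx9 : ¬ x ^ 2 < 9 := fun h ↦ hx' (by simpa using eq_one_or_of_sq_lt hx.2 h)
    have hmod := odd_sq_mod hx.2
    by_cases hpos : 0 < M - x ^ 2
    · obtain ⟨j, hj⟩ := Int.eq_ofNat_of_zero_le hpos.le
      rw [hj, ih j (by omega) (by omega), sub_self, mul_zero]
    · have z1 : oddQuads (M - x ^ 2) = ∅ := by
        rw [Finset.eq_empty_iff_forall_notMem]
        rintro ⟨a, b, c, d⟩ h
        rw [mem_oddQuads] at h
        have := one_le_sq_of_odd h.1.1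
        have := sq_nonneg b
        have := sq_nonneg c
        have := sq_nonneg d
        linarith [h.2]
      have z2 : divPairs (M - x ^ 2) = ∅ := by
        rw [Finset.eq_empty_iff_forall_notMem]
        rintro ⟨a, b⟩ h
        rw [mem_divPairs] at h
        have : 0 < a * b := mul_pos h.1 h.2.1
        linarith [h.2.2]
      simp [z1, z2]

lemma sum_divPairs (m : ℕ) (hm : 0 < m) :
    ∑ p ∈ divPairs ((4 * m : ℕ) : ℤ), p.1 = ∑ d ∈ m.divisors, (d : ℤ) := by
  rw [← Nat.sum_divisorsAntidiagonal (fun d _ ↦ (d : ℤ))]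
  refine Finset.sum_nbij' (fun p ↦ (p.1.toNat, p.2.toNat)) (fun p ↦ ((p.1 : ℤ), (p.2 : ℤ)))
    ?_ ?_ ?_ ?_ ?_
  · rintro ⟨d, e⟩ h
    rw [mem_divPairs] at h
    rw [Nat.mem_divisorsAntidiagonal]
    refine ⟨?_, hm.ne'⟩
    zify
    rw [Int.toNat_of_nonneg h.1.le, Int.toNat_of_nonneg h.2.1.le]
    have := h.2.2
    push_cast at this
    linarith
  · rintro ⟨d, e⟩ h
    rw [Nat.mem_divisorsAntidiagonal] at h
    rw [mem_divPairs]
    obtain ⟨h, h0⟩ := h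
    have hd : d ≠ 0 := by rintro rfl; simp at h; omega
    have he : e ≠ 0 := by rintro rfl; simp at h; omega
    refine ⟨by positivity, by positivity, ?_⟩
    dsimp only at h
    rw [← h]; push_cast; ring
  · rintro ⟨d, e⟩ h
    rw [mem_divPairs] at h
    simp [h.1.le, h.2.1.le]
  · rintro ⟨d, e⟩ h
    simp
  · rintro ⟨d, e⟩ h
    rw [mem_divPairs] at h
    simp [h.1.le]

lemma card_oddQuads_sigma (m : ℕ) (hm : Odd m) :
    ((oddQuads ((4 * m : ℕ) : ℤ)).card : ℤ) = 16 * ∑ d ∈ m.divisors, (d : ℤ) := by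
  rw [card_oddQuads _ (by have := Nat.odd_iff.1 hm; omega), sum_divPairs m hm.pos]

/-! ### Four odd squares with a congruence modulo three -/

/-- The representations of `k` by four odd squares `x² + y² + z² + w²` with `3 ∣ x + y + z`. -/
noncomputable def triQuads (k : ℤ) : Finset (ℤ × ℤ × ℤ × ℤ) :=
  (oddQuads k).filter fun p ↦ (3 : ℤ) ∣ p.1 + p.2.1 + p.2.2.1

/-- The indicator of divisibility by `3`. -/
def ind3 (a : ℤ) : ℤ := if (3 : ℤ) ∣ a then 1 else 0

lemma sum_ind3_signs (k : ℤ) {e f : ℤ} (he : e = 1 ∨ e = -1) (hf : f = 1 ∨ f = -1) :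
    ∑ p ∈ oddQuads k, ind3 (p.1 + e * p.2.1 + f * p.2.2.1) = (triQuads k).card := by
  rw [triQuads, Finset.card_filter]
  push_cast
  refine Finset.sum_nbij' (fun p ↦ (p.1, e * p.2.1, f * p.2.2.1, p.2.2.2))
    (fun p ↦ (p.1, e * p.2.1, f * p.2.2.1, p.2.2.2)) ?_ ?_ ?_ ?_ ?_
  · rintro ⟨x, y, z, w⟩ h
    rw [mem_oddQuads] at h ⊢
    rcases he with rfl | rfl <;> rcases hf with rfl | rfl <;> simpa using h
  · rintro ⟨x, y, z, w⟩ h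
    rw [mem_oddQuads] at h ⊢
    rcases he with rfl | rfl <;> rcases hf with rfl | rfl <;> simpa using h
  · rintro ⟨x, y, z, w⟩ h
    rcases he with rfl | rfl <;> rcases hf with rfl | rfl <;> simp
  · rintro ⟨x, y, z, w⟩ h
    rcases he with rfl | rfl <;> rcases hf with rfl | rfl <;> simp
  · rintro ⟨x, y, z, w⟩ h
    simp [ind3]

/-- `oddQuads k` is stable under the transpositions that move the last coordinate. -/
lemma sum_oddQuads_swap (k : ℤ) (g : ℤ → ℤ → ℤ → ℤ) :
    ∑ p ∈ oddQuads k, g p.2.2.2 p.2.1 p.2.2.1 = ∑ p ∈ oddQuads k, g p.1 p.2.1 p.2.2.1 ∧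
    ∑ p ∈ oddQuads k, g p.1 p.2.2.2 p.2.2.1 = ∑ p ∈ oddQuads k, g p.1 p.2.1 p.2.2.1 ∧
    ∑ p ∈ oddQuads k, g p.1 p.2.1 p.2.2.2 = ∑ p ∈ oddQuads k, g p.1 p.2.1 p.2.2.1 := by
  refine ⟨Finset.sum_nbij' (fun p ↦ (p.2.2.2, p.2.1, p.2.2.1, p.1))
    (fun p ↦ (p.2.2.2, p.2.1, p.2.2.1, p.1)) ?_ ?_ (by simp) (by simp) (by simp),
    Finset.sum_nbij' (fun p ↦ (p.1, p.2.2.2, p.2.2.1, p.2.1))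
    (fun p ↦ (p.1, p.2.2.2, p.2.2.1, p.2.1)) ?_ ?_ (by simp) (by simp) (by simp),
    Finset.sum_nbij' (fun p ↦ (p.1, p.2.1, p.2.2.2, p.2.2.1))
    (fun p ↦ (p.1, p.2.1, p.2.2.2, p.2.2.1)) ?_ ?_ (by simp) (by simp) (by simp)⟩ <;>
  · rintro ⟨x, y, z, w⟩ h
    rw [mem_oddQuads] at h ⊢
    exact ⟨⟨by tauto, by tauto, by tauto, by tauto⟩, by linarith [h.2]⟩

/-- The number of vectors `v` in a set of representatives up to sign of the non-zero isotropic
vectors of `𝔽₃⁴` (those with exactly one zero coordinate) that are orthogonal to `(x, y, z, w)`. -/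
lemma sum_ind3_isotropic (x y z w : ℤ) :
    ∑ e ∈ ({1, -1} : Finset ℤ), ∑ f ∈ ({1, -1} : Finset ℤ),
      (ind3 (x + e * y + f * z) + ind3 (w + e * y + f * z) +
        ind3 (x + e * w + f * z) + ind3 (x + e * y + f * w)) =
    4 + (if (3 : ℤ) ∣ x ^ 2 + y ^ 2 + z ^ 2 + w ^ 2 then 3 else 0) +
      (if (3 : ℤ) ∣ x ∧ (3 : ℤ) ∣ y ∧ (3 : ℤ) ∣ z ∧ (3 : ℤ) ∣ w then 9 else 0) := by
  have key : ∀ x y z w : ZMod 3,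
      ∑ e ∈ ({1, -1} : Finset ℤ), ∑ f ∈ ({1, -1} : Finset ℤ),
        ((if x + e * y + f * z = 0 then 1 else 0) + (if w + e * y + f * z = 0 then 1 else 0) +
        (if x + e * w + f * z = 0 then 1 else 0) +
        (if x + e * y + f * w = 0 then 1 else 0)) =
      (4 + (if x ^ 2 + y ^ 2 + z ^ 2 + w ^ 2 = 0 then 3 else 0) +
        (if x = 0 ∧ y = 0 ∧ z = 0 ∧ w = 0 then 9 else 0) : ℤ) := by decide
  have hd : ∀ a : ℤ, (3 : ℤ) ∣ a ↔ (a : ZMod 3) = 0 := fun a ↦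
    (ZMod.intCast_zmod_eq_zero_iff_dvd a 3).symm
  simp only [ind3, hd]
  push_cast
  exact key x y z w

/-- Double counting of the pairs formed by an element of `oddQuads k` and a non-zero isotropic
vector modulo `3`, up to sign, orthogonal to it. -/
lemma sixteen_mul_card_triQuads (k : ℤ) :
    16 * ((triQuads k).card : ℤ) =
      (4 + if (3 : ℤ) ∣ k then 3 else 0) * (oddQuads k).card +
      9 * ((oddQuads k).filter fun p ↦ (3 : ℤ) ∣ p.1 ∧ (3 : ℤ) ∣ p.2.1 ∧ (3 : ℤ) ∣ p.2.2.1 ∧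
        (3 : ℤ) ∣ p.2.2.2).card := by
  have h1 : ∑ e ∈ ({1, -1} : Finset ℤ), ∑ f ∈ ({1, -1} : Finset ℤ), ∑ p ∈ oddQuads k,
      (ind3 (p.1 + e * p.2.1 + f * p.2.2.1) + ind3 (p.2.2.2 + e * p.2.1 + f * p.2.2.1) +
        ind3 (p.1 + e * p.2.2.2 + f * p.2.2.1) + ind3 (p.1 + e * p.2.1 + f * p.2.2.2)) =
      16 * ((triQuads k).card : ℤ) := by
    have h2 : ∀ e ∈ ({1, -1} : Finset ℤ), ∀ f ∈ ({1, -1} : Finset ℤ), ∑ p ∈ oddQuads k,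
      (ind3 (p.1 + e * p.2.1 + f * p.2.2.1) + ind3 (p.2.2.2 + e * p.2.1 + f * p.2.2.1) +
        ind3 (p.1 + e * p.2.2.2 + f * p.2.2.1) + ind3 (p.1 + e * p.2.1 + f * p.2.2.2)) =
      4 * ((triQuads k).card : ℤ) := by
      intro e he f hf
      have := sum_ind3_signs k (by simpa using he) (by simpa using hf)
      obtain ⟨s1, s2, s3⟩ := sum_oddQuads_swap k fun x y z ↦ ind3 (x + e * y + f * z)
      simp only [Finset.sum_add_distrib]
      linarith
    rw [Finset.sum_congr rfl fun e he ↦ Finset.sum_congr rfl fun f hf ↦ h2 e he f hf]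
    simp
    ring
  rw [← h1, Finset.sum_congr rfl fun e _ ↦ Finset.sum_comm, Finset.sum_comm]
  have h3 : ∀ p ∈ oddQuads k, _ = _ := fun p _ ↦ sum_ind3_isotropic p.1 p.2.1 p.2.2.1 p.2.2.2
  rw [Finset.sum_congr rfl h3, Finset.sum_add_distrib]
  congr 1
  · rw [Finset.sum_congr rfl (g := fun _ ↦ 4 + if (3 : ℤ) ∣ k then (3 : ℤ) else 0)]
    · simp [mul_comm]
    · rintro ⟨x, y, z, w⟩ h
      rw [mem_oddQuads] at h
      simp only [h.2]
  · rw [Finset.card_filter, Nat.cast_sum, Finset.mul_sum]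
    simp

lemma card_oddQuads_dvd (k : ℤ) :
    ((oddQuads (9 * k)).filter fun p ↦ (3 : ℤ) ∣ p.1 ∧ (3 : ℤ) ∣ p.2.1 ∧ (3 : ℤ) ∣ p.2.2.1 ∧
        (3 : ℤ) ∣ p.2.2.2).card = (oddQuads k).card := by
  refine Finset.card_nbij' (fun p ↦ (p.1 / 3, p.2.1 / 3, p.2.2.1 / 3, p.2.2.2 / 3))
    (fun p ↦ (3 * p.1, 3 * p.2.1, 3 * p.2.2.1, 3 * p.2.2.2)) ?_ ?_ ?_ ?_
  · rintro ⟨x, y, z, w⟩ h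
    simp only [Finset.coe_filter, Set.mem_ofPred_eq, mem_oddQuads] at h
    obtain ⟨⟨h, h'⟩, ⟨x, rfl⟩, ⟨y, rfl⟩, ⟨z, rfl⟩, ⟨w, rfl⟩⟩ := h
    simp only [Finset.mem_coe]
    simp only [ne_eq, OfNat.ofNat_ne_zero, not_false_eq_true, Int.mul_ediv_cancel_left,
      mem_oddQuads]
    simp only [Int.odd_mul] at h
    exact ⟨by tauto, by linarith⟩
  · rintro ⟨x, y, z, w⟩ h
    simp only [Finset.mem_coe, mem_oddQuads] at h
    simp only [Finset.coe_filter, Set.mem_ofPred_eq, mem_oddQuads, dvd_mul_right, and_true]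
    have h3 : Odd (3 : ℤ) := by decide
    exact ⟨⟨h3.mul h.1.1, h3.mul h.1.2.1, h3.mul h.1.2.2.1, h3.mul h.1.2.2.2⟩,
      by linarith [h.2]⟩
  · rintro ⟨x, y, z, w⟩ h
    simp only [Finset.coe_filter, Set.mem_ofPred_eq] at h
    obtain ⟨_, ⟨x, rfl⟩, ⟨y, rfl⟩, ⟨z, rfl⟩, ⟨w, rfl⟩⟩ := h
    simp
  · rintro ⟨x, y, z, w⟩ h
    simp

lemma sum_divisors_three_pow_mul (β n₁ : ℕ) (h3 : ¬ 3 ∣ n₁) :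
    2 * ∑ d ∈ (3 ^ β * n₁).divisors, (d : ℤ) =
      (3 ^ (β + 1) - 1) * ∑ d ∈ n₁.divisors, (d : ℤ) := by
  have hc : Nat.Coprime (3 ^ β) n₁ :=
    Nat.Coprime.pow_left _ ((Nat.Prime.coprime_iff_not_dvd Nat.prime_three).2 h3)
  have h1 := hc.sum_divisors_mul
  have h2 : ((∑ d ∈ (3 ^ β).divisors, d : ℕ) : ℤ) * 2 = 3 ^ (β + 1) - 1 := by
    rw [Nat.sum_divisors_prime_pow Nat.prime_three]
    push_cast
    have := geom_sum_mul (3 : ℤ) (β + 1)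
    linarith
  have h1' := congrArg (Nat.cast : ℕ → ℤ) h1
  push_cast at h1' h2
  rw [h1']
  linear_combination (∑ d ∈ n₁.divisors, (d : ℤ)) * h2

/-- If `3 ∣ m`, the quadruples with all entries divisible by `3` in `sixteen_mul_card_triQuads` are
counted by the number of representations of `4m / 9`, which vanishes unless `9 ∣ m`. -/
lemma card_triQuads (β n₁ : ℕ) (h3 : ¬ 3 ∣ n₁) (hodd : Odd (3 ^ β * n₁)) :
    ((triQuads ((4 * (3 ^ β * n₁) : ℕ) : ℤ)).card : ℤ) =
      4 * (3 ^ (β + 1) - 2) * ∑ d ∈ n₁.divisors, (d : ℤ) := by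
  have h16 := sixteen_mul_card_triQuads ((4 * (3 ^ β * n₁) : ℕ) : ℤ)
  rw [card_oddQuads_sigma _ hodd] at h16
  have hσ := sum_divisors_three_pow_mul β n₁ h3
  have empt : ¬ (9 ∣ 3 ^ β * n₁) → ((oddQuads ((4 * (3 ^ β * n₁) : ℕ) : ℤ)).filter fun p ↦
      (3 : ℤ) ∣ p.1 ∧ (3 : ℤ) ∣ p.2.1 ∧ (3 : ℤ) ∣ p.2.2.1 ∧ (3 : ℤ) ∣ p.2.2.2) = ∅ := by
    intro h9
    rw [Finset.filter_eq_empty_iff]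
    rintro ⟨x, y, z, w⟩ h ⟨⟨x, rfl⟩, ⟨y, rfl⟩, ⟨z, rfl⟩, ⟨w, rfl⟩⟩
    simp only [mem_oddQuads] at h
    push_cast at h
    have h4 : (9 : ℤ) ∣ 4 * ((3 ^ β * n₁ : ℕ) : ℤ) :=
      ⟨x ^ 2 + y ^ 2 + z ^ 2 + w ^ 2, by push_cast; linarith [h.2]⟩
    omega
  match β, h3, hodd, h16, hσ, empt with
  | 0, h3, hodd, h16, hσ, empt =>
    rw [empt (by simp; omega), if_neg (by simp; omega)] at h16
    simp only [pow_zero, one_mul, Finset.card_empty, zero_add, pow_one] at h16 hσ ⊢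
    push_cast at h16 ⊢
    linarith
  | 1, h3, hodd, h16, hσ, empt =>
    rw [empt (by simp; omega), if_pos (by simp; omega)] at h16
    simp only [Finset.card_empty] at h16 ⊢
    norm_num at h16 hσ ⊢
    linarith
  | γ + 2, h3, hodd, h16, hσ, empt =>
    have h9 : 3 ^ (γ + 2) * n₁ = 9 * (3 ^ γ * n₁) := by ring
    have hodd' : Odd (3 ^ γ * n₁) := by
      rw [h9, Nat.odd_mul] at hodd; exact hodd.2
    have hσ' := sum_divisors_three_pow_mul γ n₁ h3
    have e9 : ((4 * (3 ^ (γ + 2) * n₁) : ℕ) : ℤ) = 9 * ((4 * (3 ^ γ * n₁) : ℕ) : ℤ) := by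
      push_cast; ring
    have hd := card_oddQuads_dvd ((4 * (3 ^ γ * n₁) : ℕ) : ℤ)
    rw [← e9] at hd
    rw [hd, card_oddQuads_sigma _ hodd',
      if_pos (by rw [e9]; exact Dvd.intro (3 * _) (by ring))] at h16
    simp only [pow_succ] at *
    linarith

/-! ### Theta series in two variables and their convolution -/

/-- The value `q` of a pair of indices in `∑ (-1)^(i+j) q^(8 p(i) + 16 p(j) + 1)`, where `p` denotes
the generalised pentagonal numbers; three times it is `(6i - 1)² + 2(6j - 1)²`. -/
def pval (p : ℤ × ℤ) : ℤ := 8 * (pentagonal p.1 : ℤ) + 16 * pentagonal p.2 + 1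

lemma pval_eq (i j : ℤ) : pval (i, j) = (2 * i + 4 * j - 1) ^ 2 + 8 * (j - i) ^ 2 := by
  have h1 := two_mul_natCast_pentagonal i
  have h2 := two_mul_natCast_pentagonal j
  simp only [pval]
  linear_combination 4 * h1 + 8 * h2

lemma abs_le_pentagonal (k : ℤ) : -(pentagonal k : ℤ) ≤ k ∧ k ≤ pentagonal k := by
  have h1 := two_mul_natCast_pentagonal k
  have h4 : k ≤ k ^ 2 := Int.le_self_sq k
  have h5 : -k ≤ k ^ 2 := by simpa using Int.le_self_sq (-k)
  constructor <;> nlinarith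

/-- The pairs `(i, j)` with `(6i - 1)² + 2(6j - 1)² = 3N`. -/
noncomputable def pentPairs (N : ℤ) : Finset (ℤ × ℤ) :=
  (Finset.Icc (-N) N ×ˢ Finset.Icc (-N) N).filter fun p ↦ pval p = N

lemma mem_pentPairs {N : ℤ} (p : ℤ × ℤ) : p ∈ pentPairs N ↔ pval p = N := by
  obtain ⟨i, j⟩ := p
  simp only [pentPairs, Finset.mem_filter, Finset.mem_product, Finset.mem_Icc,
    and_iff_right_iff_imp]
  intro h
  simp only [pval] at h
  have h1 := abs_le_pentagonal i
  have h2 := abs_le_pentagonal j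
  omega

/-- The pairs `(w, y)` with `w` odd and `w² + 8y² = N`. -/
noncomputable def oddPairs (N : ℤ) : Finset (ℤ × ℤ) :=
  (Finset.Icc (-N) N ×ˢ Finset.Icc (-N) N).filter fun p ↦ Odd p.1 ∧ p.1 ^ 2 + 8 * p.2 ^ 2 = N

lemma mem_oddPairs {N : ℤ} (p : ℤ × ℤ) :
    p ∈ oddPairs N ↔ Odd p.1 ∧ p.1 ^ 2 + 8 * p.2 ^ 2 = N := by
  obtain ⟨w, y⟩ := p
  simp only [oddPairs, Finset.mem_filter, Finset.mem_product, Finset.mem_Icc,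
    and_iff_right_iff_imp]
  rintro ⟨-, h⟩
  have := sq_nonneg w
  have := sq_nonneg y
  exact ⟨abs_bound (by linarith), abs_bound (by linarith)⟩

lemma sg_eq_of_even_sub {a b : ℤ} (h : Even (a - b)) : sg a = sg b := by
  simp only [sg]
  rw [Int.even_sub] at h
  simp [h]

lemma sg_eq_neg_of_odd_sub {a b : ℤ} (h : Odd (a - b)) : sg a = -sg b := by
  rw [← Int.not_even_iff_odd, Int.even_sub] at h
  simp only [sg]
  split_ifs <;> simp_all

lemma sg_add (a b : ℤ) : sg (a + b) = sg a * sg b := by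
  simp only [sg, Int.even_add]
  split_ifs <;> simp_all

lemma sg_neg (a : ℤ) : sg (-a) = sg a := by simp [sg]

/-- The terms with `w ≡ y` modulo `3` cancel: there `w² + 8y² = 3(u² + 2v²)` with `w = u + 2v`,
`2y = v - u` and `u`, `v` odd, and `u ↦ -u` changes the parity of `y`. -/
lemma sum_oddPairs_cancel (N : ℤ) :
    ∑ p ∈ (oddPairs N).filter (fun p ↦ (p.1 - p.2) % 3 = 0), sg p.2 = 0 := by
  have h : ∑ p ∈ (oddPairs N).filter (fun p ↦ (p.1 - p.2) % 3 = 0), sg p.2 =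
      ∑ p ∈ (oddPairs N).filter (fun p ↦ (p.1 - p.2) % 3 = 0), - sg p.2 := by
    have hmem : ∀ p ∈ (oddPairs N).filter (fun p ↦ (p.1 - p.2) % 3 = 0),
        ((p.1 + 8 * p.2) / 3, (p.1 - p.2) / 3) ∈
          (oddPairs N).filter (fun p ↦ (p.1 - p.2) % 3 = 0) := by
      rintro ⟨w, y⟩ h
      simp only [Finset.mem_filter, mem_oddPairs] at h ⊢
      obtain ⟨⟨ho, h⟩, h3⟩ := h
      obtain ⟨t, ht⟩ : ∃ t, w = y + 3 * t := ⟨(w - y) / 3, by omega⟩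
      have e1 : (w + 8 * y) / 3 = t + 3 * y := by omega
      have e2 : (w - y) / 3 = t := by omega
      rw [e1, e2]
      subst ht
      refine ⟨⟨?_, by linarith⟩, by omega⟩
      rw [Int.odd_iff] at ho ⊢
      omega
    refine Finset.sum_nbij' (fun p ↦ ((p.1 + 8 * p.2) / 3, (p.1 - p.2) / 3))
      (fun p ↦ ((p.1 + 8 * p.2) / 3, (p.1 - p.2) / 3)) hmem hmem ?_ ?_ ?_
    · rintro ⟨w, y⟩ h
      simp only [Finset.mem_filter, mem_oddPairs] at h
      ext <;> dsimp only <;> omega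
    · rintro ⟨w, y⟩ h
      simp only [Finset.mem_filter, mem_oddPairs] at h
      ext <;> dsimp only <;> omega
    · rintro ⟨w, y⟩ h
      simp only [Finset.mem_filter, mem_oddPairs] at h
      refine sg_eq_neg_of_odd_sub ?_
      have ho := h.1.1
      rw [Int.odd_iff] at ho ⊢
      omega
  rw [Finset.sum_neg_distrib] at h
  linarith

lemma sum_oddPairs_two (N : ℤ) :
    ∑ p ∈ (oddPairs N).filter (fun p ↦ (p.1 - p.2) % 3 = 2), sg p.2 =
      ∑ p ∈ pentPairs N, sg p.1 * sg p.2 := by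
  refine Finset.sum_nbij' (fun p ↦ ((p.1 - 4 * p.2 + 1) / 6, (p.1 + 2 * p.2 + 1) / 6))
    (fun p ↦ (2 * p.1 + 4 * p.2 - 1, p.2 - p.1)) ?_ ?_ ?_ ?_ ?_
  · rintro ⟨w, y⟩ h
    simp only [Finset.mem_filter, mem_oddPairs, mem_pentPairs] at h ⊢
    obtain ⟨⟨ho, h⟩, h3⟩ := h
    rw [Int.odd_iff] at ho
    rw [pval_eq, ← h]
    have e1 : 2 * ((w - 4 * y + 1) / 6) + 4 * ((w + 2 * y + 1) / 6) - 1 = w := by omega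
    have e2 : (w + 2 * y + 1) / 6 - (w - 4 * y + 1) / 6 = y := by omega
    rw [e1, e2]
  · rintro ⟨i, j⟩ h
    simp only [Finset.mem_filter, mem_oddPairs, mem_pentPairs] at h ⊢
    rw [pval_eq] at h
    refine ⟨⟨?_, h⟩, by omega⟩
    rw [Int.odd_iff]
    omega
  · rintro ⟨w, y⟩ h
    simp only [Finset.mem_filter, mem_oddPairs] at h
    have ho := h.1.1
    rw [Int.odd_iff] at ho
    ext <;> dsimp only <;> omega
  · rintro ⟨i, j⟩ h
    ext <;> dsimp only <;> omega
  · rintro ⟨w, y⟩ h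
    simp only [Finset.mem_filter, mem_oddPairs] at h
    have ho := h.1.1
    rw [Int.odd_iff] at ho
    rw [← sg_add]
    refine sg_eq_of_even_sub ?_
    rw [Int.even_iff]
    dsimp only
    omega

/-- An identity between theta series: `∑ (-1)^y q^(w² + 8y²)` over odd `w` is twice
`q ∏ (1 - q^(8k)) (1 - q^(16k))`. -/
lemma sum_oddPairs (N : ℤ) :
    ∑ p ∈ oddPairs N, sg p.2 = 2 * ∑ p ∈ pentPairs N, sg p.1 * sg p.2 := by
  have h1 : ∑ p ∈ (oddPairs N).filter (fun p ↦ (p.1 - p.2) % 3 = 1), sg p.2 =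
      ∑ p ∈ (oddPairs N).filter (fun p ↦ (p.1 - p.2) % 3 = 2), sg p.2 := by
    refine Finset.sum_nbij' (fun p ↦ (-p.1, -p.2)) (fun p ↦ (-p.1, -p.2)) ?_ ?_
      (by simp) (by simp) (by simp [sg_neg]) <;>
    · rintro ⟨w, y⟩ h
      simp only [Finset.mem_filter, mem_oddPairs, odd_neg, neg_sq] at h ⊢
      exact ⟨h.1, by omega⟩
  have h2 := Finset.sum_filter_add_sum_filter_not (oddPairs N) (fun p ↦ (p.1 - p.2) % 3 = 0)
    fun p ↦ sg p.2
  have h3 := Finset.sum_filter_add_sum_filter_not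
    ((oddPairs N).filter fun p ↦ ¬ (p.1 - p.2) % 3 = 0) (fun p ↦ (p.1 - p.2) % 3 = 1)
    fun p ↦ sg p.2
  rw [Finset.filter_filter, Finset.filter_filter] at h3
  rw [Finset.filter_congr (q := fun p : ℤ × ℤ ↦ (p.1 - p.2) % 3 = 1) (by intro p _; omega),
    Finset.filter_congr (q := fun p : ℤ × ℤ ↦ (p.1 - p.2) % 3 = 2) (p := fun p : ℤ × ℤ ↦
      ¬(p.1 - p.2) % 3 = 0 ∧ ¬(p.1 - p.2) % 3 = 1) (by intro p _; omega)] at h3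
  have h0 := sum_oddPairs_cancel N
  have h4 := sum_oddPairs_two N
  linarith

/-- The convolution defining the coefficients of a product `g(q) g(q³)`. -/
lemma sum_convolution {R : ℤ × ℤ → Prop} {v f : ℤ × ℤ → ℤ} {P : ℤ → Finset (ℤ × ℤ)}
    (hP : ∀ N p, p ∈ P N ↔ R p ∧ v p = N) (hv : ∀ p, 0 ≤ v p) (K : ℤ)
    (F : Finset ((ℤ × ℤ) × (ℤ × ℤ)))
    (hF : ∀ p, p ∈ F ↔ R p.1 ∧ R p.2 ∧ v p.1 + 3 * v p.2 = K) :
    ∑ p ∈ F, f p.1 * f p.2 =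
      ∑ N ∈ Finset.Icc 0 K, (∑ p ∈ P (K - 3 * N), f p) * ∑ p ∈ P N, f p := by
  simp_rw [Finset.sum_mul_sum, ← Finset.sum_product']
  rw [Finset.sum_sigma']
  refine Finset.sum_nbij' (fun p ↦ ⟨v p.2, p⟩) (fun s ↦ s.2) ?_ ?_ (by simp) ?_ (by simp)
  · intro p h
    rw [hF] at h
    have h1 := hv p.1
    have h2 := hv p.2
    simp only [Finset.mem_sigma, Finset.mem_Icc, Finset.mem_product, hP]
    exact ⟨⟨h2, by linarith⟩, ⟨h.1, by linarith⟩, h.2.1, trivial⟩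
  · rintro ⟨N, p⟩ h
    simp only [Finset.mem_sigma, Finset.mem_Icc, Finset.mem_product, hP] at h
    rw [hF]
    exact ⟨h.2.1.1, h.2.2.1, by rw [h.2.1.2, h.2.2.2]; ring⟩
  · rintro ⟨N, p⟩ h
    simp only [Finset.mem_sigma, Finset.mem_Icc, Finset.mem_product, hP] at h
    simp [h.2.2.2]

/-- The quadruples `((w, y), (s, z))` with `w`, `s` odd and `w² + 8y² + 3(s² + 8z²) = K`. -/
noncomputable def mixQuads (K : ℤ) : Finset ((ℤ × ℤ) × (ℤ × ℤ)) :=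
  ((Finset.Icc (-K) K ×ˢ Finset.Icc (-K) K) ×ˢ (Finset.Icc (-K) K ×ˢ Finset.Icc (-K) K)).filter
    fun p ↦ Odd p.1.1 ∧ Odd p.2.1 ∧
      p.1.1 ^ 2 + 8 * p.1.2 ^ 2 + 3 * (p.2.1 ^ 2 + 8 * p.2.2 ^ 2) = K

lemma mem_mixQuads {K : ℤ} (p : (ℤ × ℤ) × (ℤ × ℤ)) :
    p ∈ mixQuads K ↔ Odd p.1.1 ∧ Odd p.2.1 ∧
      p.1.1 ^ 2 + 8 * p.1.2 ^ 2 + 3 * (p.2.1 ^ 2 + 8 * p.2.2 ^ 2) = K := by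
  obtain ⟨⟨w, y⟩, s, z⟩ := p
  simp only [mixQuads, Finset.mem_filter, Finset.mem_product, Finset.mem_Icc,
    and_iff_right_iff_imp]
  rintro ⟨-, -, h⟩
  have := sq_nonneg w
  have := sq_nonneg y
  have := sq_nonneg s
  have := sq_nonneg z
  exact ⟨⟨abs_bound (by linarith), abs_bound (by linarith)⟩,
    abs_bound (by linarith), abs_bound (by linarith)⟩

/-- The index quadruples of the pentagonal number theorem contributing to `q^m`. -/
noncomputable def pentQuads (m : ℕ) : Finset ((ℤ × ℤ) × (ℤ × ℤ)) :=
  ((Finset.Icc (-m : ℤ) m ×ˢ Finset.Icc (-m : ℤ) m) ×ˢ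
    (Finset.Icc (-m : ℤ) m ×ˢ Finset.Icc (-m : ℤ) m)).filter fun p ↦ pexp p = m

lemma mem_pentQuads {m : ℕ} (p : (ℤ × ℤ) × (ℤ × ℤ)) : p ∈ pentQuads m ↔ pexp p = m := by
  obtain ⟨⟨i, j⟩, k, l⟩ := p
  simp only [pentQuads, Finset.mem_filter, Finset.mem_product, Finset.mem_Icc,
    and_iff_right_iff_imp]
  intro h
  simp only [pexp] at h
  have h1 := abs_le_pentagonal i
  have h2 := abs_le_pentagonal j
  have h3 := abs_le_pentagonal k
  have h4 := abs_le_pentagonal l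
  omega

lemma sum_mixQuads (m : ℕ) :
    ∑ p ∈ mixQuads ((4 * m : ℕ) : ℤ), sg p.1.2 * sg p.2.2 = 4 * ∑ p ∈ pentQuads m, psg p := by
  have h1 := sum_convolution (R := fun p ↦ Odd p.1) (v := fun p ↦ p.1 ^ 2 + 8 * p.2 ^ 2)
    (f := fun p ↦ sg p.2) (P := oddPairs) (fun N p ↦ mem_oddPairs p) (fun p ↦ by positivity)
    ((4 * m : ℕ) : ℤ) _ mem_mixQuads
  have h2 := sum_convolution (R := fun _ ↦ True) (v := pval)
    (f := fun p ↦ sg p.1 * sg p.2) (P := pentPairs) (fun N p ↦ by simp [mem_pentPairs])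
    (fun p ↦ by simp only [pval]; positivity)
    ((4 * m : ℕ) : ℤ) (pentQuads m) (fun p ↦ by
      rw [mem_pentQuads]
      simp only [pexp, pval, true_and]
      omega)
  rw [h1]
  simp only [psg]
  rw [h2, Finset.mul_sum]
  refine Finset.sum_congr rfl fun N _ ↦ ?_
  rw [sum_oddPairs, sum_oddPairs]
  ring

/-! ### Changes of variables -/

/-- The quadruples `(w, s, Y, W)` with `w`, `s` odd, `Y ≡ W` modulo `2` and
`w² + 3s² + 2Y² + 6W² = K`. -/
noncomputable def parQuads (K : ℤ) : Finset (ℤ × ℤ × ℤ × ℤ) :=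
  (Finset.Icc (-K) K ×ˢ Finset.Icc (-K) K ×ˢ Finset.Icc (-K) K ×ˢ Finset.Icc (-K) K).filter
    fun p ↦ Odd p.1 ∧ Odd p.2.1 ∧ Even (p.2.2.1 - p.2.2.2) ∧
      p.1 ^ 2 + 3 * p.2.1 ^ 2 + 2 * p.2.2.1 ^ 2 + 6 * p.2.2.2 ^ 2 = K

lemma mem_parQuads {K w s y z : ℤ} : (w, s, y, z) ∈ parQuads K ↔
    Odd w ∧ Odd s ∧ Even (y - z) ∧ w ^ 2 + 3 * s ^ 2 + 2 * y ^ 2 + 6 * z ^ 2 = K := by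
  simp only [parQuads, Finset.mem_filter, Finset.mem_product, Finset.mem_Icc,
    and_iff_right_iff_imp]
  rintro ⟨-, -, -, h⟩
  have := sq_nonneg w
  have := sq_nonneg s
  have := sq_nonneg y
  have := sq_nonneg z
  exact ⟨abs_bound (by linarith), abs_bound (by linarith), abs_bound (by linarith),
    abs_bound (by linarith)⟩

/-- In the orthogonal coordinates `(x, y, z) = s(1, 1, 1) + Y(1, -1, 0) + W(1, 1, -2)` one has
`x² + y² + z² = 3s² + 2Y² + 6W²`; these coordinates are integers when `x`, `y`, `z` are odd and
`3 ∣ x + y + z`. -/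
lemma card_triQuads_eq (K : ℤ) : (triQuads K).card = (parQuads K).card := by
  refine Finset.card_nbij'
    (fun p ↦ (p.2.2.2, (p.1 + p.2.1 + p.2.2.1) / 3, (p.1 - p.2.1) / 2,
      ((p.1 + p.2.1 + p.2.2.1) / 3 - p.2.2.1) / 2))
    (fun p ↦ (p.2.1 + p.2.2.2 + p.2.2.1, p.2.1 + p.2.2.2 - p.2.2.1, p.2.1 - 2 * p.2.2.2, p.1))
    ?_ ?_ ?_ ?_
  · rintro ⟨x, y, z, w⟩ h
    simp only [Finset.mem_coe, triQuads, Finset.mem_filter, mem_oddQuads, mem_parQuads] at h ⊢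
    obtain ⟨⟨⟨hx, hy, hz, hw⟩, h⟩, s, hs⟩ := h
    have hx' := Int.odd_iff.1 hx
    have hy' := Int.odd_iff.1 hy
    have hz' := Int.odd_iff.1 hz
    obtain ⟨Y, rfl⟩ : ∃ Y, x = y + 2 * Y := ⟨(x - y) / 2, by omega⟩
    obtain ⟨W, rfl⟩ : ∃ W, z = s - 2 * W := ⟨(s - z) / 2, by omega⟩
    obtain rfl : y = s + W - Y := by omega
    have e1 : (s + W - Y + 2 * Y + (s + W - Y) + (s - 2 * W)) / 3 = s := by omega
    have e2 : (s + W - Y + 2 * Y - (s + W - Y)) / 2 = Y := by omega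
    have e3 : (s - (s - 2 * W)) / 2 = W := by omega
    rw [e1, e2, e3]
    refine ⟨hw, ?_, ?_, by linear_combination h⟩
    · rw [Int.odd_iff]; omega
    · rw [Int.even_iff]; omega
  · rintro ⟨w, s, Y, W⟩ h
    simp only [Finset.mem_coe, triQuads, Finset.mem_filter, mem_oddQuads, mem_parQuads] at h ⊢
    obtain ⟨hw, hs, hYW, h⟩ := h
    have hs' := Int.odd_iff.1 hs
    have hYW' := Int.even_iff.1 hYW
    refine ⟨⟨⟨?_, ?_, ?_, hw⟩, by linear_combination h⟩, ⟨s, by ring⟩⟩ <;>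
    · rw [Int.odd_iff]; omega
  · rintro ⟨x, y, z, w⟩ h
    simp only [Finset.mem_coe, triQuads, Finset.mem_filter, mem_oddQuads, Int.odd_iff] at h
    simp only [Prod.mk.injEq, and_true]
    omega
  · rintro ⟨w, s, Y, W⟩ h
    simp only [Prod.mk.injEq, true_and]
    omega

/-- The quadruples of odd integers with `w² + 3s² + 2Y² + 6W² = K`. -/
noncomputable def oddMix (K : ℤ) : Finset (ℤ × ℤ × ℤ × ℤ) :=
  (parQuads K).filter fun p ↦ Odd p.2.2.1

lemma mem_oddMix {K w s y z : ℤ} : (w, s, y, z) ∈ oddMix K ↔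
    Odd w ∧ Odd s ∧ Odd y ∧ Odd z ∧ w ^ 2 + 3 * s ^ 2 + 2 * y ^ 2 + 6 * z ^ 2 = K := by
  simp only [oddMix, Finset.mem_filter, mem_parQuads, Int.even_sub, ← Int.not_even_iff_odd]
  tauto

/-- The coordinates `Y`, `W` are both even, which gives `mixQuads`, or both odd. -/
lemma card_parQuads (K : ℤ) :
    (parQuads K).card = (mixQuads K).card + (oddMix K).card := by
  rw [← Finset.card_filter_add_card_filter_not (s := parQuads K) (fun p ↦ Odd p.2.2.1),
    add_comm, ← oddMix]
  congr 1
  refine Finset.card_nbij' (fun p ↦ ((p.1, p.2.2.1 / 2), (p.2.1, p.2.2.2 / 2)))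
    (fun p ↦ (p.1.1, p.2.1, 2 * p.1.2, 2 * p.2.2)) ?_ ?_ ?_ ?_
  · rintro ⟨w, s, Y, W⟩ h
    simp only [Finset.mem_coe, Finset.mem_filter, mem_parQuads, mem_mixQuads] at h ⊢
    obtain ⟨⟨hw, hs, hYW, h⟩, hY⟩ := h
    rw [Int.even_iff] at hYW
    rw [Int.odd_iff] at hY
    obtain ⟨y, rfl⟩ : ∃ y, Y = 2 * y := ⟨Y / 2, by omega⟩
    obtain ⟨z, rfl⟩ : ∃ z, W = 2 * z := ⟨W / 2, by omega⟩
    refine ⟨hw, hs, ?_⟩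
    simp only [ne_eq, OfNat.ofNat_ne_zero, not_false_eq_true, Int.mul_ediv_cancel_left]
    linear_combination h
  · rintro ⟨⟨w, y⟩, s, z⟩ h
    simp only [Finset.mem_coe, Finset.mem_filter, mem_parQuads, mem_mixQuads] at h ⊢
    refine ⟨⟨h.1, h.2.1, ?_, by linear_combination h.2.2⟩, ?_⟩
    · rw [Int.even_iff]; omega
    · rw [Int.odd_iff]; omega
  · rintro ⟨w, s, Y, W⟩ h
    simp only [Finset.mem_coe, Finset.mem_filter, mem_parQuads, Int.even_iff, Int.odd_iff] at h
    simp only [Prod.mk.injEq, true_and]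
    omega
  · rintro ⟨⟨w, y⟩, s, z⟩ h
    simp

/-- For odd `Y`, `W` exactly one of `Y ≡ W` and `Y ≡ -W` holds modulo `4`; in the first case
`Y² + 3W² = 4(y² + 3z²)` with `Y = y + 3z` and `W = y - z`. -/
lemma card_oddMix (K : ℤ) :
    (oddMix K).card = 2 * ((mixQuads K).filter fun p ↦ ¬ Even (p.1.2 + p.2.2)).card := by
  have h1 : ((oddMix K).filter fun p ↦ (p.2.2.1 - p.2.2.2) % 4 = 0).card =
      ((mixQuads K).filter fun p ↦ ¬ Even (p.1.2 + p.2.2)).card := by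
    refine Finset.card_nbij'
      (fun p ↦ ((p.1, (p.2.2.1 + 3 * p.2.2.2) / 4), (p.2.1, (p.2.2.1 - p.2.2.2) / 4)))
      (fun p ↦ (p.1.1, p.2.1, p.1.2 + 3 * p.2.2, p.1.2 - p.2.2)) ?_ ?_ ?_ ?_
    · rintro ⟨w, s, Y, W⟩ h
      simp only [Finset.mem_coe, Finset.mem_filter, mem_oddMix, mem_mixQuads,
        Int.not_even_iff_odd] at h ⊢
      obtain ⟨⟨hw, hs, hY, hW, h⟩, h4⟩ := h
      rw [Int.odd_iff] at hW
      obtain ⟨z, rfl⟩ : ∃ z, Y = W + 4 * z := ⟨(Y - W) / 4, by omega⟩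
      have e1 : (W + 4 * z + 3 * W) / 4 = W + z := by omega
      have e2 : (W + 4 * z - W) / 4 = z := by omega
      rw [e1, e2]
      refine ⟨⟨hw, hs, by linear_combination h⟩, ?_⟩
      rw [Int.odd_iff]; omega
    · rintro ⟨⟨w, y⟩, s, z⟩ h
      simp only [Finset.mem_coe, Finset.mem_filter, mem_oddMix, mem_mixQuads,
        Int.not_even_iff_odd] at h ⊢
      obtain ⟨⟨hw, hs, h⟩, hyz⟩ := h
      rw [Int.odd_iff] at hyz
      refine ⟨⟨hw, hs, ?_, ?_, by linear_combination h⟩, by omega⟩ <;>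
      · rw [Int.odd_iff]; omega
    · rintro ⟨w, s, Y, W⟩ h
      simp only [Finset.mem_coe, Finset.mem_filter] at h
      simp only [Prod.mk.injEq, true_and]
      omega
    · rintro ⟨⟨w, y⟩, s, z⟩ h
      simp only [Prod.mk.injEq, true_and]
      omega
  have h2 : ((oddMix K).filter fun p ↦ ¬ (p.2.2.1 - p.2.2.2) % 4 = 0).card =
      ((oddMix K).filter fun p ↦ (p.2.2.1 - p.2.2.2) % 4 = 0).card := by
    refine Finset.card_nbij' (fun p ↦ (p.1, p.2.1, p.2.2.1, -p.2.2.2))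
      (fun p ↦ (p.1, p.2.1, p.2.2.1, -p.2.2.2)) ?_ ?_ (by intro p _; simp)
      (by intro p _; simp) <;>
    · rintro ⟨w, s, Y, W⟩ h
      simp only [Finset.mem_coe, Finset.mem_filter, mem_oddMix, odd_neg, neg_sq] at h ⊢
      refine ⟨h.1, ?_⟩
      have hY := Int.odd_iff.1 h.1.2.2.1
      have hW := Int.odd_iff.1 h.1.2.2.2.1
      omega
  rw [← Finset.card_filter_add_card_filter_not (s := oddMix K)
    (fun p ↦ (p.2.2.1 - p.2.2.2) % 4 = 0), h2, h1]
  ring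

lemma sum_sg_mixQuads (K : ℤ) :
    ∑ p ∈ mixQuads K, sg p.1.2 * sg p.2.2 = (mixQuads K).card -
      2 * ((mixQuads K).filter fun p ↦ ¬ Even (p.1.2 + p.2.2)).card := by
  have h := Finset.card_filter_add_card_filter_not (s := mixQuads K)
    (fun p ↦ Even (p.1.2 + p.2.2))
  simp_rw [← sg_add, sg]
  rw [Finset.sum_ite]
  simp only [Finset.sum_const, nsmul_eq_mul]
  have h' := congrArg (Nat.cast : ℕ → ℤ) h
  push_cast at h'
  linarith

lemma two_mul_triangle (x : ℤ) : 2 * (x * (x - 1) / 2) = x * (x - 1) :=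
  Int.mul_ediv_cancel' (by rw [← even_iff_two_dvd]; simpa [mul_comm] using Int.even_mul_pred_self x)

/-- Completing the squares by `X = 2x - 1`. -/
lemma tquad_eq (n : ℕ) :
    tquad 1 2 3 6 n = (oddMix ((4 * (2 * n + 3) : ℕ) : ℤ)).card := by
  have hiff : ∀ x y z w : ℤ, ((n : ℤ) = (1 : ℕ) * (x * (x - 1) / 2) + (2 : ℕ) * (y * (y - 1) / 2) +
      (3 : ℕ) * (z * (z - 1) / 2) + (6 : ℕ) * (w * (w - 1) / 2)) ↔
      (2 * x - 1) ^ 2 + 3 * (2 * z - 1) ^ 2 + 2 * (2 * y - 1) ^ 2 + 6 * (2 * w - 1) ^ 2 =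
        ((4 * (2 * n + 3) : ℕ) : ℤ) := by
    intro x y z w
    have h1 := two_mul_triangle x
    have h2 := two_mul_triangle y
    have h3 := two_mul_triangle z
    have h4 := two_mul_triangle w
    push_cast
    constructor <;> intro h <;> linarith
  have hodd : ∀ x : ℤ, Odd (2 * x - 1) := fun x ↦ by rw [Int.odd_iff]; omega
  have hhalf : ∀ x : ℤ, Odd x → 2 * ((x + 1) / 2) - 1 = x := fun x hx ↦ by
    rw [Int.odd_iff] at hx; omega
  rw [tquad, ← Nat.card_eq_finsetCard]
  refine Nat.card_congr
    { toFun := fun p ↦ ⟨(2 * p.1.1 - 1, 2 * p.1.2.2.1 - 1, 2 * p.1.2.1 - 1, 2 * p.1.2.2.2 - 1),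
        mem_oddMix.2 ⟨hodd _, hodd _, hodd _, hodd _, (hiff _ _ _ _).1 p.2⟩⟩
      invFun := fun p ↦ ⟨((p.1.1 + 1) / 2, (p.1.2.2.1 + 1) / 2, (p.1.2.1 + 1) / 2,
        (p.1.2.2.2 + 1) / 2), ?_⟩
      left_inv := ?_
      right_inv := ?_ }
  · obtain ⟨⟨x, z, y, w⟩, h⟩ := p
    obtain ⟨hx, hz, hy, hw, h⟩ := mem_oddMix.1 h
    rw [hiff]
    dsimp only
    rw [hhalf x hx, hhalf y hy, hhalf z hz, hhalf w hw, h]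
  · rintro ⟨⟨x, y, z, w⟩, h⟩
    simp
  · rintro ⟨⟨x, z, y, w⟩, h⟩
    obtain ⟨hx, hz, hy, hw, -⟩ := mem_oddMix.1 h
    simp [hhalf x hx, hhalf y hy, hhalf z hz, hhalf w hw]

theorem stmt_6 (n : ℕ) (hn : 0 < n) (β n₁ : ℕ) (hn₁ : 0 < n₁) (h3 : ¬ 3 ∣ n₁)
    (hfac : 2 * n + 3 = 3 ^ β * n₁) (a : ℕ → ℤ)
    (ha : ∀ q : ℂ, ‖q‖ < 1 →
      ∑' k : ℕ, (a k : ℂ) * q ^ k =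
        q * ∏' k : ℕ, ((1 - q ^ (2 * (k + 1))) * (1 - q ^ (4 * (k + 1))) *
          (1 - q ^ (6 * (k + 1))) * (1 - q ^ (12 * (k + 1))))) :
    (tquad 1 2 3 6 n : ℤ) =
      2 * (3 ^ (β + 1) - 2) * ∑ d ∈ n₁.divisors, (d : ℤ) - 2 * a (2 * n + 3) := by
  have hodd : Odd (3 ^ β * n₁) := by rw [← hfac, Nat.odd_iff]; omega
  have hM := card_triQuads β n₁ h3 hodd
  rw [← hfac, card_triQuads_eq, card_parQuads] at hM
  have hS := sum_mixQuads (2 * n + 3)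
  rw [← coeff_eq_sum a ha _ _ mem_pentQuads, sum_sg_mixQuads] at hS
  have hT := card_oddMix ((4 * (2 * n + 3) : ℕ) : ℤ)
  rw [tquad_eq]
  push_cast at hM hS hT ⊢
  zify at hT
  linarith
end
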